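/- arXiv:1303.1879 — 6 statements merged into one kernel-verified Lean document; each statement's English description precedes it below -/
import Mathlib

section
/- Fix a positive integer q. Let p be a positive integer and g_0, …, g_{p−1} polynomials with rational coefficients such that u_P(q;n) = g_{n mod p}(n) for every integer n ≥ 0. The symmetric group S_q acts on (ℝ²)^q by permuting the q coordinate pairs; this action preserves (B°)^q and the move arrangement, hence permutes the connected components of (B°)^q \ ⋃A_P^q. Then the number of S_q-orbits of these components (the number of unlabelled nonattacking configuration types of q pieces) equals g_{p−1}(−1). -/
open MeasureTheory Pointwise


namespace Ehr

/-- periodic functions on an additive group -/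
def Per (G : Type*) [AddCommGroup G] (f : G → ℚ) : Prop :=
  ∃ N : ℕ, 0 < N ∧ ∀ x v : G, f (x + N • v) = f x

/-- quasi-polynomial functions -/
def QP (G : Type*) [AddCommGroup G] : Subalgebra ℚ (G → ℚ) :=
  Algebra.adjoin ℚ ({f | ∃ φ : G →+ ℤ, f = fun x => (φ x : ℚ)} ∪ {f | Per G f})

lemma qp_hom {G : Type*} [AddCommGroup G] (φ : G →+ ℤ) : (fun x => (φ x : ℚ)) ∈ QP G :=
  Algebra.subset_adjoin (Or.inl ⟨φ, rfl⟩)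

lemma qp_per {G : Type*} [AddCommGroup G] {f : G → ℚ} (h : Per G f) : f ∈ QP G :=
  Algebra.subset_adjoin (Or.inr h)

lemma qp_const {G : Type*} [AddCommGroup G] (c : ℚ) : (fun _ => c) ∈ QP G :=
  (QP G).algebraMap_mem c

lemma qp_comp {G G' : Type*} [AddCommGroup G] [AddCommGroup G'] (L : G → G')
    (h1 : ∀ φ : G' →+ ℤ, (fun x => (φ (L x) : ℚ)) ∈ QP G)
    (h2 : ∀ N' : ℕ, 0 < N' → ∃ N : ℕ, 0 < N ∧ ∀ x v, ∃ v', L (x + N • v) = L x + N' • v')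
    {f : G' → ℚ} (hf : f ∈ QP G') : (fun x => f (L x)) ∈ QP G := by
  induction hf using Algebra.adjoin_induction with
  | mem f hf =>
    rcases hf with ⟨φ, rfl⟩ | ⟨N', hN', hp⟩
    · exact h1 φ
    · obtain ⟨N, hN, h⟩ := h2 N' hN'
      refine qp_per ⟨N, hN, fun x v => ?_⟩
      obtain ⟨v', e⟩ := h x v
      simp only [e, hp]
  | algebraMap r => exact (QP G).algebraMap_mem r
  | add f g _ _ hf hg => exact (QP G).add_mem hf hg
  | mul f g _ _ hf hg => exact (QP G).mul_mem hf hg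

lemma qp_comp_hom {G G' : Type*} [AddCommGroup G] [AddCommGroup G'] (L : G →+ G')
    {f : G' → ℚ} (hf : f ∈ QP G') : (fun x => f (L x)) ∈ QP G := by
  refine qp_comp L (fun φ => qp_hom (φ.comp L)) (fun N hN => ⟨N, hN, fun x v => ⟨L v, ?_⟩⟩) hf
  simp

lemma qp_ediv {G : Type*} [AddCommGroup G] (φ : G →+ ℤ) (e : ℤ) (c : ℕ) (hc : 0 < c) :
    (fun x => (((φ x + e) / (c : ℤ) : ℤ) : ℚ)) ∈ QP G := by
  have hm : (fun x => (((φ x + e) % (c : ℤ) : ℤ) : ℚ)) ∈ QP G := by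
    refine qp_per ⟨c, hc, fun x v => ?_⟩
    have : φ (x + c • v) + e = φ x + e + (c : ℤ) * φ v := by simp; ring
    show (((φ (x + c • v) + e) % (c : ℤ) : ℤ) : ℚ) = _
    rw [this, Int.add_mul_emod_self_left]
  have h := (QP G).mul_mem ((QP G).sub_mem ((QP G).add_mem (qp_hom φ) (qp_const (e : ℚ))) hm)
    (qp_const ((c : ℚ)⁻¹))
  convert h using 1
  funext x
  have := Int.emod_add_mul_ediv (φ x + e) (c : ℤ)
  have h2 : (((φ x + e) % (c : ℤ) : ℤ) : ℚ) + c * (((φ x + e) / (c : ℤ) : ℤ) : ℚ) = φ x + e := by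
    exact_mod_cast this
  have hc' : (c : ℚ) ≠ 0 := by positivity
  simp only [Pi.mul_apply, Pi.sub_apply, Pi.add_apply]
  field_simp
  linarith

/-- substitution of a floor -/
lemma qp_subst {H : Type*} [AddCommGroup H] {A : H × ℤ → ℚ} (hA : A ∈ QP (H × ℤ))
    (φ : H →+ ℤ) (e : ℤ) (c : ℕ) (hc : 0 < c) :
    (fun x => A (x, (φ x + e) / (c : ℤ))) ∈ QP H := by
  refine qp_comp (fun x => (x, (φ x + e) / (c : ℤ))) (fun ψ => ?_) (fun N' hN' => ?_) hA
  · have h := (QP H).add_mem (qp_hom (ψ.comp (AddMonoidHom.inl H ℤ)))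
      ((QP H).mul_mem (qp_ediv φ e c hc) (qp_const ((ψ (0, 1) : ℤ) : ℚ)))
    convert h using 1
    funext x
    have : ψ (x, (φ x + e) / (c : ℤ)) = ψ (x, 0) + (φ x + e) / (c : ℤ) * ψ (0, 1) := by
      have : (x, (φ x + e) / (c : ℤ)) = ((x, 0) : H × ℤ) + ((φ x + e) / (c : ℤ)) • ((0, 1) : H × ℤ) := by
        ext <;> simp
      rw [this, map_add, map_zsmul, smul_eq_mul]
    rw [this]; simp
  · refine ⟨c * N', by positivity, fun x v => ⟨(c • v, φ v), ?_⟩⟩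
    ext
    · simp [mul_smul, mul_comm c N']
    · have : φ (x + (c * N') • v) + e = φ x + e + (c : ℤ) * (N' * φ v) := by simp; ring
      simp only [this, Prod.snd_add]
      rw [Int.add_mul_ediv_left _ _ (by positivity)]
      simp

lemma qp_mono_sum (k : ℕ) (ψ : ℤ → ℚ) (hψ : Per ℤ ψ) :
    ∃ A ∈ QP ℤ, ∀ s : ℤ, A s - A (s - 1) = (s : ℚ) ^ k * ψ s := by
  obtain ⟨N, hN, hp⟩ := hψ
  have hNq : (N : ℚ) ≠ 0 := by positivity
  set b : ℤ → ℚ := fun s => (N : ℚ) ^ k / (k + 1) *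
    ((Polynomial.bernoulli (k + 1)).eval (1 + (s : ℚ) / N)) with hb
  have hbQ : b ∈ QP ℤ := by
    have h1 : (fun s : ℤ => 1 + (s : ℚ) / N) ∈ QP ℤ := by
      have := (QP ℤ).add_mem (qp_const (1 : ℚ))
        ((QP ℤ).mul_mem (qp_hom (AddMonoidHom.id ℤ)) (qp_const ((N : ℚ)⁻¹)))
      exact this
    have h2 : Polynomial.aeval (fun s : ℤ => 1 + (s : ℚ) / N) (Polynomial.bernoulli (k + 1)) ∈ QP ℤ :=
      by
      rw [Polynomial.aeval_eq_sum_range]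
      exact (QP ℤ).sum_mem fun i _ => (QP ℤ).smul_mem ((QP ℤ).pow_mem h1 i) _
    have h3 := (QP ℤ).mul_mem (qp_const ((N : ℚ) ^ k / (k + 1))) h2
    convert h3 using 1
    funext s
    simp only [hb, Pi.mul_apply]
    congr 1
    have := Polynomial.aeval_algHom_apply (Pi.evalAlgHom ℚ (fun _ : ℤ => ℚ) s)
      (fun s : ℤ => 1 + (s : ℚ) / N) (Polynomial.bernoulli (k + 1))
    simp only [Pi.evalAlgHom_apply] at this
    rw [← this]
    simp [Polynomial.aeval_def, Polynomial.eval₂_eq_eval_map]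
  have hbd : ∀ s : ℤ, b s - b (s - N) = (s : ℚ) ^ k := by
    intro s
    have h := Polynomial.bernoulli_eval_one_add (k + 1) ((s : ℚ) / N)
    have e : (1 : ℚ) + ((s - N : ℤ) : ℚ) / N = (s : ℚ) / N := by push_cast; field_simp; ring
    simp only [hb, e, h]
    push_cast
    have : (k : ℚ) + 1 ≠ 0 := by positivity
    rw [div_pow]
    field_simp
    ring
  set w : ℤ → ℚ := fun s => b s * ψ s with hw
  have hwQ : w ∈ QP ℤ := (QP ℤ).mul_mem hbQ (qp_per ⟨N, hN, hp⟩)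
  have hwd : ∀ s : ℤ, w s - w (s - N) = (s : ℚ) ^ k * ψ s := by
    intro s
    have := hp (s - N) 1
    simp at this
    simp only [hw]
    rw [← this, ← hbd, this]; ring
  refine ⟨∑ i ∈ Finset.range N, fun s => w (s - i), ?_, ?_⟩
  · refine (QP ℤ).sum_mem fun i _ => ?_
    refine qp_comp (fun s : ℤ => s - i) (fun φ => ?_) (fun N' hN' => ⟨N', hN', fun x v => ⟨v, ?_⟩⟩) hwQ
    · have := (QP ℤ).sub_mem (qp_hom φ) (qp_const ((φ i : ℤ) : ℚ))
      convert this using 1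
      funext s; simp
    · ring
  · intro s
    simp only [Finset.sum_apply]
    rw [← hwd, ← Finset.sum_sub_distrib]
    have h := Finset.sum_range_sub' (fun i : ℕ => w (s - i)) N
    simp only [Nat.cast_zero, sub_zero] at h
    rw [← h]
    refine Finset.sum_congr rfl fun i _ => ?_
    congr 2
    push_cast; ring

lemma qp_span {H : Type*} [AddCommGroup H] {w : H × ℤ → ℚ} (hw : w ∈ QP (H × ℤ)) :
    w ∈ Submodule.span ℚ {F : H × ℤ → ℚ | ∃ f ∈ QP H, ∃ k : ℕ, ∃ ψ : ℤ → ℚ, Per ℤ ψ ∧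
      F = fun x => f x.1 * ((x.2 : ℚ) ^ k * ψ x.2)} := by
  set S := {F : H × ℤ → ℚ | ∃ f ∈ QP H, ∃ k : ℕ, ∃ ψ : ℤ → ℚ, Per ℤ ψ ∧
      F = fun x => f x.1 * ((x.2 : ℚ) ^ k * ψ x.2)} with hS
  have hper1 : Per ℤ (fun _ => (1 : ℚ)) := ⟨1, one_pos, fun _ _ => rfl⟩
  have hbase : ∀ f ∈ QP H, (fun x : H × ℤ => f x.1) ∈ S := fun f hf =>
    ⟨f, hf, 0, _, hper1, by simp⟩
  induction hw using Algebra.adjoin_induction with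
  | mem f hf =>
    rcases hf with ⟨φ, rfl⟩ | ⟨N, hN, hp⟩
    · have e : (fun x : H × ℤ => (φ x : ℚ)) = (fun x : H × ℤ => (φ (x.1, 0) : ℚ)) +
          ((φ (0, 1) : ℤ) : ℚ) • (fun x : H × ℤ => (1 : ℚ) * ((x.2 : ℚ) ^ 1 * 1)) := by
        funext x
        have : φ x = φ (x.1, 0) + x.2 * φ (0, 1) := by
          have : x = ((x.1, 0) : H × ℤ) + x.2 • ((0, 1) : H × ℤ) := by ext <;> simp
          conv_lhs => rw [this]
          rw [map_add, map_zsmul, smul_eq_mul]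
        rw [this]; simp; ring
      rw [e]
      refine Submodule.add_mem _ (Submodule.subset_span (hbase _ (qp_hom (φ.comp (AddMonoidHom.inl H ℤ)))))
        (Submodule.smul_mem _ _ (Submodule.subset_span ⟨_, qp_const 1, 1, _, hper1, rfl⟩))
    · have e : f = ∑ r ∈ Finset.range N, fun x : H × ℤ =>
          f (x.1, (r : ℤ)) * ((x.2 : ℚ) ^ 0 * (if x.2 % (N : ℤ) = r then 1 else 0)) := by
        funext x
        simp only [Finset.sum_apply, pow_zero, one_mul, mul_ite, mul_one, mul_zero]
        have h0 : 0 ≤ x.2 % (N : ℤ) := Int.emod_nonneg _ (by positivity)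
        have h1 : x.2 % (N : ℤ) < N := Int.emod_lt_of_pos _ (by positivity)
        obtain ⟨r, hr⟩ := Int.eq_ofNat_of_zero_le h0
        rw [Finset.sum_eq_single r]
        · rw [if_pos hr]
          have := hp (x.1, (r : ℤ)) (0, x.2 / N)
          rw [← this]
          congr 1
          ext
          · simp
          · have := Int.emod_add_mul_ediv x.2 (N : ℤ)
            simp
            omega
        · intro b _ hb
          rw [if_neg]; rw [hr]; intro h; exact hb (by exact_mod_cast h.symm)
        · intro h; exfalso; apply h; rw [Finset.mem_range]; omega
      rw [e]
      refine Submodule.sum_mem _ fun r _ => Submodule.subset_span ⟨fun y => f (y, (r : ℤ)), ?_, 0, 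
        (fun s : ℤ => if s % (N : ℤ) = r then 1 else 0), ?_, rfl⟩
      · refine qp_per ⟨N, hN, fun x v => ?_⟩
        have := hp (x, (r : ℤ)) (v, 0)
        simpa using this
      · refine ⟨N, hN, fun x v => ?_⟩
        simp
  | algebraMap r => exact Submodule.subset_span (hbase _ (qp_const r))
  | add f g _ _ hf hg => exact Submodule.add_mem _ hf hg
  | mul f g _ _ hf hg =>
    have h := Submodule.mul_mem_mul hf hg
    rw [Submodule.span_mul_span] at h
    refine Submodule.span_mono ?_ h
    rintro _ ⟨F, ⟨f, hf, k, ψ, ⟨N, hN, hp⟩, rfl⟩, G, ⟨g, hg, l, χ, ⟨N', hN', hp'⟩, rfl⟩, rfl⟩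
    refine ⟨f * g, (QP H).mul_mem hf hg, k + l, fun s => ψ s * χ s, ⟨N * N', by positivity, fun x v => ?_⟩, ?_⟩
    · have h1 := hp x (N' • v)
      have h2 := hp' x (N • v)
      rw [← mul_smul] at h1 h2
      rw [mul_comm N' N] at h2
      simp only [h1, h2]
    · funext x
      simp only [Pi.mul_apply]
      ring

lemma qp_sum {H : Type*} [AddCommGroup H] {w : H × ℤ → ℚ} (hw : w ∈ QP (H × ℤ)) :
    ∃ A ∈ QP (H × ℤ), ∀ h s, A (h, s) - A (h, s - 1) = w (h, s) := by
  have := qp_span hw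
  clear hw
  induction this using Submodule.span_induction with
  | mem F hF =>
    obtain ⟨f, hf, k, ψ, hψ, rfl⟩ := hF
    obtain ⟨A, hA, hd⟩ := qp_mono_sum k ψ hψ
    refine ⟨_, (QP (H × ℤ)).mul_mem (qp_comp_hom (AddMonoidHom.fst H ℤ) hf)
      (qp_comp_hom (AddMonoidHom.snd H ℤ) hA), fun h s => ?_⟩
    simp [← hd]; ring
  | zero => exact ⟨0, (QP _).zero_mem, by simp⟩
  | add f g hf hg ihf ihg =>
    obtain ⟨A, hA, hd⟩ := ihf
    obtain ⟨A', hA', hd'⟩ := ihg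
    refine ⟨A + A', (QP _).add_mem hA hA', fun h s => ?_⟩
    simp only [Pi.add_apply, ← hd, ← hd']; ring
  | smul c f hf ihf =>
    obtain ⟨A, hA, hd⟩ := ihf
    refine ⟨c • A, (QP _).smul_mem hA c, fun h s => ?_⟩
    simp only [Pi.smul_apply, smul_eq_mul, ← hd]; ring

/-- along multiples of some N a quasi-polynomial is a polynomial -/
lemma qp_poly {W : ℤ → ℚ} (hW : W ∈ QP ℤ) :
    ∃ N : ℕ, 0 < N ∧ ∃ P : Polynomial ℚ, ∀ t : ℤ, W (N * t) = P.eval (t : ℚ) := by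
  induction hW using Algebra.adjoin_induction with
  | mem f hf =>
    rcases hf with ⟨φ, rfl⟩ | ⟨N, hN, hp⟩
    · refine ⟨1, one_pos, Polynomial.C ((φ 1 : ℤ) : ℚ) * Polynomial.X, fun t => ?_⟩
      have : φ t = t * φ 1 := by
        conv_lhs => rw [show t = t • (1 : ℤ) by simp]
        rw [map_zsmul, smul_eq_mul]
      simp [this, mul_comm]
    · refine ⟨N, hN, Polynomial.C (f 0), fun t => ?_⟩
      have := hp 0 t
      simp at this
      simp [this]
  | algebraMap r => exact ⟨1, one_pos, Polynomial.C r, fun t => by simp⟩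
  | add f g _ _ hf hg =>
    obtain ⟨N, hN, P, hP⟩ := hf
    obtain ⟨N', hN', P', hP'⟩ := hg
    refine ⟨N * N', by positivity, P.comp (Polynomial.C (N' : ℚ) * Polynomial.X) +
      P'.comp (Polynomial.C (N : ℚ) * Polynomial.X), fun t => ?_⟩
    have h1 := hP (N' * t)
    have h2 := hP' (N * t)
    have e1 : ((N * N' : ℕ) : ℤ) * t = N * (N' * t) := by push_cast; ring
    have e2 : ((N * N' : ℕ) : ℤ) * t = N' * (N * t) := by push_cast; ring
    rw [← e1] at h1
    rw [← e2] at h2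
    rw [Pi.add_apply, h1, h2]
    simp
  | mul f g _ _ hf hg =>
    obtain ⟨N, hN, P, hP⟩ := hf
    obtain ⟨N', hN', P', hP'⟩ := hg
    refine ⟨N * N', by positivity, P.comp (Polynomial.C (N' : ℚ) * Polynomial.X) *
      P'.comp (Polynomial.C (N : ℚ) * Polynomial.X), fun t => ?_⟩
    have h1 := hP (N' * t)
    have h2 := hP' (N * t)
    have e1 : ((N * N' : ℕ) : ℤ) * t = N * (N' * t) := by push_cast; ring
    have e2 : ((N * N' : ℕ) : ℤ) * t = N' * (N * t) := by push_cast; ring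
    rw [← e1] at h1
    rw [← e2] at h2
    rw [Pi.mul_apply, h1, h2]
    simp

end Ehr


namespace Ehr

/-- a homogeneous integral linear form in `x` and `t` -/
def ev {ι : Type} [Fintype ι] {R : Type} [CommRing R] (C : (ι → ℤ) × ℤ) (x : ι → R) (t : R) : R :=
  ∑ i, (C.1 i : R) * x i + (C.2 : R) * t

section ev
variable {ι : Type} [Fintype ι] {R : Type} [CommRing R]

lemma ev_add_left (C D : (ι → ℤ) × ℤ) (x : ι → R) (t : R) :
    ev (C + D) x t = ev C x t + ev D x t := by
  simp only [ev, Prod.fst_add, Prod.snd_add, Pi.add_apply, Int.cast_add, add_mul,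
    Finset.sum_add_distrib]
  ring

lemma ev_smul_left (c : ℤ) (C : (ι → ℤ) × ℤ) (x : ι → R) (t : R) :
    ev (c • C) x t = c * ev C x t := by
  simp only [ev, Prod.smul_fst, Prod.smul_snd, Pi.smul_apply, smul_eq_mul, Int.cast_mul, mul_assoc,
    Finset.mul_sum, mul_add]

lemma ev_neg_left (C : (ι → ℤ) × ℤ) (x : ι → R) (t : R) :
    ev (-C) x t = - ev C x t := by
  have := ev_smul_left (-1) C x t
  simpa using this

lemma ev_sub_left (C D : (ι → ℤ) × ℤ) (x : ι → R) (t : R) :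
    ev (C - D) x t = ev C x t - ev D x t := by
  rw [sub_eq_add_neg, ev_add_left, ev_neg_left, sub_eq_add_neg]

lemma ev_add (C : (ι → ℤ) × ℤ) (x y : ι → R) (t s : R) :
    ev C (x + y) (t + s) = ev C x t + ev C y s := by
  simp only [ev, Pi.add_apply, mul_add, Finset.sum_add_distrib]
  ring

lemma ev_smul (C : (ι → ℤ) × ℤ) (c : R) (x : ι → R) (t : R) :
    ev C (c • x) (c * t) = c * ev C x t := by
  simp only [ev, Pi.smul_apply, smul_eq_mul, Finset.mul_sum, mul_add]
  congr 1
  · exact Finset.sum_congr rfl fun i _ => by ring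
  · ring

lemma ev_zero_left (x : ι → R) (t : R) : ev (0 : (ι → ℤ) × ℤ) x t = 0 := by simp [ev]

lemma ev_insertNth {d : ℕ} (C : (Fin (d + 1) → ℤ) × ℤ) (k : Fin (d + 1)) (s : R) (y : Fin d → R)
    (t : R) : ev C (k.insertNth s y : Fin (d + 1) → R) t =
      C.1 k * s + ev ((fun i => C.1 (k.succAbove i), C.2) : (Fin d → ℤ) × ℤ) y t := by
  simp only [ev, Fin.sum_univ_succAbove _ k, Fin.insertNth_apply_same, Fin.insertNth_apply_succAbove]
  ring

lemma ev_cast (C : (ι → ℤ) × ℤ) (x : ι → ℤ) (t : ℤ) :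
    ((ev C x t : ℤ) : ℝ) = ev C (fun i => (x i : ℝ)) (t : ℝ) := by
  simp [ev]

/-- `ev` as a homomorphism -/
def evHom (C : (ι → ℤ) × ℤ) : ((ι → ℤ) × ℤ) →+ ℤ where
  toFun z := ev C z.1 z.2
  map_zero' := by simp [ev]
  map_add' z w := by simp [ev_add]

end ev

/-- lattice points of the `t`-th dilate -/
def KZ {ι : Type} [Fintype ι] (Cs : Finset ((ι → ℤ) × ℤ)) (t : ℤ) : Set (ι → ℤ) :=
  {x | ∀ C ∈ Cs, 0 < ev C x t}

/-- real points of the open polytope -/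
def KR {ι : Type} [Fintype ι] (Cs : Finset ((ι → ℤ) × ℤ)) : Set (ι → ℝ) :=
  {x | ∀ C ∈ Cs, 0 < ev C x 1}

/-- boundedness -/
def Bd {ι : Type} [Fintype ι] (Cs : Finset ((ι → ℤ) × ℤ)) : Prop :=
  ∃ b : ℝ, ∀ x ∈ KR Cs, ∀ i, |x i| ≤ b

lemma ev_scale {ι : Type} [Fintype ι] (C : (ι → ℤ) × ℤ) {x : ι → ℤ} {t : ℤ} (ht : 1 ≤ t) :
    ev C (fun i => (x i : ℝ) / t) 1 = (ev C x t : ℤ) / (t : ℝ) := by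
  have ht' : (t : ℝ) ≠ 0 := by exact_mod_cast (by omega : t ≠ 0)
  have h := ev_smul C (t : ℝ)⁻¹ (fun i => (x i : ℝ)) (t : ℝ)
  rw [inv_mul_cancel₀ ht', ← ev_cast] at h
  rw [div_eq_inv_mul, ← h]
  congr 1
  funext i
  simp [div_eq_inv_mul]

lemma KZ_KR {ι : Type} [Fintype ι] {Cs : Finset ((ι → ℤ) × ℤ)} {x : ι → ℤ} {t : ℤ} (ht : 1 ≤ t)
    (hx : x ∈ KZ Cs t) : (fun i => (x i : ℝ) / t) ∈ KR Cs := by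
  intro C hC
  rw [ev_scale C ht]
  have h1 : (0 : ℝ) < t := by exact_mod_cast (by omega : 0 < t)
  have h2 : (0 : ℝ) < (ev C x t : ℤ) := by exact_mod_cast hx C hC
  positivity

lemma KZ_finite {ι : Type} [Fintype ι] {Cs : Finset ((ι → ℤ) × ℤ)} (hb : Bd Cs) {t : ℤ} (ht : 1 ≤ t) :
    (KZ Cs t).Finite := by
  classical
  obtain ⟨b, hb⟩ := hb
  refine (Set.finite_Icc (fun _ : ι => -⌈b * t⌉) (fun _ : ι => ⌈b * t⌉)).subset ?_
  intro x hx
  have h := hb _ (KZ_KR ht hx)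
  have h1 : (0 : ℝ) < t := by exact_mod_cast (by omega : 0 < t)
  have key : ∀ i, |x i| ≤ ⌈b * t⌉ := by
    intro i
    have := h i
    rw [abs_div, abs_of_pos h1, div_le_iff₀ h1] at this
    have h2 := this.trans (Int.le_ceil _)
    exact_mod_cast h2
  exact ⟨fun i => (abs_le.1 (key i)).1, fun i => (abs_le.1 (key i)).2⟩

open Classical in
/-- sign of the polytope -/
noncomputable def chi {d : ℕ} (Cs : Finset ((Fin d → ℤ) × ℤ)) : ℚ :=
  if (KR Cs).Nonempty then (-1) ^ d else 0

/-- `W` is the weighted counting function of the family `A`, with value `e` at 0 -/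
def Cnt {ι : Type} (A : ℤ → Set (ι → ℤ)) (w : (ι → ℤ) × ℤ → ℚ) (e : ℚ) : Prop :=
  ∃ W ∈ QP ℤ, (∀ t : ℤ, 1 ≤ t → ∀ T : Finset (ι → ℤ), (∀ x, x ∈ T ↔ x ∈ A t) →
    ∑ x ∈ T, w (x, t) = W t) ∧ W 0 = e

/-- the main statement in dimension `d` -/
def Main (d : ℕ) : Prop := ∀ Cs : Finset ((Fin d → ℤ) × ℤ), Bd Cs →
  ∀ w ∈ QP ((Fin d → ℤ) × ℤ), Cnt (KZ Cs) w (chi Cs * w 0)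

lemma cnt_empty {ι : Type} {A : ℤ → Set (ι → ℤ)} {w : (ι → ℤ) × ℤ → ℚ}
    (h : ∀ t, 1 ≤ t → ∀ x, x ∉ A t) : Cnt A w 0 := by
  refine ⟨0, (QP ℤ).zero_mem, fun t ht T hT => ?_, rfl⟩
  have : T = ∅ := by
    ext x; simp [hT, h t ht x]
  simp [this]

lemma cnt_KR_empty {d : ℕ} {Cs : Finset ((Fin d → ℤ) × ℤ)} {w : (Fin d → ℤ) × ℤ → ℚ}
    (h : ¬ (KR Cs).Nonempty) : Cnt (KZ Cs) w (chi Cs * w 0) := by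
  rw [chi, if_neg h, zero_mul]
  exact cnt_empty fun t ht x hx => h ⟨_, KZ_KR ht hx⟩

lemma main_zero : Main 0 := by
  intro Cs hb w hw
  by_cases h : (KR Cs).Nonempty
  · rw [chi, if_pos h]
    refine ⟨fun t => w (0, t), qp_comp_hom (AddMonoidHom.inr (Fin 0 → ℤ) ℤ) hw, fun t ht T hT => ?_, ?_⟩
    · have : T = {0} := by
        ext x
        rw [hT, Finset.mem_singleton]
        refine ⟨fun _ => Subsingleton.elim _ _, fun _ C hC => ?_⟩
        obtain ⟨y, hy⟩ := h
        have := hy C hC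
        simp [ev] at this ⊢
        have : 0 < C.2 := by exact_mod_cast this
        positivity
      simp [this]
    · simp only [pow_zero, one_mul]; rfl
  · exact cnt_KR_empty h

/-- the equality case -/
lemma cnt_eq_aux {d : ℕ} (ih : Main d) (Cs : Finset ((Fin (d + 1) → ℤ) × ℤ)) (hb : Bd Cs)
    (h : (Fin (d + 1) → ℤ) × ℤ) (k : Fin (d + 1)) (hk : 0 < h.1 k)
    (w : (Fin (d + 1) → ℤ) × ℤ → ℚ) (hw : w ∈ QP ((Fin (d + 1) → ℤ) × ℤ)) :
    ∃ e : ℚ, Cnt (fun t => {x | x ∈ KZ Cs t ∧ ev h x t = 0}) w (e * w 0) ∧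
      ((∃ x ∈ KR Cs, ev h x 1 = 0) → e = (-1) ^ d) ∧ (¬ (∃ x ∈ KR Cs, ev h x 1 = 0) → e = 0) := by
  classical
  set c := h.1 k with hc
  set rm : (Fin (d + 1) → ℤ) × ℤ → (Fin d → ℤ) × ℤ :=
    fun C => (fun i => C.1 (k.succAbove i), C.2) with hrm
  set sub : (Fin (d + 1) → ℤ) × ℤ → (Fin d → ℤ) × ℤ :=
    fun C => c • rm C - C.1 k • rm h with hsub
  have hR : ∀ C (y : Fin d → ℝ) (s t : ℝ), ev h (k.insertNth s y : Fin (d + 1) → ℝ) t = 0 →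
      ev (sub C) y t = c * ev C (k.insertNth s y : Fin (d + 1) → ℝ) t := by
    intro C y s t h0
    rw [ev_insertNth] at h0 ⊢
    simp only [hsub, ev_sub_left, ev_smul_left, hrm]
    linear_combination (-(C.1 k : ℝ)) * h0
  have hZ : ∀ C (y : Fin d → ℤ) (s t : ℤ), ev h (k.insertNth s y : Fin (d + 1) → ℤ) t = 0 →
      ev (sub C) y t = c * ev C (k.insertNth s y : Fin (d + 1) → ℤ) t := by
    intro C y s t h0
    rw [ev_insertNth] at h0 ⊢
    simp only [hsub, ev_sub_left, ev_smul_left, hrm]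
    simp only [Int.cast_id] at h0 ⊢
    linear_combination (-(C.1 k)) * h0
  set Cs' := Cs.image sub with hCs'
  have hcR : (0 : ℝ) < c := by exact_mod_cast hk
  have memR : ∀ (y : Fin d → ℝ) (s : ℝ), ev h (k.insertNth s y : Fin (d + 1) → ℝ) 1 = 0 →
      (y ∈ KR Cs' ↔ (k.insertNth s y : Fin (d + 1) → ℝ) ∈ KR Cs) := by
    intro y s h0
    simp only [KR, hCs', Finset.forall_mem_image, Set.mem_ofPred_eq]
    refine forall₂_congr fun C _ => ?_
    rw [hR C y s 1 h0, mul_pos_iff_of_pos_left hcR]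
  have memZ : ∀ (y : Fin d → ℤ) (s t : ℤ), ev h (k.insertNth s y : Fin (d + 1) → ℤ) t = 0 →
      (y ∈ KZ Cs' t ↔ (k.insertNth s y : Fin (d + 1) → ℤ) ∈ KZ Cs t) := by
    intro y s t h0
    simp only [KZ, hCs', Finset.forall_mem_image, Set.mem_ofPred_eq]
    refine forall₂_congr fun C _ => ?_
    rw [hZ C y s t h0, mul_pos_iff_of_pos_left hk]
  have exR : ∀ y : Fin d → ℝ, ∃ s : ℝ, ev h (k.insertNth s y : Fin (d + 1) → ℝ) 1 = 0 := by
    intro y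
    refine ⟨- ev (rm h) y 1 / c, ?_⟩
    rw [ev_insertNth]
    simp only [← hc, hrm]
    field_simp
    ring
  have hb' : Bd Cs' := by
    obtain ⟨b, hb⟩ := hb
    refine ⟨b, fun y hy i => ?_⟩
    obtain ⟨s, hs⟩ := exR y
    have := hb _ ((memR y s hs).1 hy) (k.succAbove i)
    simpa using this
  have hne : (KR Cs').Nonempty ↔ ∃ x ∈ KR Cs, ev h x 1 = 0 := by
    constructor
    · rintro ⟨y, hy⟩
      obtain ⟨s, hs⟩ := exR y
      exact ⟨_, (memR y s hs).1 hy, hs⟩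
    · rintro ⟨x, hx, h0⟩
      rw [← Fin.insertNth_self_removeNth k x] at hx h0
      exact ⟨_, (memR _ _ h0).2 hx⟩
  obtain ⟨cn, hcn⟩ := Int.eq_ofNat_of_zero_le hk.le
  have hcn0 : 0 < cn := by omega
  set w' : (Fin d → ℤ) × ℤ → ℚ := fun z =>
    (if c ∣ ev (rm h) z.1 z.2 then 1 else 0) *
      w (k.insertNth ((-ev (rm h) z.1 z.2 + 0) / (cn : ℤ)) z.1, z.2) with hw'
  have hw'Q : w' ∈ QP ((Fin d → ℤ) × ℤ) := by
    refine (QP _).mul_mem (qp_per ⟨cn, hcn0, fun x v => ?_⟩) ?_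
    · have e : ev (rm h) (x + cn • v).1 (x + cn • v).2 = ev (rm h) x.1 x.2 + c * ev (rm h) v.1 v.2 := by
        have := map_add (evHom (rm h)) x (cn • v)
        rw [map_nsmul] at this
        simpa [evHom, hcn] using this
      simp only [e, Int.dvd_add_left (Dvd.intro (ev (rm h) v.1 v.2) (rfl : c * _ = _))]
    · have hF : (fun z : ((Fin d → ℤ) × ℤ) × ℤ => w (k.insertNth z.2 z.1.1, z.1.2)) ∈ QP _ := by
        refine qp_comp_hom (⟨⟨fun z : ((Fin d → ℤ) × ℤ) × ℤ => 
          ((k.insertNth z.2 z.1.1 : Fin (d + 1) → ℤ), z.1.2), ?_⟩, ?_⟩ : _ →+ _) hw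
        · ext i
          · refine Fin.succAboveCases k ?_ (fun j => ?_) i <;> simp
          · simp
        · intro z z'
          ext i
          · refine Fin.succAboveCases k ?_ (fun j => ?_) i <;> simp
          · simp
      exact qp_subst hF (-(evHom (rm h))) 0 cn hcn0
  obtain ⟨W, hW, hWs, hW0⟩ := ih Cs' hb' w' hw'Q
  have hw0 : w' 0 = w 0 := by
    simp only [hw']
    have : ev (rm h) (0 : (Fin d → ℤ) × ℤ).1 (0 : (Fin d → ℤ) × ℤ).2 = 0 := by simp [ev]
    rw [this]
    simp
    rfl
  refine ⟨chi Cs', ⟨W, hW, fun t ht T hT => ?_, by rw [hW0, hw0]⟩, fun hx => ?_, fun hx => ?_⟩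
  · rw [← hWs t ht (KZ_finite hb' ht).toFinset (fun x => by simp)]
    symm
    have e1 : ∀ y ∈ (KZ_finite hb' ht).toFinset, w' (y, t) =
        if c ∣ ev (rm h) y t then w (k.insertNth ((-ev (rm h) y t + 0) / (cn : ℤ)) y, t) else 0 := by
      intro y _
      simp [hw']
    rw [Finset.sum_congr rfl e1, ← Finset.sum_filter]
    refine Finset.sum_bij' (fun y _ => (k.insertNth ((-ev (rm h) y t + 0) / (cn : ℤ)) y : Fin (d + 1) → ℤ))
      (fun x _ => k.removeNth x) ?_ ?_ ?_ ?_ ?_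
    · intro y hy
      simp only [Finset.mem_filter, Set.Finite.mem_toFinset] at hy
      have h0 : ev h (k.insertNth ((-ev (rm h) y t + 0) / (cn : ℤ)) y : Fin (d + 1) → ℤ) t = 0 := by
        rw [ev_insertNth, ← hcn, ← hc, add_zero, Int.cast_id, Int.mul_ediv_cancel' ((Int.dvd_neg).2 hy.2)]
        simp [hrm]
      rw [hT]
      exact ⟨(memZ _ _ _ h0).1 hy.1, h0⟩
    · intro x hx
      rw [hT] at hx
      obtain ⟨h1, h0⟩ := hx
      rw [← Fin.insertNth_self_removeNth k x] at h1 h0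
      simp only [Finset.mem_filter, Set.Finite.mem_toFinset]
      refine ⟨(memZ _ _ _ h0).2 h1, ?_⟩
      rw [ev_insertNth] at h0
      refine ⟨- x k, ?_⟩
      simp only [Int.cast_id, ← hc] at h0
      simp only [hrm]
      linear_combination h0
    · intro y _
      simp
    · intro x hx
      rw [hT] at hx
      obtain ⟨h1, h0⟩ := hx
      have h0' := h0
      rw [← Fin.insertNth_self_removeNth k x, ev_insertNth] at h0
      simp only [Int.cast_id, ← hc] at h0
      have : (-ev (rm h) (k.removeNth x) t + 0) / (cn : ℤ) = x k := by
        rw [add_zero, ← hcn]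
        have : -ev (rm h) (k.removeNth x) t = c * x k := by
          simp only [hrm]
          linear_combination -h0
        rw [this, Int.mul_ediv_cancel_left _ hk.ne']
      simp only [this, Fin.insertNth_self_removeNth]
    · intro y _
      rfl
  · rw [chi, if_pos (hne.2 hx)]
  · rw [chi, if_neg (fun h => hx (hne.1 h))]

lemma cnt_eq {d : ℕ} (ih : Main d) (Cs : Finset ((Fin (d + 1) → ℤ) × ℤ)) (hb : Bd Cs)
    (h : (Fin (d + 1) → ℤ) × ℤ) (hh : h ≠ 0)
    (w : (Fin (d + 1) → ℤ) × ℤ → ℚ) (hw : w ∈ QP ((Fin (d + 1) → ℤ) × ℤ)) :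
    ∃ e : ℚ, Cnt (fun t => {x | x ∈ KZ Cs t ∧ ev h x t = 0}) w (e * w 0) ∧
      ((∃ x ∈ KR Cs, ev h x 1 = 0) → e = (-1) ^ d) ∧ (¬ (∃ x ∈ KR Cs, ev h x 1 = 0) → e = 0) := by
  by_cases h1 : h.1 = 0
  · have h2 : h.2 ≠ 0 := fun h2 => hh (Prod.ext h1 h2)
    refine ⟨0, ?_, ?_, fun _ => rfl⟩
    · rw [zero_mul]
      refine cnt_empty fun t ht x hx => ?_
      have := hx.2
      simp [ev, h1, h2] at this
      omega
    · rintro ⟨x, _, hx⟩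
      simp [ev, h1, h2] at hx
  · obtain ⟨k, hk⟩ : ∃ k, h.1 k ≠ 0 := by
      by_contra hc
      push Not at hc
      exact h1 (funext hc)
    rcases lt_or_gt_of_ne hk with hk | hk
    · have := cnt_eq_aux ih Cs hb (-h) k (by simpa using hk) w hw
      simpa only [ev_neg_left, neg_eq_zero] using this
    · exact cnt_eq_aux ih Cs hb h k hk w hw

end Ehr


namespace Ehr

lemma KR_perturb {ι : Type} [Fintype ι] (Cs : Finset ((ι → ℤ) × ℤ)) {x : ι → ℝ} (hx : x ∈ KR Cs)
    (v : ι → ℝ) : ∃ δ : ℝ, 0 < δ ∧ x + δ • v ∈ KR Cs ∧ x + (-δ) • v ∈ KR Cs := by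
  have hev : ∀ᶠ δ : ℝ in nhds 0, x + δ • v ∈ KR Cs := by
    simp only [KR, Set.mem_ofPred_eq]
    rw [Filter.eventually_all_finset]
    intro C hC
    have hcont : Continuous fun δ : ℝ => ev C (x + δ • v) 1 := by
      unfold ev; fun_prop
    have := hcont.tendsto 0
    simp only [zero_smul, add_zero] at this
    exact this.eventually_const_lt (hx C hC)
  obtain ⟨ε, hε, h⟩ := Metric.eventually_nhds_iff.1 hev
  refine ⟨ε / 2, by positivity, h ?_, h ?_⟩
  · simpa [abs_of_pos hε] using hε
  · simpa [abs_of_pos hε] using hε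

lemma ev_convex {ι : Type} [Fintype ι] (C : (ι → ℤ) × ℤ) (x y : ι → ℝ) (a b : ℝ) (hab : a + b = 1) :
    ev C (a • x + b • y) 1 = a * ev C x 1 + b * ev C y 1 := by
  rw [← hab, ev_add, ← ev_smul, ← ev_smul]
  simp [hab]

lemma exists_zero {ι : Type} [Fintype ι] (Cs : Finset ((ι → ℤ) × ℤ)) (h : (ι → ℤ) × ℤ)
    {x y : ι → ℝ} (hx : x ∈ KR Cs) (hy : y ∈ KR Cs) (hxh : 0 < ev h x 1) (hyh : ev h y 1 < 0) :
    ∃ z ∈ KR Cs, ev h z 1 = 0 := by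
  set p := ev h x 1
  set n := - ev h y 1 with hn
  have hn0 : 0 < n := by linarith
  have hab : n / (p + n) + p / (p + n) = 1 := by field_simp; ring
  refine ⟨(n / (p + n)) • x + (p / (p + n)) • y, fun C hC => ?_, ?_⟩
  · rw [ev_convex _ _ _ _ _ hab]
    have := hx C hC
    have := hy C hC
    positivity
  · rw [ev_convex _ _ _ _ _ hab]
    have : ev h y 1 = - n := by linarith
    rw [this]
    field_simp
    ring

lemma cnt_cut {d : ℕ} (ih : Main d) (Cs Cp Cm : Finset ((Fin (d + 1) → ℤ) × ℤ)) (hb : Bd Cs)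
    (h : (Fin (d + 1) → ℤ) × ℤ) (hh : h ≠ 0)
    (hpR : ∀ x, x ∈ KR Cp ↔ x ∈ KR Cs ∧ 0 < ev h x 1)
    (hmR : ∀ x, x ∈ KR Cm ↔ x ∈ KR Cs ∧ ev h x 1 < 0)
    (hpZ : ∀ t x, x ∈ KZ Cp t ↔ x ∈ KZ Cs t ∧ 0 < ev h x t)
    (hmZ : ∀ t x, x ∈ KZ Cm t ↔ x ∈ KZ Cs t ∧ ev h x t < 0)
    (w : (Fin (d + 1) → ℤ) × ℤ → ℚ) (hw : w ∈ QP ((Fin (d + 1) → ℤ) × ℤ))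
    (hp : Cnt (KZ Cp) w (chi Cp * w 0)) (hm : Cnt (KZ Cm) w (chi Cm * w 0)) :
    Cnt (KZ Cs) w (chi Cs * w 0) := by
  classical
  obtain ⟨e, ⟨W0, hW0, hs0, hz0⟩, he1, he2⟩ := cnt_eq ih Cs hb h hh w hw
  obtain ⟨Wp, hWp, hsp, hzp⟩ := hp
  obtain ⟨Wm, hWm, hsm, hzm⟩ := hm
  refine ⟨Wp + Wm + W0, (QP ℤ).add_mem ((QP ℤ).add_mem hWp hWm) hW0, fun t ht T hT => ?_, ?_⟩
  · simp only [Pi.add_apply]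
    rw [← hsp t ht (T.filter fun x => 0 < ev h x t) (fun x => by simp [hT, hpZ]),
      ← hsm t ht (T.filter fun x => ev h x t < 0) (fun x => by simp [hT, hmZ]),
      ← hs0 t ht (T.filter fun x => ev h x t = 0) (fun x => by simp [hT])]
    rw [← Finset.sum_filter_add_sum_filter_not T (fun x => 0 < ev h x t), add_assoc]
    congr 1
    rw [← Finset.sum_filter_add_sum_filter_not (T.filter fun x => ¬ 0 < ev h x t) (fun x => ev h x t < 0)]
    rw [Finset.filter_filter, Finset.filter_filter]
    congr 1
    · refine Finset.sum_congr (Finset.filter_congr fun x _ => ?_) fun _ _ => rfl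
      omega
    · refine Finset.sum_congr (Finset.filter_congr fun x _ => ?_) fun _ _ => rfl
      omega
  · simp only [Pi.add_apply, hz0, hzp, hzm, ← add_mul]
    congr 1
    by_cases hne : (KR Cs).Nonempty
    · rw [show chi Cs = (-1) ^ (d + 1) by rw [chi, if_pos hne]]
      by_cases h0 : ∃ x ∈ KR Cs, ev h x 1 = 0
      · rw [he1 h0]
        obtain ⟨x, hx, hx0⟩ := h0
        have h1 : h.1 ≠ 0 := by
          intro h1
          have h2 : h.2 ≠ 0 := fun h2 => hh (Prod.ext h1 h2)
          simp [ev, h1, h2] at hx0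
        obtain ⟨δ, hδ, hA, hB⟩ := KR_perturb Cs hx (fun i => (h.1 i : ℝ))
        have hval : ∀ δ : ℝ, ev h (x + δ • fun i => (h.1 i : ℝ)) 1 = δ * ∑ i, (h.1 i : ℝ) ^ 2 := by
          intro δ
          have := ev_add h x (δ • fun i => (h.1 i : ℝ)) 1 0
          rw [add_zero, hx0, zero_add] at this
          rw [this]
          simp [ev, Finset.mul_sum]
          refine Finset.sum_congr rfl fun i _ => ?_
          ring
        have hsum : 0 < ∑ i, (h.1 i : ℝ) ^ 2 := by
          obtain ⟨k, hk⟩ := Function.ne_iff.1 h1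
          refine Finset.sum_pos' (fun i _ => sq_nonneg _) ⟨k, Finset.mem_univ _, ?_⟩
          have : (h.1 k : ℝ) ≠ 0 := by exact_mod_cast hk
          positivity
        have hP : (KR Cp).Nonempty := ⟨_, (hpR _).2 ⟨hA, by rw [hval]; positivity⟩⟩
        have hM : (KR Cm).Nonempty := ⟨_, (hmR _).2 ⟨hB, by rw [hval]; nlinarith⟩⟩
        rw [chi, chi, if_pos hP, if_pos hM]
        ring
      · rw [he2 h0]
        obtain ⟨x, hx⟩ := hne
        rcases lt_trichotomy (ev h x 1) 0 with hlt | heq | hgt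
        · have hM : (KR Cm).Nonempty := ⟨x, (hmR _).2 ⟨hx, hlt⟩⟩
          have hP : ¬ (KR Cp).Nonempty := by
            rintro ⟨y, hy⟩
            rw [hpR] at hy
            exact h0 (exists_zero Cs h hy.1 hx hy.2 hlt)
          rw [chi, chi, if_neg hP, if_pos hM]; ring
        · exact absurd ⟨x, hx, heq⟩ h0
        · have hP : (KR Cp).Nonempty := ⟨x, (hpR _).2 ⟨hx, hgt⟩⟩
          have hM : ¬ (KR Cm).Nonempty := by
            rintro ⟨y, hy⟩
            rw [hmR] at hy
            exact h0 (exists_zero Cs h hx hy.1 hgt hy.2)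
          rw [chi, chi, if_pos hP, if_neg hM]; ring
    · have hP : ¬ (KR Cp).Nonempty := fun ⟨x, hx⟩ => hne ⟨x, ((hpR x).1 hx).1⟩
      have hM : ¬ (KR Cm).Nonempty := fun ⟨x, hx⟩ => hne ⟨x, ((hmR x).1 hx).1⟩
      have h0 : ¬ ∃ x ∈ KR Cs, ev h x 1 = 0 := fun ⟨x, hx, _⟩ => hne ⟨x, hx⟩
      rw [he2 h0, chi, chi, chi, if_neg hP, if_neg hM, if_neg hne]; ring

lemma telescope (A : ℤ → ℚ) {l u : ℤ} (h : l ≤ u) :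
    ∑ s ∈ Finset.Ioc l u, (A s - A (s - 1)) = A u - A l := by
  induction u, h using Int.le_induction with
  | base => simp
  | succ n hn ih =>
    have : Finset.Ioc l (n + 1) = insert (n + 1) (Finset.Ioc l n) := by
      ext x; simp; omega
    rw [this, Finset.sum_insert (by simp), ih]
    simp

/-- summing out one variable -/
lemma cnt_fiber {d : ℕ} (ih : Main d) (Cs : Finset ((Fin (d + 1) → ℤ) × ℤ)) (hb : Bd Cs)
    (C1 C2 : (Fin (d + 1) → ℤ) × ℤ) (h1 : C1 ∈ Cs) (h2 : C2 ∈ Cs) (hc1 : 0 < C1.1 0)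
    (hc2 : C2.1 0 < 0) (hC : ∀ C ∈ Cs, C ≠ C1 → C ≠ C2 → C.1 0 = 0)
    (w : (Fin (d + 1) → ℤ) × ℤ → ℚ) (hw : w ∈ QP ((Fin (d + 1) → ℤ) × ℤ)) :
    Cnt (KZ Cs) w (chi Cs * w 0) := by
  classical
  set rm : (Fin (d + 1) → ℤ) × ℤ → (Fin d → ℤ) × ℤ :=
    fun C => (fun i => C.1 ((0 : Fin (d + 1)).succAbove i), C.2) with hrm
  obtain ⟨c1, hc1'⟩ := Int.eq_ofNat_of_zero_le hc1.le
  obtain ⟨c2, hc2'⟩ := Int.eq_ofNat_of_zero_le (show 0 ≤ - C2.1 0 by omega)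
  have hc2'' : C2.1 0 = - (c2 : ℤ) := by omega
  have p1 : 0 < c1 := by omega
  have p2 : 0 < c2 := by omega
  set Cs' := insert ((c2 : ℤ) • rm C1 + (c1 : ℤ) • rm C2) ((Cs.filter fun C => C.1 0 = 0).image rm) with hCs'
  have memZ : ∀ (y : Fin d → ℤ) (s t : ℤ), ((0 : Fin (d + 1)).insertNth s y : Fin (d + 1) → ℤ) ∈ KZ Cs t ↔
      0 < c1 * s + ev (rm C1) y t ∧ 0 < - (c2 * s) + ev (rm C2) y t ∧
        ∀ C ∈ Cs, C.1 0 = 0 → 0 < ev (rm C) y t := by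
    intro y s t
    constructor
    · intro h
      refine ⟨?_, ?_, fun C hC h0 => ?_⟩
      · have := h C1 h1
        rw [ev_insertNth, hc1'] at this; simpa [hrm] using this
      · have := h C2 h2
        rw [ev_insertNth, hc2''] at this; simpa [hrm] using this
      · have := h C hC
        rw [ev_insertNth, h0] at this; simpa [hrm] using this
    · rintro ⟨a1, a2, a3⟩ C hCC
      rw [ev_insertNth]
      by_cases e1 : C = C1
      · rw [e1, hc1']; simpa [hrm] using a1
      by_cases e2 : C = C2
      · rw [e2, hc2'']; simpa [hrm] using a2
      · have h0 := hC C hCC e1 e2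
        rw [h0]; simpa [hrm] using a3 C hCC h0
  have memR : ∀ (y : Fin d → ℝ) (s : ℝ), ((0 : Fin (d + 1)).insertNth s y : Fin (d + 1) → ℝ) ∈ KR Cs ↔
      0 < c1 * s + ev (rm C1) y 1 ∧ 0 < - (c2 * s) + ev (rm C2) y 1 ∧
        ∀ C ∈ Cs, C.1 0 = 0 → 0 < ev (rm C) y 1 := by
    intro y s
    constructor
    · intro h
      refine ⟨?_, ?_, fun C hC h0 => ?_⟩
      · have := h C1 h1
        rw [ev_insertNth, hc1'] at this; simpa [hrm] using this
      · have := h C2 h2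
        rw [ev_insertNth, hc2''] at this; simpa [hrm] using this
      · have := h C hC
        rw [ev_insertNth, h0] at this; simpa [hrm] using this
    · rintro ⟨a1, a2, a3⟩ C hCC
      rw [ev_insertNth]
      by_cases e1 : C = C1
      · rw [e1, hc1']; simpa [hrm] using a1
      by_cases e2 : C = C2
      · rw [e2, hc2'']; simpa [hrm] using a2
      · have h0 := hC C hCC e1 e2
        rw [h0]; simpa [hrm] using a3 C hCC h0
  have memZ' : ∀ (y : Fin d → ℤ) (t : ℤ), y ∈ KZ Cs' t ↔
      0 < c2 * ev (rm C1) y t + c1 * ev (rm C2) y t ∧ ∀ C ∈ Cs, C.1 0 = 0 → 0 < ev (rm C) y t := by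
    intro y t
    simp only [KZ, hCs', Set.mem_ofPred_eq, Finset.forall_mem_insert, Finset.forall_mem_image,
      Finset.mem_filter, ev_add_left, ev_smul_left, and_imp, Int.cast_id]
  have memR' : ∀ (y : Fin d → ℝ), y ∈ KR Cs' ↔
      0 < c2 * ev (rm C1) y 1 + c1 * ev (rm C2) y 1 ∧ ∀ C ∈ Cs, C.1 0 = 0 → 0 < ev (rm C) y 1 := by
    intro y
    simp only [KR, hCs', Set.mem_ofPred_eq, Finset.forall_mem_insert, Finset.forall_mem_image,
      Finset.mem_filter, ev_add_left, ev_smul_left, and_imp, Int.cast_natCast]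
  have q1 : (0 : ℝ) < c1 := by exact_mod_cast p1
  have q2 : (0 : ℝ) < c2 := by exact_mod_cast p2
  have exR : ∀ y ∈ KR Cs', ∃ s : ℝ, ((0 : Fin (d + 1)).insertNth s y : Fin (d + 1) → ℝ) ∈ KR Cs := by
    intro y hy
    rw [memR'] at hy
    have : - ev (rm C1) y 1 / c1 < ev (rm C2) y 1 / c2 := by
      rw [div_lt_div_iff₀ q1 q2]; linarith [hy.1]
    obtain ⟨s, s1, s2⟩ := exists_between this
    refine ⟨s, (memR y s).2 ⟨?_, ?_, hy.2⟩⟩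
    · rw [div_lt_iff₀ q1] at s1; linarith
    · rw [lt_div_iff₀ q2] at s2; linarith
  have hne : (KR Cs').Nonempty ↔ (KR Cs).Nonempty := by
    constructor
    · rintro ⟨y, hy⟩
      obtain ⟨s, hs⟩ := exR y hy
      exact ⟨_, hs⟩
    · rintro ⟨x, hx⟩
      rw [← Fin.insertNth_self_removeNth 0 x, memR] at hx
      refine ⟨_, (memR' _).2 ⟨?_, hx.2.2⟩⟩
      nlinarith [hx.1, hx.2.1]
  have hb' : Bd Cs' := by
    obtain ⟨b, hb⟩ := hb
    refine ⟨b, fun y hy i => ?_⟩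
    obtain ⟨s, hs⟩ := exR y hy
    have := hb _ hs ((0 : Fin (d + 1)).succAbove i)
    rwa [Fin.insertNth_apply_succAbove] at this
  have hF : (fun z : ((Fin d → ℤ) × ℤ) × ℤ => w ((0 : Fin (d + 1)).insertNth z.2 z.1.1, z.1.2)) ∈ QP _ := by
    refine qp_comp_hom (⟨⟨fun z : ((Fin d → ℤ) × ℤ) × ℤ => 
      (((0 : Fin (d + 1)).insertNth z.2 z.1.1 : Fin (d + 1) → ℤ), z.1.2), ?_⟩, ?_⟩ : _ →+ _) hw
    · ext i
      · refine Fin.cases ?_ (fun j => ?_) i <;> simp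
      · simp
    · intro z z'
      ext i
      · refine Fin.cases ?_ (fun j => ?_) i <;> simp
      · simp
  obtain ⟨A, hA, hAd⟩ := qp_sum hF
  set w' : (Fin d → ℤ) × ℤ → ℚ := fun z =>
    A (z, (ev (rm C2) z.1 z.2 + (-1)) / (c2 : ℤ)) - A (z, (- ev (rm C1) z.1 z.2 + 0) / (c1 : ℤ)) with hw'
  have hw'Q : w' ∈ QP ((Fin d → ℤ) × ℤ) :=
    (QP _).sub_mem (qp_subst hA (evHom (rm C2)) (-1) c2 p2) (qp_subst hA (-(evHom (rm C1))) 0 c1 p1)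
  have hw0 : w' 0 = - w 0 := by
    have e : ∀ C, ev (rm C) (0 : (Fin d → ℤ) × ℤ).1 (0 : (Fin d → ℤ) × ℤ).2 = 0 := fun C => by simp [ev]
    simp only [hw', e]
    have e2 : (0 + -1 : ℤ) / (c2 : ℤ) = -1 := by
      rw [zero_add, Int.ediv_eq_iff_of_pos (by exact_mod_cast p2)]
      constructor <;> omega
    rw [e2]
    have := hAd 0 0
    simp only [zero_sub] at this
    simp only [neg_zero, add_zero, Int.zero_ediv]
    have hz : ((0 : Fin (d + 1)).insertNth (0 : ℤ) (0 : (Fin d → ℤ) × ℤ).1, (0 : (Fin d → ℤ) × ℤ).2) =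
      (0 : (Fin (d + 1) → ℤ) × ℤ) := by
      ext i
      · refine Fin.cases ?_ (fun j => ?_) i <;> simp
      · simp
    rw [hz] at this
    linarith
  obtain ⟨W, hW, hWs, hW0⟩ := ih Cs' hb' w' hw'Q
  refine ⟨W, hW, fun t ht T hT => ?_, ?_⟩
  · rw [← hWs t ht (KZ_finite hb' ht).toFinset (fun x => by simp)]
    rw [← Finset.sum_fiberwise_of_maps_to (g := fun x => (0 : Fin (d + 1)).removeNth x)
      (t := (KZ_finite hb' ht).toFinset)]
    · refine Finset.sum_congr rfl fun y hy => ?_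
      simp only [Set.Finite.mem_toFinset] at hy
      rw [memZ'] at hy
      have hlu : (- ev (rm C1) y t + 0) / (c1 : ℤ) ≤ (ev (rm C2) y t + (-1)) / (c2 : ℤ) := by
        rw [Int.le_ediv_iff_mul_le (by exact_mod_cast p2)]
        set a := (- ev (rm C1) y t + 0) / (c1 : ℤ)
        have ha : a * c1 ≤ - ev (rm C1) y t + 0 := Int.ediv_mul_le _ (by omega)
        have q1 : (0 : ℤ) < c1 := by exact_mod_cast p1
        have q2 : (0 : ℤ) < c2 := by exact_mod_cast p2
        have : (c1 : ℤ) * (a * c2) < c1 * ev (rm C2) y t := by nlinarith [hy.1]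
        have := lt_of_mul_lt_mul_left this q1.le
        omega
      show _ = A ((y, t), (ev (rm C2) y t + (-1)) / (c2 : ℤ)) - A ((y, t), (- ev (rm C1) y t + 0) / (c1 : ℤ))
      rw [← telescope (fun s => A ((y, t), s)) hlu]
      symm
      refine Finset.sum_bij' (fun s _ => ((0 : Fin (d + 1)).insertNth s y : Fin (d + 1) → ℤ))
        (fun x _ => x 0) ?_ ?_ ?_ ?_ ?_
      · intro s hs
        rw [Finset.mem_Ioc, Int.ediv_lt_iff_lt_mul (by exact_mod_cast p1),
          Int.le_ediv_iff_mul_le (by exact_mod_cast p2)] at hs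
        rw [Finset.mem_filter, hT, memZ]
        refine ⟨⟨?_, ?_, hy.2⟩, by simp⟩
        · linarith [hs.1]
        · linarith [hs.2]
      · intro x hx
        rw [Finset.mem_filter, hT] at hx
        obtain ⟨hx, rfl⟩ := hx
        rw [← Fin.insertNth_self_removeNth 0 x, memZ] at hx
        rw [Finset.mem_Ioc, Int.ediv_lt_iff_lt_mul (by exact_mod_cast p1),
          Int.le_ediv_iff_mul_le (by exact_mod_cast p2)]
        constructor
        · linarith [hx.1]
        · linarith [hx.2.1]
      · intro s _
        simp
      · intro x hx
        rw [Finset.mem_filter] at hx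
        obtain ⟨hx, rfl⟩ := hx
        exact Fin.insertNth_self_removeNth 0 x
      · intro s _
        exact hAd _ _
    · intro x hx
      rw [hT] at hx
      rw [← Fin.insertNth_self_removeNth 0 x, memZ] at hx
      simp only [Set.Finite.mem_toFinset]
      rw [memZ']
      refine ⟨?_, hx.2.2⟩
      have q1 : (0 : ℤ) < c1 := by exact_mod_cast p1
      have q2 : (0 : ℤ) < c2 := by exact_mod_cast p2
      nlinarith [mul_pos q2 hx.1, mul_pos q1 hx.2.1]
  · rw [hW0, hw0]
    by_cases hn : (KR Cs).Nonempty
    · rw [chi, chi, if_pos hn, if_pos (hne.2 hn)]; ring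
    · rw [chi, chi, if_neg hn, if_neg (fun h => hn (hne.1 h))]; ring

lemma unbdd {d : ℕ} (Cs : Finset ((Fin (d + 1) → ℤ) × ℤ)) (hb : Bd Cs) (σ : ℝ) (hσ : |σ| = 1)
    (h : ∀ C ∈ Cs, 0 ≤ σ * (C.1 0 : ℝ)) : ¬ (KR Cs).Nonempty := by
  rintro ⟨x, hx⟩
  obtain ⟨b, hb⟩ := hb
  have hmem : ∀ r : ℝ, 0 ≤ r → x + (r * σ) • Pi.single (0 : Fin (d + 1)) (1 : ℝ) ∈ KR Cs := by
    intro r hr C hC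
    have := ev_add C x ((r * σ) • Pi.single (0 : Fin (d + 1)) (1 : ℝ)) 1 0
    rw [add_zero] at this
    rw [this]
    have h2 : ev C ((r * σ) • Pi.single (0 : Fin (d + 1)) (1 : ℝ)) 0 = r * (σ * C.1 0) := by
      simp [ev, Pi.single_apply]; ring
    rw [h2]
    have := hx C hC
    have := mul_nonneg hr (h C hC)
    linarith
  have h0 := hb x hx 0
  have h1 := hb _ (hmem (2 * b + 1) (by linarith [abs_nonneg (x 0)])) 0
  simp at h1
  have h2 : |(2 * b + 1) * σ| ≤ |x 0 + (2 * b + 1) * σ| + |x 0| := by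
    have := abs_sub (x 0 + (2 * b + 1) * σ) (x 0)
    simpa using this
  rw [abs_mul, hσ, mul_one] at h2
  have := le_abs_self (2 * b + 1)
  linarith

lemma main_succ {d : ℕ} (ih : Main d) : Main (d + 1) := by
  classical
  intro Cs
  induction hn : (Cs.filter fun C => C.1 0 ≠ 0).card using Nat.strong_induction_on generalizing Cs with
  | _ n IH =>
  intro hb w hw
  by_cases hA : ∃ C1 ∈ Cs, ∃ C2 ∈ Cs, C1 ≠ C2 ∧ 0 < C1.1 0 * C2.1 0
  · obtain ⟨C1, h1, C2, h2, h12, hpos⟩ := hA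
    have n1 : C1.1 0 ≠ 0 := left_ne_zero_of_mul hpos.ne'
    have n2 : C2.1 0 ≠ 0 := right_ne_zero_of_mul hpos.ne'
    have a1 : 0 < |C1.1 0| := abs_pos.2 n1
    have a2 : 0 < |C2.1 0| := abs_pos.2 n2
    have b1 : (0 : ℝ) < (|C1.1 0| : ℤ) := by exact_mod_cast a1
    have b2 : (0 : ℝ) < (|C2.1 0| : ℤ) := by exact_mod_cast a2
    set h := |C2.1 0| • C1 - |C1.1 0| • C2 with hh
    have hhz : h.1 0 = 0 := by
      simp only [hh, Prod.fst_sub, Prod.smul_fst, Pi.sub_apply, Pi.smul_apply, smul_eq_mul]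
      rcases pos_and_pos_or_neg_and_neg_of_mul_pos hpos with ⟨x, y⟩ | ⟨x, y⟩
      · rw [abs_of_pos x, abs_of_pos y]; ring
      · rw [abs_of_neg x, abs_of_neg y]; ring
    have evZ : ∀ (x : Fin (d + 1) → ℤ) (t : ℤ), ev h x t = |C2.1 0| * ev C1 x t - |C1.1 0| * ev C2 x t := by
      intro x t; simp only [hh, ev_sub_left, ev_smul_left, Int.cast_id]
    have evR : ∀ (x : Fin (d + 1) → ℝ), ev h x 1 = (|C2.1 0| : ℤ) * ev C1 x 1 - (|C1.1 0| : ℤ) * ev C2 x 1 := by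
      intro x; simp only [hh, ev_sub_left, ev_smul_left]
    have er1 : ∀ P : (Fin (d + 1) → ℤ) × ℤ → Prop, (∀ C ∈ Cs, P C) ↔ P C1 ∧ ∀ C ∈ Cs.erase C1, P C := by
      intro P
      rw [← Finset.forall_mem_insert, Finset.insert_erase h1]
    have er2 : ∀ P : (Fin (d + 1) → ℤ) × ℤ → Prop, (∀ C ∈ Cs, P C) ↔ P C2 ∧ ∀ C ∈ Cs.erase C2, P C := by
      intro P
      rw [← Finset.forall_mem_insert, Finset.insert_erase h2]
    have m1 : C1 ∈ Cs.erase C2 := Finset.mem_erase.2 ⟨h12, h1⟩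
    have m2 : C2 ∈ Cs.erase C1 := Finset.mem_erase.2 ⟨h12.symm, h2⟩
    by_cases h0 : h = 0
    · have hKR : KR Cs = KR (Cs.erase C1) := by
        ext x
        refine (er1 fun C => 0 < ev C x 1).trans ⟨fun hx => hx.2, fun hx => ⟨?_, hx⟩⟩
        have e := evR x
        rw [h0, ev_zero_left] at e
        have := mul_pos b1 (hx C2 m2)
        exact (mul_pos_iff_of_pos_left b2).1 (by linarith)
      have hKZ : KZ Cs = KZ (Cs.erase C1) := by
        funext t
        ext x
        refine (er1 fun C => 0 < ev C x t).trans ⟨fun hx => hx.2, fun hx => ⟨?_, hx⟩⟩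
        have e := evZ x t
        rw [h0, ev_zero_left] at e
        have := mul_pos a1 (hx C2 m2)
        exact (mul_pos_iff_of_pos_left a2).1 (by linarith)
      have hlt : ((Cs.erase C1).filter fun C => C.1 0 ≠ 0).card < n := by
        rw [← hn]
        refine Finset.card_lt_card (Finset.ssubset_iff_subset_ne.2 ⟨?_, fun he => ?_⟩)
        · exact Finset.filter_subset_filter _ (Finset.erase_subset _ _)
        · have : C1 ∈ (Cs.filter fun C => C.1 0 ≠ 0) := Finset.mem_filter.2 ⟨h1, n1⟩
          rw [← he] at this
          simp at this
      have hb' : Bd (Cs.erase C1) := by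
        unfold Bd at hb ⊢; rwa [hKR] at hb
      have := IH _ hlt (Cs.erase C1) rfl hb' w hw
      rw [hKZ]
      have hchi : chi Cs = chi (Cs.erase C1) := by rw [chi, chi, hKR]
      rw [hchi]; exact this
    · have hlt : ∀ C' ∈ Cs, C'.1 0 ≠ 0 → ∀ g : (Fin (d + 1) → ℤ) × ℤ, g.1 0 = 0 →
          ((insert g (Cs.erase C')).filter fun C => C.1 0 ≠ 0).card < n := by
        intro C' hC' hne g hg
        rw [← hn, Finset.filter_insert, if_neg (by simpa using hg)]
        refine Finset.card_lt_card (Finset.ssubset_iff_subset_ne.2 ⟨?_, fun he => ?_⟩)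
        · exact Finset.filter_subset_filter _ (Finset.erase_subset _ _)
        · have : C' ∈ (Cs.filter fun C => C.1 0 ≠ 0) := Finset.mem_filter.2 ⟨hC', hne⟩
          rw [← he] at this
          simp at this
      have hpR : ∀ x, x ∈ KR (insert h (Cs.erase C1)) ↔ x ∈ KR Cs ∧ 0 < ev h x 1 := by
        intro x
        simp only [KR, Set.mem_ofPred_eq, Finset.forall_mem_insert]
        rw [er1 fun C => 0 < ev C x 1]
        refine ⟨fun hx => ⟨⟨?_, hx.2⟩, hx.1⟩, fun hx => ⟨hx.2, hx.1.2⟩⟩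
        have e := evR x
        have := mul_pos b1 (hx.2 C2 m2)
        exact (mul_pos_iff_of_pos_left b2).1 (by linarith [hx.1])
      have hpZ : ∀ t x, x ∈ KZ (insert h (Cs.erase C1)) t ↔ x ∈ KZ Cs t ∧ 0 < ev h x t := by
        intro t x
        simp only [KZ, Set.mem_ofPred_eq, Finset.forall_mem_insert]
        rw [er1 fun C => 0 < ev C x t]
        refine ⟨fun hx => ⟨⟨?_, hx.2⟩, hx.1⟩, fun hx => ⟨hx.2, hx.1.2⟩⟩
        have e := evZ x t
        have := mul_pos a1 (hx.2 C2 m2)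
        exact (mul_pos_iff_of_pos_left a2).1 (by linarith [hx.1])
      have hmR : ∀ x, x ∈ KR (insert (-h) (Cs.erase C2)) ↔ x ∈ KR Cs ∧ ev h x 1 < 0 := by
        intro x
        simp only [KR, Set.mem_ofPred_eq, Finset.forall_mem_insert, ev_neg_left, Left.neg_pos_iff]
        rw [er2 fun C => 0 < ev C x 1]
        refine ⟨fun hx => ⟨⟨?_, hx.2⟩, hx.1⟩, fun hx => ⟨hx.2, hx.1.2⟩⟩
        have e := evR x
        have := mul_pos b2 (hx.2 C1 m1)
        exact (mul_pos_iff_of_pos_left b1).1 (by linarith [hx.1])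
      have hmZ : ∀ t x, x ∈ KZ (insert (-h) (Cs.erase C2)) t ↔ x ∈ KZ Cs t ∧ ev h x t < 0 := by
        intro t x
        simp only [KZ, Set.mem_ofPred_eq, Finset.forall_mem_insert, ev_neg_left, Left.neg_pos_iff]
        rw [er2 fun C => 0 < ev C x t]
        refine ⟨fun hx => ⟨⟨?_, hx.2⟩, hx.1⟩, fun hx => ⟨hx.2, hx.1.2⟩⟩
        have e := evZ x t
        have := mul_pos a2 (hx.2 C1 m1)
        exact (mul_pos_iff_of_pos_left a1).1 (by linarith [hx.1])
      have hb' := hb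
      obtain ⟨b, hb'⟩ := hb'
      refine cnt_cut ih Cs _ _ hb h h0 hpR hmR hpZ hmZ w hw ?_ ?_
      · exact IH _ (hlt C1 h1 n1 h hhz) _ rfl ⟨b, fun x hx => hb' x ((hpR x).1 hx).1⟩ w hw
      · exact IH _ (hlt C2 h2 n2 (-h) (by simpa using hhz)) _ rfl
          ⟨b, fun x hx => hb' x ((hmR x).1 hx).1⟩ w hw
  · push Not at hA
    by_cases hP : ∃ C1 ∈ Cs, 0 < C1.1 0
    · by_cases hN : ∃ C2 ∈ Cs, C2.1 0 < 0
      · obtain ⟨C1, h1, hc1⟩ := hP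
        obtain ⟨C2, h2, hc2⟩ := hN
        refine cnt_fiber ih Cs hb C1 C2 h1 h2 hc1 hc2 (fun C hC e1 e2 => ?_) w hw
        have l1 := hA C hC C1 h1 e1
        have l2 := hA C hC C2 h2 e2
        nlinarith
      · push Not at hN
        refine cnt_KR_empty (unbdd Cs hb 1 (by simp) fun C hC => ?_)
        have : (0 : ℝ) ≤ C.1 0 := by exact_mod_cast hN C hC
        linarith
    · push Not at hP
      refine cnt_KR_empty (unbdd Cs hb (-1) (by simp) fun C hC => ?_)
      have : (C.1 0 : ℝ) ≤ 0 := by exact_mod_cast hP C hC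
      linarith

theorem main_all (d : ℕ) : Main d := by
  induction d with
  | zero => exact main_zero
  | succ d ih => exact main_succ ih

end Ehr


namespace Ehr

theorem main_fintype {ι : Type} [Fintype ι] (Cs : Finset ((ι → ℤ) × ℤ)) (hb : Bd Cs) :
    ∃ W ∈ QP ℤ, (∀ t : ℤ, 1 ≤ t → ((KZ Cs t).ncard : ℚ) = W t) ∧
      ((KR Cs).Nonempty → W 0 = (-1) ^ (Fintype.card ι)) ∧ (¬ (KR Cs).Nonempty → W 0 = 0) := by
  classical
  set e := Fintype.equivFin ι
  set d := Fintype.card ι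
  set f : (ι → ℤ) × ℤ → (Fin d → ℤ) × ℤ := fun C => (fun i => C.1 (e.symm i), C.2) with hf
  have hev : ∀ {R : Type} [CommRing R] (C) (x : Fin d → R) (t : R),
      ev (f C) x t = ev C (fun i => x (e i)) t := by
    intro R _ C x t
    simp only [ev, hf]
    congr 1
    rw [← Equiv.sum_comp e]
    simp
  have hR : ∀ x : Fin d → ℝ, x ∈ KR (Cs.image f) ↔ (fun i => x (e i)) ∈ KR Cs := by
    intro x
    simp only [KR, Set.mem_ofPred_eq, Finset.forall_mem_image, hev]
  have hZ : ∀ (t : ℤ) (x : Fin d → ℤ), x ∈ KZ (Cs.image f) t ↔ (fun i => x (e i)) ∈ KZ Cs t := by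
    intro t x
    simp only [KZ, Set.mem_ofPred_eq, Finset.forall_mem_image, hev]
  have hb' : Bd (Cs.image f) := by
    obtain ⟨b, hb⟩ := hb
    refine ⟨b, fun x hx i => ?_⟩
    have := hb _ ((hR x).1 hx) (e.symm i)
    simpa using this
  have hne : (KR (Cs.image f)).Nonempty ↔ (KR Cs).Nonempty := by
    constructor
    · rintro ⟨x, hx⟩; exact ⟨_, (hR x).1 hx⟩
    · rintro ⟨x, hx⟩; exact ⟨fun i => x (e.symm i), (hR _).2 (by simpa using hx)⟩
  obtain ⟨W, hW, hs, h0⟩ := main_all d (Cs.image f) hb' 1 (QP _).one_mem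
  refine ⟨W, hW, fun t ht => ?_, fun h => ?_, fun h => ?_⟩
  · rw [← hs t ht (KZ_finite hb' ht).toFinset (fun x => by simp)]
    simp only [Pi.one_apply, Finset.sum_const, nsmul_eq_mul, mul_one]
    rw [← Set.ncard_eq_toFinset_card _ (KZ_finite hb' ht)]
    congr 1
    have : KZ (Cs.image f) t = (fun x : ι → ℤ => fun i => x (e.symm i)) '' KZ Cs t := by
      ext x
      rw [hZ]
      constructor
      · intro h; exact ⟨_, h, by simp⟩
      · rintro ⟨y, hy, rfl⟩; simpa using hy
    rw [this, Set.ncard_image_of_injective]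
    intro x y hxy
    funext i
    have := congrFun hxy (e i)
    simpa using this
  · rw [h0, chi, if_pos (hne.2 h)]; simp
  · rw [h0, chi, if_neg (fun h' => h (hne.1 h'))]; simp


/-- pairing -/
def pr (a : ℤ × ℤ × ℤ) (z : ℝ × ℝ × ℝ) : ℝ := a.1 * z.1 + a.2.1 * z.2.1 + a.2.2 * z.2.2

lemma pr_add (a : ℤ × ℤ × ℤ) (z w : ℝ × ℝ × ℝ) : pr a (z + w) = pr a z + pr a w := by
  simp [pr]; ring
lemma pr_sub (a : ℤ × ℤ × ℤ) (z w : ℝ × ℝ × ℝ) : pr a (z - w) = pr a z - pr a w := by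
  simp [pr]; ring
lemma pr_smul (a : ℤ × ℤ × ℤ) (c : ℝ) (w : ℝ × ℝ × ℝ) : pr a (c • w) = c * pr a w := by
  simp [pr]; ring
lemma pr_lsub (a b : ℤ × ℤ × ℤ) (c d : ℤ) (w : ℝ × ℝ × ℝ) :
    pr (c • a - d • b) w = c * pr a w - d * pr b w := by
  simp [pr]; ring
lemma pr_lsmul (a : ℤ × ℤ × ℤ) (c : ℤ) (w : ℝ × ℝ × ℝ) :
    pr (c • a) w = c * pr a w := by
  simp [pr]; ring

/-- relatively open polyhedral cones -/
def Dfn (K : Set (ℝ × ℝ × ℝ)) : Prop :=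
  ∃ P Q : Finset (ℤ × ℤ × ℤ), ∀ z, z ∈ K ↔ (∀ a ∈ P, 0 < pr a z) ∧ ∀ a ∈ Q, pr a z = 0

lemma dfn_add {K : Set (ℝ × ℝ × ℝ)} (hK : Dfn K) (g : ℝ × ℝ × ℝ) (hg : ∀ a, ∃ n : ℤ, pr a g = n) :
    Dfn {z | ∃ l : ℝ, 0 < l ∧ z - l • g ∈ K} := by
  classical
  obtain ⟨P, Q, hPQ⟩ := hK
  choose n hn using hg
  by_cases hQ : ∃ e ∈ Q, n e ≠ 0
  · obtain ⟨e, he, hne⟩ := hQ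
    have hne' : (n e : ℝ) ≠ 0 := by exact_mod_cast hne
    have hsq : 0 < (n e : ℝ) * n e := mul_self_pos.2 hne'
    refine ⟨insert (n e • e) (P.image fun a => (n e * n e) • a - (n e * n a) • e),
      Q.image fun a => (n e * n e) • a - (n e * n a) • e, fun z => ?_⟩
    simp only [Set.mem_ofPred_eq, hPQ, Finset.forall_mem_insert, Finset.forall_mem_image, pr_lsub,
      pr_lsmul, pr_sub, pr_smul, hn]
    push_cast
    constructor
    · rintro ⟨l, hl, h1, h2⟩
      have h3 := h2 e he
      have h4 : pr e z = l * n e := by linarith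
      refine ⟨⟨by rw [h4]; nlinarith, fun a ha => ?_⟩, fun a ha => ?_⟩
      · have := mul_pos hsq (h1 a ha)
        rw [h4]; nlinarith
      · rw [h4]; linear_combination ((n e : ℝ) * n e) * h2 a ha
    · rintro ⟨⟨h0, h1⟩, h2⟩
      have hl : pr e z / n e = (n e * pr e z) / (n e * n e) := by field_simp
      refine ⟨pr e z / n e, by rw [hl]; positivity, fun a ha => ?_, fun a ha => ?_⟩
      · have : pr a z - pr e z / n e * n a =
          ((n e : ℝ) * n e * pr a z - n e * n a * pr e z) / (n e * n e) := by field_simp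
        rw [this]
        exact div_pos (h1 ha) hsq
      · have : pr a z - pr e z / n e * n a =
          ((n e : ℝ) * n e * pr a z - n e * n a * pr e z) / (n e * n e) := by field_simp
        rw [this, h2 ha, zero_div]
  · push Not at hQ
    refine ⟨(P.filter fun a => 0 ≤ n a) ∪
      (((P.filter fun a => n a < 0) ×ˢ (P.filter fun a => 0 < n a)).image fun x =>
        (n x.2) • x.1 - (n x.1) • x.2), Q, fun z => ?_⟩
    have hQ' : ∀ l : ℝ, (∀ a ∈ Q, pr a (z - l • g) = 0) ↔ ∀ a ∈ Q, pr a z = 0 := by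
      intro l
      refine forall₂_congr fun a ha => ?_
      rw [pr_sub, pr_smul, hn, hQ a ha]; simp
    simp only [Set.mem_ofPred_eq, hPQ, hQ']
    simp only [Finset.mem_union, or_imp, forall_and, Finset.forall_mem_image, Finset.mem_filter,
      Finset.mem_product, pr_lsub, pr_sub, pr_smul, hn]
    constructor
    · rintro ⟨l, hl, h1, h2⟩
      refine ⟨⟨fun a ha => ?_, ?_⟩, h2⟩
      · have := h1 a ha.1
        have h3 : (0 : ℝ) ≤ n a := by exact_mod_cast ha.2
        nlinarith
      · rintro ⟨a, b⟩ ⟨⟨ha, ha'⟩, hb, hb'⟩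
        have := h1 a ha
        have := h1 b hb
        have h3 : (n a : ℝ) < 0 := by exact_mod_cast ha'
        have h4 : (0 : ℝ) < n b := by exact_mod_cast hb'
        simp only
        nlinarith
    · rintro ⟨⟨h1, h2⟩, h3⟩
      obtain ⟨l, hl1, hl2⟩ := Order.exists_between_finsets
        (insert 0 ((P.filter fun a => n a < 0).image fun a => pr a z / n a))
        ((P.filter fun a => 0 < n a).image fun a => pr a z / n a) (by
          simp only [Finset.forall_mem_insert, Finset.forall_mem_image, Finset.mem_filter]
          refine ⟨fun b hb => ?_, fun a ha b hb => ?_⟩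
          · have h4 : (0 : ℝ) < n b := by exact_mod_cast hb.2
            have := h1 b ⟨hb.1, hb.2.le⟩
            positivity
          · have h4 : (0 : ℝ) < n b := by exact_mod_cast hb.2
            have h5 : (n a : ℝ) < 0 := by exact_mod_cast ha.2
            have := @h2 (a, b) ⟨ha, hb⟩
            simp only at this
            rw [lt_div_iff₀ h4, div_mul_eq_mul_div, div_lt_iff_of_neg h5]
            linarith)
      simp only [Finset.forall_mem_insert, Finset.forall_mem_image, Finset.mem_filter] at hl1 hl2
      refine ⟨l, hl1.1, fun a ha => ?_, h3⟩
      rcases lt_trichotomy (n a) 0 with h | h | h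
      · have h5 : (n a : ℝ) < 0 := by exact_mod_cast h
        have := hl1.2 ⟨ha, h⟩
        rw [div_lt_iff_of_neg h5] at this
        linarith
      · have := h1 a ⟨ha, h.ge⟩
        rw [h]; simpa using this
      · have h5 : (0 : ℝ) < n a := by exact_mod_cast h
        have := hl2 ⟨ha, h⟩
        rw [lt_div_iff₀ h5] at this
        linarith

/-- lift of a point -/
def lift (v : ℝ × ℝ) : ℝ × ℝ × ℝ := (v.1, v.2, 1)

lemma dfn_cone (V : Finset (ℝ × ℝ)) (hV : ∀ v ∈ V, ∃ a b : ℚ, v = ((a : ℝ), (b : ℝ))) :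
    Dfn {z | ∃ l : ℝ × ℝ → ℝ, (∀ v ∈ V, 0 < l v) ∧ z = ∑ v ∈ V, l v • lift v} := by
  classical
  induction V using Finset.induction_on with
  | empty =>
    refine ⟨∅, {(1, 0, 0), (0, 1, 0), (0, 0, 1)}, fun z => ?_⟩
    simp only [Finset.forall_mem_insert, Finset.mem_singleton, forall_eq]
    simp [pr, Prod.ext_iff]
  | insert v V hv ih =>
    have ih' := ih fun u hu => hV u (Finset.mem_insert_of_mem hu)
    obtain ⟨a, b, hab⟩ := hV v (Finset.mem_insert_self _ _)
    set N : ℝ := a.den * b.den with hN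
    have hN0 : 0 < N := by have := a.den_pos; have := b.den_pos; positivity
    have hinteg : ∀ c, ∃ n : ℤ, pr c (N • lift v) = n := by
      intro c
      refine ⟨c.1 * (a.num * b.den) + c.2.1 * (b.num * a.den) + c.2.2 * (a.den * b.den), ?_⟩
      have ha : (a : ℝ) * a.den = a.num := by exact_mod_cast Rat.mul_den_eq_num a
      have hb : (b : ℝ) * b.den = b.num := by exact_mod_cast Rat.mul_den_eq_num b
      rw [pr_smul]
      simp only [pr, lift, hab, hN]
      push_cast
      rw [← ha, ← hb]
      ring
    obtain ⟨P, Q, h⟩ := dfn_add ih' _ hinteg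
    refine ⟨P, Q, fun z => ?_⟩
    rw [← h]
    simp only [Set.mem_ofPred_eq]
    constructor
    · rintro ⟨l, hl, rfl⟩
      refine ⟨l v / N, div_pos (hl v (Finset.mem_insert_self _ _)) hN0, l,
        fun u hu => hl u (Finset.mem_insert_of_mem hu), ?_⟩
      rw [Finset.sum_insert hv, smul_smul, div_mul_cancel₀ _ hN0.ne']
      abel
    · rintro ⟨r, hr, l, hl, hz⟩
      refine ⟨fun u => if u = v then r * N else l u, fun u hu => ?_, ?_⟩
      · by_cases e : u = v
        · simp only [e, if_true]; positivity
        · simp only [e, if_false]; exact hl u (Finset.mem_of_mem_insert_of_ne hu e)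
      · rw [Finset.sum_insert hv]
        simp only [if_true]
        have : ∑ x ∈ V, (if x = v then r * N else l x) • lift x = ∑ x ∈ V, l x • lift x := by
          refine Finset.sum_congr rfl fun x hx => ?_
          rw [if_neg]; rintro rfl; exact hv hx
        rw [this, ← hz, smul_smul]
        abel

lemma interior_hull (V : Finset (ℝ × ℝ)) (hne : (interior (convexHull ℝ (V : Set (ℝ × ℝ)))).Nonempty)
    (x : ℝ × ℝ) : x ∈ interior (convexHull ℝ (V : Set (ℝ × ℝ))) ↔
      ∃ l : ℝ × ℝ → ℝ, (∀ v ∈ V, 0 < l v) ∧ ∑ v ∈ V, l v = 1 ∧ ∑ v ∈ V, l v • v = x := by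
  classical
  set B := convexHull ℝ (V : Set (ℝ × ℝ)) with hB
  have hconv : Convex ℝ B := convex_convexHull ℝ _
  have hVne : V.Nonempty := by
    by_contra h
    rw [Finset.not_nonempty_iff_eq_empty] at h
    simp [hB, h] at hne
  constructor
  · intro hx
    have hcard : (0 : ℝ) < V.card := by exact_mod_cast hVne.card_pos
    set c : ℝ × ℝ := ∑ v ∈ V, (V.card : ℝ)⁻¹ • v with hc
    have hcont : Continuous fun δ : ℝ => x + δ • (x - c) := by fun_prop
    have hev : ∀ᶠ δ : ℝ in nhds 0, x + δ • (x - c) ∈ B := by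
      have := hcont.tendsto 0
      simp only [zero_smul, add_zero] at this
      exact this.eventually (mem_interior_iff_mem_nhds.1 hx)
    obtain ⟨ε, hε, h⟩ := Metric.eventually_nhds_iff.1 hev
    have hy : x + (ε / 2) • (x - c) ∈ B := h (by simpa [abs_of_pos hε] using hε)
    rw [hB, Finset.mem_convexHull'] at hy
    obtain ⟨m, hm0, hm1, hm⟩ := hy
    set δ := ε / 2 with hδ
    have hδ0 : 0 < δ := by positivity
    refine ⟨fun v => (1 + δ)⁻¹ * (m v + δ * (V.card : ℝ)⁻¹), fun v hv => ?_, ?_, ?_⟩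
    · have := hm0 v hv
      positivity
    · rw [← Finset.mul_sum, Finset.sum_add_distrib, hm1]
      simp only [Finset.sum_const, nsmul_eq_mul]
      field_simp
    · simp only [mul_smul, add_smul]
      rw [← Finset.smul_sum, Finset.sum_add_distrib, hm, ← Finset.smul_sum, ← hc]
      have : x + δ • (x - c) + δ • c = (1 + δ) • x := by module
      rw [this, smul_smul, inv_mul_cancel₀ (by positivity), one_smul]
  · rintro ⟨l, hl, hl1, rfl⟩
    obtain ⟨z, hz⟩ := hne
    have hzB := interior_subset hz
    rw [hB, Finset.mem_convexHull'] at hzB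
    obtain ⟨m, hm0, hm1, hm⟩ := hzB
    obtain ⟨v0, hv0, hmin⟩ := V.exists_min_image l hVne
    set ε := min (l v0) (1 / 2) with hε
    have hε0 : 0 < ε := lt_min (hl v0 hv0) (by norm_num)
    have hε1 : ε < 1 := (min_le_right _ _).trans_lt (by norm_num)
    have hmle : ∀ v ∈ V, m v ≤ 1 := fun v hv => by
      rw [← hm1]; exact Finset.single_le_sum hm0 hv
    have hy : ∑ v ∈ V, ((1 - ε)⁻¹ * (l v - ε * m v)) • v ∈ B := by
      rw [hB, Finset.mem_convexHull']
      refine ⟨fun v => (1 - ε)⁻¹ * (l v - ε * m v), fun v hv => ?_, ?_, rfl⟩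
      · have h1 : ε ≤ l v := (min_le_left _ _).trans (hmin v hv)
        have h2 := hmle v hv
        have : 0 ≤ l v - ε * m v := by nlinarith
        have : 0 < 1 - ε := by linarith
        positivity
      · rw [← Finset.mul_sum, Finset.sum_sub_distrib, hl1, ← Finset.mul_sum, hm1, mul_one,
          inv_mul_cancel₀ (by linarith)]
    have := hconv.combo_interior_self_mem_interior hz hy hε0 (by linarith : 0 ≤ 1 - ε) (by ring)
    convert this using 1
    rw [← hm]
    have e1 : (1 - ε) • ∑ v ∈ V, ((1 - ε)⁻¹ * (l v - ε * m v)) • v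
        = ∑ v ∈ V, (l v - ε * m v) • v := by
      rw [Finset.smul_sum]
      refine Finset.sum_congr rfl fun v _ => ?_
      rw [smul_smul, mul_inv_cancel_left₀ (by linarith)]
    rw [e1]
    simp only [sub_smul, mul_smul]
    rw [Finset.sum_sub_distrib, ← Finset.smul_sum]
    abel

theorem halfplanes (V : Finset (ℝ × ℝ)) (hV : ∀ v ∈ V, ∃ a b : ℚ, v = ((a : ℝ), (b : ℝ)))
    (hne : (interior (convexHull ℝ (V : Set (ℝ × ℝ)))).Nonempty) :
    ∃ P : Finset (ℤ × ℤ × ℤ), ∀ x : ℝ × ℝ, x ∈ interior (convexHull ℝ (V : Set (ℝ × ℝ))) ↔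
      ∀ a ∈ P, 0 < (a.1 : ℝ) * x.1 + a.2.1 * x.2 + a.2.2 := by
  obtain ⟨P, Q, h⟩ := dfn_cone V hV
  have hx : ∀ x : ℝ × ℝ, x ∈ interior (convexHull ℝ (V : Set (ℝ × ℝ))) ↔
      (∀ a ∈ P, 0 < pr a (lift x)) ∧ ∀ a ∈ Q, pr a (lift x) = 0 := by
    intro x
    rw [interior_hull V hne, ← h]
    simp only [Set.mem_ofPred_eq]
    refine exists_congr fun l => and_congr_right fun _ => ?_
    rw [Prod.ext_iff, Prod.ext_iff, Prod.ext_iff]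
    simp only [lift, Prod.fst_sum, Prod.snd_sum, Prod.smul_fst, Prod.smul_snd, smul_eq_mul, mul_one]
    constructor
    · rintro ⟨a, b, c⟩; exact ⟨b.symm, c.symm, a.symm⟩
    · rintro ⟨a, b, c⟩; exact ⟨c.symm, a.symm, b.symm⟩
  have hQ : ∀ a ∈ Q, a = 0 := by
    intro a ha
    obtain ⟨x, hx0⟩ := hne
    have hval : ∀ v : ℝ × ℝ, (a.1 : ℝ) * v.1 + a.2.1 * v.2 = 0 := by
      intro v
      have hcont : Continuous fun δ : ℝ => x + δ • v := by fun_prop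
      have hev : ∀ᶠ δ : ℝ in nhds 0, x + δ • v ∈ interior (convexHull ℝ (V : Set (ℝ × ℝ))) := by
        have := hcont.tendsto 0
        simp only [zero_smul, add_zero] at this
        exact this.eventually (isOpen_interior.mem_nhds hx0)
      obtain ⟨ε, hε, h⟩ := Metric.eventually_nhds_iff.1 hev
      have hy := h (y := ε / 2) (by simpa [abs_of_pos hε] using hε)
      have e1 := ((hx _).1 hy).2 a ha
      have e2 := ((hx _).1 hx0).2 a ha
      simp only [pr, lift, Prod.fst_add, Prod.snd_add, Prod.smul_fst, Prod.smul_snd, smul_eq_mul] at e1 e2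
      have : (ε / 2) * ((a.1 : ℝ) * v.1 + a.2.1 * v.2) = 0 := by linear_combination e1 - e2
      rcases mul_eq_zero.1 this with h | h
      · linarith
      · exact h
    have h1 := hval (1, 0)
    have h2 := hval (0, 1)
    have h3 := ((hx _).1 hx0).2 a ha
    simp at h1 h2
    simp [pr, lift, h1, h2] at h3
    exact Prod.ext h1 (Prod.ext h2 h3)
  refine ⟨P, fun x => ?_⟩
  rw [hx]
  have : (∀ a ∈ Q, pr a (lift x) = 0) := by
    intro a ha; rw [hQ a ha]; simp [pr]
  simp only [pr, lift, mul_one] at this ⊢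
  exact ⟨fun h => h.1, fun h => ⟨h, this⟩⟩

end Ehr


namespace Ehr

/-- flatten a configuration -/
def flat {R : Type} {q : ℕ} (z : Fin q → R × R) : Fin q × Bool → R :=
  fun k => if k.2 then (z k.1).2 else (z k.1).1

/-- unflatten -/
def unflat {R : Type} {q : ℕ} (x : Fin q × Bool → R) : Fin q → R × R :=
  fun i => (x (i, false), x (i, true))

lemma flat_unflat {R : Type} {q : ℕ} (x : Fin q × Bool → R) : flat (unflat x) = x := by
  funext ⟨i, b⟩; cases b <;> simp [flat, unflat]

lemma unflat_flat {R : Type} {q : ℕ} (z : Fin q → R × R) : unflat (flat z) = z := by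
  funext i; simp [flat, unflat]

/-- board constraint -/
def bC {q : ℕ} (i : Fin q) (a : ℤ × ℤ × ℤ) : (Fin q × Bool → ℤ) × ℤ :=
  (fun k => if k.1 = i then (if k.2 then a.2.1 else a.1) else 0, a.2.2)

/-- move constraint -/
def hC {q : ℕ} (τ : Fin q × Fin q × (ℤ × ℤ)) : (Fin q × Bool → ℤ) × ℤ :=
  (fun k => (if k.1 = τ.2.1 then (if k.2 then -τ.2.2.1 else τ.2.2.2) else 0)
    - (if k.1 = τ.1 then (if k.2 then -τ.2.2.1 else τ.2.2.2) else 0), 0)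

/-- move form -/
def hv {R : Type} [CommRing R] {q : ℕ} (τ : Fin q × Fin q × (ℤ × ℤ)) (z : Fin q → R × R) : R :=
  ((z τ.2.1).1 - (z τ.1).1) * (τ.2.2.2 : R) - ((z τ.2.1).2 - (z τ.1).2) * (τ.2.2.1 : R)

/-- board value -/
def bv {R : Type} [CommRing R] (a : ℤ × ℤ × ℤ) (z : R × R) (t : R) : R :=
  (a.1 : R) * z.1 + (a.2.1 : R) * z.2 + (a.2.2 : R) * t

/-- sorting key -/
def key {R : Type} [CommRing R] (m : ℤ × ℤ) (z : R × R) : R := z.1 * (m.2 : R) - z.2 * (m.1 : R)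

lemma ev_bC {R : Type} [CommRing R] {q : ℕ} (i : Fin q) (a : ℤ × ℤ × ℤ) (z : Fin q → R × R) (t : R) :
    ev (bC i a) (flat z) t = bv a (z i) t := by
  simp only [ev, bC, bv, flat, Fintype.sum_prod_type, Fintype.sum_bool]
  rw [Finset.sum_eq_single i]
  · simp; ring
  · intro j _ hj; simp [hj]
  · simp

lemma ev_hC {R : Type} [CommRing R] {q : ℕ} (τ : Fin q × Fin q × (ℤ × ℤ)) (z : Fin q → R × R) (t : R) :
    ev (hC τ) (flat z) t = hv τ z := by
  simp only [ev, hC, hv, flat, Fintype.sum_prod_type, Fintype.sum_bool]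
  push_cast
  simp only [sub_mul, Finset.sum_add_distrib, Finset.sum_sub_distrib, ite_mul, zero_mul,
    Finset.sum_ite_eq', Finset.mem_univ, if_true, Int.cast_zero, add_zero]
  simp
  ring

/-- all pairs/moves -/
def TT (q : ℕ) (M : Finset (ℤ × ℤ)) : Finset (Fin q × Fin q × (ℤ × ℤ)) :=
  (Finset.univ ×ˢ Finset.univ ×ˢ M).filter fun τ => τ.1 < τ.2.1

lemma mem_TT {q : ℕ} {M : Finset (ℤ × ℤ)} {i j : Fin q} {m : ℤ × ℤ} :
    (i, j, m) ∈ TT q M ↔ m ∈ M ∧ i < j := by simp [TT]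

section
variable {R : Type} [CommRing R] [LinearOrder R] [IsStrictOrderedRing R] {q : ℕ}

/-- sign set -/
noncomputable def sg (M : Finset (ℤ × ℤ)) (z : Fin q → R × R) : Finset (Fin q × Fin q × (ℤ × ℤ)) :=
  (TT q M).filter fun τ => 0 < hv τ z

/-- allowed configurations -/
def OK (M : Finset (ℤ × ℤ)) (P : Finset (ℤ × ℤ × ℤ)) (t : R) : Set (Fin q → R × R) :=
  {z | (∀ i, ∀ a ∈ P, 0 < bv a (z i) t) ∧ ∀ τ ∈ TT q M, hv τ z ≠ 0}

/-- constraints of a cell -/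
noncomputable def CC (M : Finset (ℤ × ℤ)) (P : Finset (ℤ × ℤ × ℤ))
    (ε : Finset (Fin q × Fin q × (ℤ × ℤ))) : Finset ((Fin q × Bool → ℤ) × ℤ) := by
  classical
  exact (Finset.univ ×ˢ P).image (fun x => bC x.1 x.2) ∪
    (TT q M).image fun τ => if τ ∈ ε then hC τ else -hC τ

lemma mem_cell (M : Finset (ℤ × ℤ)) (P : Finset (ℤ × ℤ × ℤ))
    {ε : Finset (Fin q × Fin q × (ℤ × ℤ))} (hε : ε ⊆ TT q M) (z : Fin q → R × R) (t : R) :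
    (∀ C ∈ CC M P ε, 0 < ev C (flat z) t) ↔ z ∈ OK M P t ∧ sg M z = ε := by
  classical
  simp only [CC, Finset.mem_union, or_imp, forall_and, Finset.forall_mem_image, Finset.mem_product,
    Finset.mem_univ, true_and, ev_bC, Prod.forall]
  simp only [OK, Set.mem_ofPred_eq, and_assoc]
  refine and_congr ⟨fun h i a ha => ?_, fun h i a b c ha => h i _ ha⟩ ?_
  · obtain ⟨a, b, c⟩ := a; exact h i a b c ha
  have key : (∀ τ ∈ TT q M, 0 < ev (if τ ∈ ε then hC τ else -hC τ) (flat z) t) ↔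
      (∀ τ ∈ TT q M, hv τ z ≠ 0) ∧ sg M z = ε := by
    constructor
    · intro h
      have h1 : ∀ τ ∈ TT q M, (τ ∈ ε → 0 < hv τ z) ∧ (τ ∉ ε → hv τ z < 0) := by
        intro τ hτ
        have := h τ hτ
        refine ⟨fun h2 => ?_, fun h2 => ?_⟩
        · rwa [if_pos h2, ev_hC] at this
        · rw [if_neg h2, ev_neg_left, ev_hC] at this; linarith
      refine ⟨fun τ hτ => ?_, ?_⟩
      · by_cases h2 : τ ∈ ε
        · exact ((h1 τ hτ).1 h2).ne'
        · exact ((h1 τ hτ).2 h2).ne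
      · ext τ
        simp only [sg, Finset.mem_filter]
        refine ⟨fun ⟨a, b⟩ => ?_, fun h2 => ⟨hε h2, (h1 τ (hε h2)).1 h2⟩⟩
        by_contra h2
        exact absurd ((h1 τ a).2 h2) b.not_gt
    · rintro ⟨h1, rfl⟩ τ hτ
      by_cases h2 : 0 < hv τ z
      · rw [if_pos (by simp [sg, hτ, h2]), ev_hC]; exact h2
      · rw [if_neg (by simp [sg, hτ]; exact not_lt.1 h2), ev_neg_left, ev_hC]
        have := lt_of_le_of_ne (not_lt.1 h2) (h1 τ hτ)
        linarith
  rw [← key]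
  refine ⟨fun h τ hτ => ?_, fun h a b c d hh => h _ hh⟩
  first
    | exact h hτ
    | (obtain ⟨a, b, c, d⟩ := τ; exact h a b c d hτ)
    | (obtain ⟨a, b, c, d⟩ := τ; exact h hτ)

lemma hv_key (i j : Fin q) (m : ℤ × ℤ) (z : Fin q → R × R) :
    hv (i, j, m) z = key m (z j) - key m (z i) := by simp only [hv, key]; ring

/-- index set of sorted cells -/
noncomputable def EE (q : ℕ) (M : Finset (ℤ × ℤ)) (m0 : ℤ × ℤ) :
    Finset (Finset (Fin q × Fin q × (ℤ × ℤ))) := by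
  classical
  exact (TT q M).powerset.filter fun ε => ∀ i j : Fin q, i < j → (i, j, m0) ∈ ε

lemma mem_EE {M : Finset (ℤ × ℤ)} {m0 : ℤ × ℤ} {ε : Finset (Fin q × Fin q × (ℤ × ℤ))} :
    ε ∈ EE q M m0 ↔ ε ⊆ TT q M ∧ ∀ i j : Fin q, i < j → (i, j, m0) ∈ ε := by simp [EE]

lemma sorted_iff {M : Finset (ℤ × ℤ)} {m0 : ℤ × ℤ} (hm : m0 ∈ M) (z : Fin q → R × R) :
    sg M z ∈ EE q M m0 ↔ StrictMono fun i => key m0 (z i) := by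
  rw [mem_EE]
  refine ⟨fun h i j hij => ?_, fun h => ⟨Finset.filter_subset _ _, fun i j hij => ?_⟩⟩
  · have := h.2 i j hij
    simp only [sg, Finset.mem_filter, hv_key] at this
    exact sub_pos.1 this.2
  · simp only [sg, Finset.mem_filter, hv_key, mem_TT]
    exact ⟨⟨hm, hij⟩, sub_pos.2 (h hij)⟩

lemma ok_ne {M : Finset (ℤ × ℤ)} {P : Finset (ℤ × ℤ × ℤ)} {t : R} {z : Fin q → R × R} (hz : z ∈ OK M P t)
    {i j : Fin q} (hij : i ≠ j) {m : ℤ × ℤ} (hm : m ∈ M) : hv (i, j, m) z ≠ 0 := by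
  rcases lt_or_gt_of_ne hij with h | h
  · exact hz.2 _ (mem_TT.2 ⟨hm, h⟩)
  · have := hz.2 _ (mem_TT.2 ⟨hm, h⟩)
    rw [hv_key] at this ⊢
    intro h'; apply this; linear_combination -h'

lemma ok_iff {M : Finset (ℤ × ℤ)} {P : Finset (ℤ × ℤ × ℤ)} {t : R} {z : Fin q → R × R} :
    z ∈ OK M P t ↔ (∀ i, ∀ a ∈ P, 0 < bv a (z i) t) ∧ ∀ i j, i ≠ j → ∀ m ∈ M, hv (i, j, m) z ≠ 0 := by
  refine ⟨fun h => ⟨h.1, fun i j hij m hm => ok_ne h hij hm⟩, fun h => ⟨h.1, ?_⟩⟩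
  rintro ⟨i, j, m⟩ hτ
  rw [mem_TT] at hτ
  exact h.2 i j hτ.2.ne m hτ.1

lemma ok_perm {M : Finset (ℤ × ℤ)} {P : Finset (ℤ × ℤ × ℤ)} {t : R} {z : Fin q → R × R} (hz : z ∈ OK M P t)
    (σ : Equiv.Perm (Fin q)) : (fun i => z (σ i)) ∈ OK M P t := by
  rw [ok_iff] at hz ⊢
  refine ⟨fun i => hz.1 _, fun i j hij m hm => ?_⟩
  exact hz.2 (σ i) (σ j) (fun h => hij (σ.injective h)) m hm

lemma sg_all {M : Finset (ℤ × ℤ)} {P : Finset (ℤ × ℤ × ℤ)} {t : R} {z w : Fin q → R × R}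
    (hz : z ∈ OK M P t) (hw : w ∈ OK M P t) (h : sg M z = sg M w) (i j : Fin q) (hij : i ≠ j)
    (m : ℤ × ℤ) (hm : m ∈ M) : 0 < hv (i, j, m) z ↔ 0 < hv (i, j, m) w := by
  have base : ∀ i j : Fin q, i < j → (0 < hv (i, j, m) z ↔ 0 < hv (i, j, m) w) := by
    intro i j hij
    have := Finset.ext_iff.1 h (i, j, m)
    simpa [sg, mem_TT, hm, hij] using this
  rcases lt_or_gt_of_ne hij with h' | h'
  · exact base i j h'
  · have b := base j i h'
    have n1 := ok_ne hz hij hm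
    have n2 := ok_ne hw hij hm
    simp only [hv_key] at *
    constructor
    · intro h1
      by_contra h2
      have := b.2 (by have := lt_of_le_of_ne (not_lt.1 h2) n2; linarith)
      linarith
    · intro h1
      by_contra h2
      have := b.1 (by have := lt_of_le_of_ne (not_lt.1 h2) n1; linarith)
      linarith

lemma sg_perm {M : Finset (ℤ × ℤ)} {P : Finset (ℤ × ℤ × ℤ)} {t : R} {z w : Fin q → R × R}
    (hz : z ∈ OK M P t) (hw : w ∈ OK M P t) (h : sg M z = sg M w) (σ : Equiv.Perm (Fin q)) :
    sg M (fun i => z (σ i)) = sg M (fun i => w (σ i)) := by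
  ext ⟨i, j, m⟩
  simp only [sg, Finset.mem_filter, mem_TT]
  refine and_congr_right fun hh => ?_
  exact sg_all hz hw h (σ i) (σ j) (fun e => hh.2.ne (σ.injective e)) m hh.1

end

lemma cell_KR {q : ℕ} (M : Finset (ℤ × ℤ)) (P : Finset (ℤ × ℤ × ℤ))
    {ε : Finset (Fin q × Fin q × (ℤ × ℤ))} (hε : ε ⊆ TT q M) (z : Fin q → ℝ × ℝ) :
    flat z ∈ KR (CC M P ε) ↔ z ∈ OK M P 1 ∧ sg M z = ε := mem_cell M P hε z 1

lemma cell_KZ {q : ℕ} (M : Finset (ℤ × ℤ)) (P : Finset (ℤ × ℤ × ℤ))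
    {ε : Finset (Fin q × Fin q × (ℤ × ℤ))} (hε : ε ⊆ TT q M) (z : Fin q → ℤ × ℤ) (t : ℤ) :
    flat z ∈ KZ (CC M P ε) t ↔ z ∈ OK M P t ∧ sg M z = ε := mem_cell M P hε z t

/-- sorted configurations -/
def SO {R : Type} [CommRing R] [LinearOrder R] {q : ℕ} (M : Finset (ℤ × ℤ)) (P : Finset (ℤ × ℤ × ℤ))
    (m0 : ℤ × ℤ) (t : R) : Set (Fin q → R × R) :=
  {z | z ∈ OK M P t ∧ StrictMono fun i => key m0 (z i)}

lemma count_cells {q : ℕ} {M : Finset (ℤ × ℤ)} (P : Finset (ℤ × ℤ × ℤ)) {m0 : ℤ × ℤ} (hm : m0 ∈ M)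
    (hb : ∀ ε : Finset (Fin q × Fin q × (ℤ × ℤ)), ε ⊆ TT q M → Bd (CC M P ε)) {t : ℤ} (ht : 1 ≤ t) :
    (SO (q := q) M P m0 t).ncard = ∑ ε ∈ EE q M m0, (KZ (CC M P ε) t).ncard := by
  classical
  have hsub : ∀ {ε : Finset (Fin q × Fin q × (ℤ × ℤ))}, ε ∈ EE q M m0 → ε ⊆ TT q M :=
    fun h => (mem_EE.1 h).1
  have hcell : ∀ ε ∈ EE q M m0, unflat '' (KZ (CC M P ε) t) =
      {z | z ∈ SO (q := q) M P m0 t ∧ sg M z = ε} := by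
    intro ε hε
    ext z
    constructor
    · rintro ⟨x, hx, rfl⟩
      rw [← flat_unflat x, cell_KZ M P (hsub hε)] at hx
      refine ⟨⟨hx.1, ?_⟩, hx.2⟩
      rw [← sorted_iff hm, hx.2]; exact hε
    · rintro ⟨h1, h2⟩
      exact ⟨flat z, (cell_KZ M P (hsub hε) z t).2 ⟨h1.1, h2⟩, unflat_flat z⟩
  have hfin : (SO (q := q) M P m0 t).Finite := by
    refine Set.Finite.subset (Set.Finite.biUnion (EE q M m0).finite_toSet
      (t := fun ε => unflat '' (KZ (CC M P ε) t)) fun ε hε =>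
        (KZ_finite (hb ε (hsub hε)) ht).image _) ?_
    intro z hz
    have : sg M z ∈ EE q M m0 := (sorted_iff hm z).2 hz.2
    rw [Set.mem_iUnion₂]
    exact ⟨_, this, by rw [hcell _ this]; exact ⟨hz, rfl⟩⟩
  rw [Set.ncard_eq_toFinset_card _ hfin, Finset.card_eq_sum_card_fiberwise (f := sg M)
    (t := EE q M m0)]
  · refine Finset.sum_congr rfl fun ε hε => ?_
    have hinj : Function.Injective (unflat : (Fin q × Bool → ℤ) → _) :=
      Function.LeftInverse.injective (g := flat) flat_unflat
    rw [← Set.ncard_image_of_injective _ hinj, hcell ε hε, ← Set.ncard_coe_finset]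
    congr 1
    ext z; simp
  · intro z hz
    exact (sorted_iff hm z).2 (by simpa using hz : z ∈ SO M P m0 t).2

lemma exists_sorted {α : Type} {β : Type} [LinearOrder β] [DecidableEq α] (f : α → β) (S : Finset α) (q : ℕ)
    (hS : S.card = q) (hf : Set.InjOn f S) :
    ∃ z : Fin q → α, StrictMono (fun i => f (z i)) ∧ Finset.univ.image z = S := by
  have hc : (S.image f).card = q := by rw [Finset.card_image_of_injOn hf, hS]
  have : ∀ i : Fin q, ∃ a ∈ S, f a = (S.image f).orderEmbOfFin hc i := by
    intro i
    exact Finset.mem_image.1 (Finset.orderEmbOfFin_mem (S.image f) hc i)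
  choose z hz hfz using this
  have hmono : StrictMono (fun i => f (z i)) := by
    intro i j hij
    simp only [hfz]
    exact ((S.image f).orderEmbOfFin hc).strictMono hij
  refine ⟨z, hmono, Finset.eq_of_subset_of_card_le ?_ ?_⟩
  · intro a; simp only [Finset.mem_image, Finset.mem_univ, true_and]; rintro ⟨i, rfl⟩; exact hz i
  · rw [Finset.card_image_of_injective, Finset.card_univ, Fintype.card_fin, hS]
    intro i j hij
    exact hmono.injective (congrArg f hij)

lemma sorted_inj {α : Type} {β : Type} [LinearOrder β] (f : α → β) {q : ℕ}
    {z w : Fin q → α} (hz : StrictMono (fun i => f (z i))) (hw : StrictMono (fun i => f (w i)))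
    (h : Set.range z = Set.range w) : z = w := by
  have h1 : (fun i => f (z i)) = fun i => f (w i) := by
    rw [← StrictMono.range_inj hz hw]
    have e1 : Set.range (fun i => f (z i)) = f '' Set.range z := Set.range_comp f z
    have e2 : Set.range (fun i => f (w i)) = f '' Set.range w := Set.range_comp f w
    rw [e1, e2, h]
  funext i
  have : z i ∈ Set.range w := h ▸ Set.mem_range_self i
  obtain ⟨j, hj⟩ := this
  have h2 : f (w j) = f (w i) := by rw [hj]; exact congrFun h1 i
  rw [← hj, hw.injective h2]

lemma count_sets {q : ℕ} {M : Finset (ℤ × ℤ)} (P : Finset (ℤ × ℤ × ℤ)) {m0 : ℤ × ℤ} (hm : m0 ∈ M) (t : ℤ)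
    (D : Set (ℤ × ℤ)) (hD : ∀ z, z ∈ D ↔ ∀ a ∈ P, 0 < bv a z t) :
    Set.ncard {S : Finset (ℤ × ℤ) | S.card = q ∧ (∀ z ∈ S, z ∈ D) ∧
      (∀ z ∈ S, ∀ w ∈ S, z ≠ w → ∀ m ∈ M, (z.1 - w.1) * m.2 - (z.2 - w.2) * m.1 ≠ 0)}
    = (SO (q := q) M P m0 t).ncard := by
  classical
  rw [← Set.ncard_image_of_injOn (f := fun z : Fin q → ℤ × ℤ => Finset.univ.image z) (s := SO M P m0 t)]
  · congr 1
    ext S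
    constructor
    · rintro ⟨h1, h2, h3⟩
      have hinj : Set.InjOn (key m0 : ℤ × ℤ → ℤ) S := by
        intro z hz w hw hzw
        by_contra hne
        apply h3 z hz w hw hne m0 hm
        simp only [key, Int.cast_id] at hzw
        linear_combination hzw
      obtain ⟨z, hz, hzS⟩ := exists_sorted (key m0 : ℤ × ℤ → ℤ) S q h1 hinj
      have hmem : ∀ i, z i ∈ S := fun i => by rw [← hzS]; simp
      refine ⟨z, ⟨ok_iff.2 ⟨fun i => (hD _).1 (h2 _ (hmem i)), fun i j hij m hmM => ?_⟩, hz⟩, hzS⟩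
      have := h3 (z j) (hmem j) (z i) (hmem i) (fun e => hij (hz.injective (congrArg _ e)).symm) m hmM
      simpa [hv] using this
    · rintro ⟨z, ⟨h1, h2⟩, rfl⟩
      have hzinj : Function.Injective z := fun i j hij => h2.injective (congrArg (key m0) hij)
      refine ⟨?_, ?_, ?_⟩
      · simp only
        rw [Finset.card_image_of_injective _ hzinj, Finset.card_univ, Fintype.card_fin]
      · intro a ha
        simp only [Finset.mem_image, Finset.mem_univ, true_and] at ha
        obtain ⟨i, rfl⟩ := ha
        exact (hD _).2 (h1.1 i)
      · intro a ha b hb hne m hmM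
        simp only [Finset.mem_image, Finset.mem_univ, true_and] at ha hb
        obtain ⟨i, rfl⟩ := ha
        obtain ⟨j, rfl⟩ := hb
        have := (ok_iff.1 h1).2 j i (fun e => hne (by rw [e])) m hmM
        simpa [hv] using this
  · intro z hz w hw h
    refine sorted_inj (key m0) hz.2 hw.2 ?_
    have := congrArg (fun S : Finset (ℤ × ℤ) => (S : Set (ℤ × ℤ))) h
    simpa using this

end Ehr


namespace Ehr

lemma hv_cont {q : ℕ} (τ : Fin q × Fin q × (ℤ × ℤ)) :
    Continuous fun z : Fin q → ℝ × ℝ => hv τ z := by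
  unfold hv; fun_prop

lemma comp_eq {q : ℕ} (M : Finset (ℤ × ℤ)) (P : Finset (ℤ × ℤ × ℤ)) {z : Fin q → ℝ × ℝ}
    (hz : z ∈ OK M P (1 : ℝ)) :
    connectedComponentIn (OK M P (1 : ℝ)) z = {w | w ∈ OK M P (1 : ℝ) ∧ sg M w = sg M z} := by
  apply Set.Subset.antisymm
  · intro w hw
    have hsub := connectedComponentIn_subset (OK M P (1 : ℝ)) z
    refine ⟨hsub hw, ?_⟩
    have hpre := isPreconnected_connectedComponentIn (x := z) (F := OK M P (1 : ℝ))
    have hzc := mem_connectedComponentIn hz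
    have hkey : ∀ τ ∈ TT q M, ∀ a ∈ connectedComponentIn (OK M P (1 : ℝ)) z,
        ∀ b ∈ connectedComponentIn (OK M P (1 : ℝ)) z, 0 < hv τ a → 0 < hv τ b := by
      intro τ hτ a ha b hb h1
      by_contra h2
      obtain ⟨c, hc, hc0⟩ := hpre.intermediate_value hb ha (hv_cont τ).continuousOn
        (show (0 : ℝ) ∈ Set.Icc (hv τ b) (hv τ a) from ⟨not_lt.1 h2, h1.le⟩)
      exact (hsub hc).2 τ hτ hc0
    ext τ
    simp only [sg, Finset.mem_filter]
    exact and_congr_right fun hτ => ⟨hkey τ hτ w hw z hzc, hkey τ hτ z hzc w hw⟩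
  · refine IsPreconnected.subset_connectedComponentIn (Convex.isPreconnected ?_) ⟨hz, rfl⟩
      fun w hw => hw.1
    have hflat : ∀ w : Fin q → ℝ × ℝ, w ∈ {w | w ∈ OK M P (1 : ℝ) ∧ sg M w = sg M z} ↔
        ∀ C ∈ CC M P (sg M z), 0 < ev C (flat w) 1 :=
      fun w => (mem_cell M P (Finset.filter_subset _ _) w 1).symm
    intro x hx y hy a b ha hb hab
    rw [hflat] at hx hy ⊢
    intro C hC
    have e : flat (a • x + b • y) = a • flat x + b • flat y := by
      funext ⟨i, c⟩; cases c <;> simp [flat]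
    have e2 : ev C (a • flat x + b • flat y) 1 = a * ev C (flat x) 1 + b * ev C (flat y) 1 := by
      simp only [ev, Pi.add_apply, Pi.smul_apply, smul_eq_mul, mul_add, Finset.sum_add_distrib,
        Finset.mul_sum]
      have e3 : (C.2 : ℝ) * 1 = a * ((C.2 : ℝ) * 1) + b * ((C.2 : ℝ) * 1) := by
        rw [← add_mul, hab]; ring
      simp only [mul_left_comm]
      linear_combination e3
    rw [e, e2]
    have h1 := hx C hC
    have h2 := hy C hC
    rcases ha.eq_or_lt with h | h
    · have : b = 1 := by linarith
      rw [← h, this]; linarith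
    · have := mul_pos h h1
      have := mul_nonneg hb h2.le
      linarith

lemma ncard_image_eq {α β γ : Type} (A : Set α) (F : α → β) (G : α → γ)
    (h : ∀ a ∈ A, ∀ b ∈ A, F a = F b ↔ G a = G b) : (F '' A).ncard = (G '' A).ncard := by
  rcases A.eq_empty_or_nonempty with rfl | ⟨a0, _⟩
  · simp
  have : Nonempty α := ⟨a0⟩
  have e : F '' A = (fun c => F (Function.invFunOn G A c)) '' (G '' A) := by
    rw [Set.image_image]
    refine Set.image_congr fun a ha => ?_
    have hm := Function.invFunOn_apply_mem (f := G) ha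
    exact (h _ ha _ hm).2 (Function.invFunOn_apply_eq (f := G) ha).symm
  rw [e]
  refine Set.InjOn.ncard_image ?_
  rintro _ ⟨a, ha, rfl⟩ _ ⟨b, hb, rfl⟩ hab
  have h1 := (h _ (Function.invFunOn_apply_mem (f := G) ha) _ (Function.invFunOn_apply_mem (f := G) hb)).1 hab
  rwa [Function.invFunOn_apply_eq (f := G) ha, Function.invFunOn_apply_eq (f := G) hb] at h1

/-- orbit -/
def orb {q : ℕ} (Ω : Set (Fin q → ℝ × ℝ)) (z : Fin q → ℝ × ℝ) : Set (Set (Fin q → ℝ × ℝ)) :=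
  {C | ∃ σ : Equiv.Perm (Fin q), C = connectedComponentIn Ω (fun i => z (σ i))}

open Classical in
lemma count_orbits {q : ℕ} {M : Finset (ℤ × ℤ)} (P : Finset (ℤ × ℤ × ℤ)) {m0 : ℤ × ℤ} (hm : m0 ∈ M) :
    Set.ncard {O | ∃ z ∈ OK (q := q) M P (1 : ℝ), O = orb (OK M P (1 : ℝ)) z} =
      ((EE q M m0).filter fun ε => (KR (CC M P ε)).Nonempty).card := by
  have e1 : {O | ∃ z ∈ OK (q := q) M P (1 : ℝ), O = orb (OK M P (1 : ℝ)) z} =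
      orb (OK M P (1 : ℝ)) '' SO M P m0 (1 : ℝ) := by
    ext O
    constructor
    · rintro ⟨z, hz, rfl⟩
      set f : Fin q → ℝ := fun i => key m0 (z i) with hf
      have hinj : Function.Injective f := by
        intro i j hij
        by_contra hne
        apply ok_ne hz hne hm
        rw [hv_key]; exact sub_eq_zero.2 hij.symm
      refine ⟨fun i => z (Tuple.sort f i), ⟨ok_perm hz _, ?_⟩, ?_⟩
      · exact (Tuple.monotone_sort f).strictMono_of_injective (hinj.comp (Tuple.sort f).injective)
      · ext C
        constructor
        · rintro ⟨σ, rfl⟩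
          exact ⟨Tuple.sort f * σ, rfl⟩
        · rintro ⟨σ, rfl⟩
          exact ⟨(Tuple.sort f)⁻¹ * σ, by simp⟩
    · rintro ⟨z, hz, rfl⟩
      exact ⟨z, hz.1, rfl⟩
  have e2 : ∀ z ∈ SO (q := q) M P m0 (1 : ℝ), ∀ w ∈ SO (q := q) M P m0 (1 : ℝ),
      orb (OK M P (1 : ℝ)) z = orb (OK M P (1 : ℝ)) w ↔ sg M z = sg M w := by
    intro z hz w hw
    constructor
    · intro h
      have h1 : connectedComponentIn (OK M P (1 : ℝ)) z ∈ orb (OK M P (1 : ℝ)) w := by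
        rw [← h]; exact ⟨1, rfl⟩
      obtain ⟨σ, hσ⟩ := h1
      have h2 : z ∈ connectedComponentIn (OK M P (1 : ℝ)) (fun i => w (σ i)) := by
        rw [← hσ]; exact mem_connectedComponentIn hz.1
      rw [comp_eq M P (ok_perm hw.1 σ)] at h2
      have h3 : StrictMono fun i => key m0 (w (σ i)) := by
        rw [← sorted_iff hm (fun i => w (σ i)), ← h2.2]
        exact (sorted_iff hm z).2 hz.2
      have h4 := sorted_inj (key m0) h3 hw.2 (by
        exact σ.surjective.range_comp w)
      rw [h2.2, h4]
    · intro h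
      have : ∀ σ : Equiv.Perm (Fin q), connectedComponentIn (OK M P (1 : ℝ)) (fun i => z (σ i)) =
          connectedComponentIn (OK M P (1 : ℝ)) (fun i => w (σ i)) := by
        intro σ
        rw [comp_eq M P (ok_perm hz.1 σ), comp_eq M P (ok_perm hw.1 σ), sg_perm hz.1 hw.1 h σ]
      simp only [orb, this]
  rw [e1, ncard_image_eq _ _ (sg M) e2, ← Set.ncard_coe_finset]
  congr 1
  ext ε
  simp only [Finset.coe_filter, Set.mem_image, Set.mem_ofPred_eq]
  constructor
  · rintro ⟨z, hz, rfl⟩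
    refine ⟨(sorted_iff hm z).2 hz.2, flat z, ?_⟩
    exact (cell_KR M P (Finset.filter_subset _ _) z).2 ⟨hz.1, rfl⟩
  · rintro ⟨hε, x, hx⟩
    rw [← flat_unflat x, cell_KR M P (mem_EE.1 hε).1] at hx
    refine ⟨unflat x, ⟨hx.1, ?_⟩, hx.2⟩
    rw [← sorted_iff hm, hx.2]; exact hε

lemma poly_step {W : ℤ → ℚ} (hW : W ∈ QP ℤ) (u : ℕ → ℕ) (hu : ∀ n : ℕ, (u n : ℚ) = W (n + 1))
    (p : ℕ) (hp : 0 < p) (g : ℕ → Polynomial ℚ) (hg : ∀ n : ℕ, (u n : ℚ) = (g (n % p)).eval (n : ℚ)) :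
    W 0 = (g (p - 1)).eval (-1) := by
  obtain ⟨N, hN, Q, hQ⟩ := qp_poly hW
  have heq : (g (p - 1)).comp (Polynomial.C (N * p : ℚ) * Polynomial.X - 1) =
      Q.comp (Polynomial.C (p : ℚ) * Polynomial.X) := by
    apply Polynomial.eq_of_infinite_eval_eq
    refine Set.infinite_of_injective_forall_mem (f := fun k : ℕ => ((k + 1 : ℕ) : ℚ)) ?_ ?_
    · intro a b hab
      simpa using hab
    · intro k
      simp only [Set.mem_ofPred_eq, Polynomial.eval_comp, Polynomial.eval_sub, Polynomial.eval_mul,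
        Polynomial.eval_C, Polynomial.eval_X, Polynomial.eval_one]
      have hpos : 1 ≤ N * p * (k + 1) := Nat.succ_le_of_lt (by positivity)
      obtain ⟨n, hn⟩ : ∃ n, N * p * (k + 1) = n + 1 := ⟨_, (Nat.sub_add_cancel hpos).symm⟩
      have hmod : n % p = p - 1 := by
        obtain ⟨r, rfl⟩ : ∃ r, p = r + 1 := ⟨p - 1, by omega⟩
        have h0 : (n + 1) % (r + 1) = 0 := by
          rw [← hn]; exact Nat.mod_eq_zero_of_dvd ⟨N * (k + 1), by ring⟩
        have h1 : n % (r + 1) < r + 1 := Nat.mod_lt _ (by omega)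
        rw [Nat.add_mod] at h0
        by_contra hne
        have h2 : n % (r + 1) + 1 < r + 1 := by omega
        rcases Nat.eq_zero_or_pos r with rfl | hr
        · omega
        · rw [Nat.mod_eq_of_lt (show 1 < r + 1 by omega), Nat.mod_eq_of_lt h2] at h0
          omega
      have h1 := hg n
      rw [hmod, hu n] at h1
      have h2 := hQ (p * (k + 1))
      have h3 : (n : ℤ) + 1 = N * (p * (k + 1)) := by
        have : ((N * p * (k + 1) : ℕ) : ℤ) = ((n + 1 : ℕ) : ℤ) := by rw [hn]
        push_cast at this; linarith
      rw [h3, h2] at h1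
      have h4 : (n : ℚ) = N * p * ((k + 1 : ℕ) : ℚ) - 1 := by
        have : ((N * p * (k + 1) : ℕ) : ℚ) = ((n + 1 : ℕ) : ℚ) := by rw [hn]
        push_cast at this ⊢; linarith
      rw [← h4, ← h1]
      push_cast; rfl
  have h0 := congrArg (Polynomial.eval 0) heq
  simp only [Polynomial.eval_comp, Polynomial.eval_sub, Polynomial.eval_mul,
    Polynomial.eval_C, Polynomial.eval_X, Polynomial.eval_one, mul_zero, zero_sub] at h0
  rw [h0]
  have := hQ 0
  simpa using this

lemma bd_cells {q : ℕ} {M : Finset (ℤ × ℤ)} (P : Finset (ℤ × ℤ × ℤ)) (I : Set (ℝ × ℝ))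
    (hI : Bornology.IsBounded I) (hP : ∀ x : ℝ × ℝ, x ∈ I ↔ ∀ a ∈ P, 0 < bv a x 1)
    (ε : Finset (Fin q × Fin q × (ℤ × ℤ))) (hε : ε ⊆ TT q M) : Bd (CC M P ε) := by
  obtain ⟨b, hb⟩ := hI.exists_norm_le
  refine ⟨b, fun x hx => ?_⟩
  rw [← flat_unflat x, cell_KR M P hε] at hx
  rintro ⟨i, c⟩
  have h1 := hb _ ((hP _).2 (hx.1.1 i))
  rw [Prod.norm_def] at h1
  have h2 := max_le_iff.1 h1
  cases c
  · exact h2.1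
  · exact h2.2

end Ehr

open Ehr in
theorem stmt_9
    (M : Finset (ℤ × ℤ)) (hMne : M.Nonempty)
    (hMmove : ∀ m ∈ M, m ≠ 0 ∧ Int.gcd m.1 m.2 = 1)
    (hMpar : ∀ m ∈ M, ∀ m' ∈ M, m ≠ m' → m.1 * m'.2 - m.2 * m'.1 ≠ 0)
    (V : Finset (ℝ × ℝ)) (hV : ∀ v ∈ V, ∃ a b : ℚ, v = ((a : ℝ), (b : ℝ)))
    (B : Set (ℝ × ℝ)) (hB : B = convexHull ℝ (V : Set (ℝ × ℝ)))
    (hBint : (interior B).Nonempty)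
    (q : ℕ) (hq : 0 < q)
    (u : ℕ → ℕ)
    (hu : ∀ n : ℕ, u n = Set.ncard {S : Finset (ℤ × ℤ) |
      S.card = q ∧
      (∀ z ∈ S, (((z.1 : ℝ), (z.2 : ℝ)) : ℝ × ℝ) ∈ ((n : ℝ) + 1) • interior B) ∧
      (∀ z ∈ S, ∀ w ∈ S, z ≠ w → ∀ m ∈ M,
        (z.1 - w.1) * m.2 - (z.2 - w.2) * m.1 ≠ 0)})
    (Ω : Set (Fin q → ℝ × ℝ))
    (hΩ : Ω = {z : Fin q → ℝ × ℝ | (∀ i : Fin q, z i ∈ interior B) ∧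
      ∀ i j : Fin q, i ≠ j → ∀ m ∈ M,
        ((z j).1 - (z i).1) * (m.2 : ℝ) - ((z j).2 - (z i).2) * (m.1 : ℝ) ≠ 0})
    (p : ℕ) (hp : 0 < p)
    (g : ℕ → Polynomial ℚ)
    (hg : ∀ n : ℕ, (u n : ℚ) = (g (n % p)).eval (n : ℚ)) :
    (Set.ncard {O : Set (Set (Fin q → ℝ × ℝ)) | ∃ z ∈ Ω,
        O = {C : Set (Fin q → ℝ × ℝ) | ∃ σ : Equiv.Perm (Fin q),
          C = connectedComponentIn Ω (fun i => z (σ i))}} : ℚ)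
      = (g (p - 1)).eval (-1) := by
  classical
  subst hB
  obtain ⟨m0, hm⟩ := hMne
  obtain ⟨P, hP⟩ := halfplanes V hV hBint
  have hP' : ∀ x : ℝ × ℝ, x ∈ interior (convexHull ℝ (V : Set (ℝ × ℝ))) ↔ ∀ a ∈ P, 0 < bv a x 1 := by
    intro x; rw [hP]; simp only [bv, mul_one]
  have hbd : Bornology.IsBounded (interior (convexHull ℝ (V : Set (ℝ × ℝ)))) :=
    ((isBounded_convexHull).2 V.finite_toSet.isBounded).subset interior_subset
  have hΩ' : Ω = OK M P 1 := by
    rw [hΩ]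
    ext z
    rw [ok_iff]
    simp only [Set.mem_ofPred_eq, hP', hv]
  have hb := fun ε hε => bd_cells (q := q) (M := M) P _ hbd hP' ε hε
  have hW : ∀ ε : Finset (Fin q × Fin q × (ℤ × ℤ)), ∃ W ∈ QP ℤ, ε ∈ EE q M m0 →
      ((∀ t : ℤ, 1 ≤ t → ((KZ (CC M P ε) t).ncard : ℚ) = W t) ∧
      W 0 = if (KR (CC M P ε)).Nonempty then 1 else 0) := by
    intro ε
    by_cases hε : ε ∈ EE q M m0
    · obtain ⟨W, h1, h2, h3, h4⟩ := main_fintype _ (hb ε (mem_EE.1 hε).1)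
      refine ⟨W, h1, fun _ => ⟨h2, ?_⟩⟩
      split_ifs with h
      · rw [h3 h]; simp
      · exact h4 h
    · exact ⟨0, (QP ℤ).zero_mem, fun h => absurd h hε⟩
  choose W hWQ hW using hW
  have hsum : (∑ ε ∈ EE q M m0, W ε) ∈ QP ℤ := Subalgebra.sum_mem _ fun ε _ => hWQ ε
  have hu' : ∀ n : ℕ, (u n : ℚ) = (∑ ε ∈ EE q M m0, W ε) (n + 1) := by
    intro n
    have hn : (1 : ℤ) ≤ n + 1 := by omega
    have hD : ∀ z : ℤ × ℤ, z ∈ {z : ℤ × ℤ | (((z.1 : ℝ), (z.2 : ℝ)) : ℝ × ℝ) ∈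
        ((n : ℝ) + 1) • interior (convexHull ℝ (V : Set (ℝ × ℝ)))} ↔
        ∀ a ∈ P, 0 < bv a z ((n : ℤ) + 1) := by
      intro z
      have hpos : (0 : ℝ) < (n : ℝ) + 1 := by positivity
      rw [Set.mem_ofPred_eq, Set.mem_smul_set_iff_inv_smul_mem₀ hpos.ne', hP']
      refine forall₂_congr fun a _ => ?_
      have : bv a (((n : ℝ) + 1)⁻¹ • (((z.1 : ℝ), (z.2 : ℝ)) : ℝ × ℝ)) 1 =
          ((n : ℝ) + 1)⁻¹ * ((bv a z ((n : ℤ) + 1) : ℤ) : ℝ) := by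
        simp only [bv, Prod.smul_mk, smul_eq_mul]
        push_cast
        field_simp
      rw [this, mul_pos_iff_of_pos_left (inv_pos.2 hpos)]
      exact Int.cast_pos
    have h1 := count_sets (q := q) P hm ((n : ℤ) + 1) _ hD
    rw [hu n]
    rw [count_cells P hm hb hn] at h1
    rw [Finset.sum_apply, ← Finset.sum_congr rfl fun ε hε => (hW ε hε).1 _ hn, ← Nat.cast_sum, ← h1]
    rfl
  rw [← poly_step hsum u hu' p hp g hg, Finset.sum_apply, Finset.sum_congr rfl fun ε hε => (hW ε hε).2,
    Finset.sum_boole, ← count_orbits P hm, hΩ']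
  rfl
end

section
/- Suppose |M| ≥ 2. Let t be a positive integer and let z = (z_1, …, z_q) and z' = (z'_1, …, z'_q) be points of (t·B°)^q ∩ (ℤ²)^q lying on no hyperplane of the move arrangement A_P^q and having the same sign vector (i.e., lying in the same connected component of (t·B°)^q \ ⋃A_P^q). Then there exist a positive integer τ and a finite sequence w_0 = z, w_1, …, w_l = z' of points of (t·B°)^q with all coordinates in (1/τ)ℤ, such that every w_s lies on no move hyperplane and has the same sign vector as z, and for each s the difference w_{s+1} − w_s is zero in all but one of the q coordinate pairs and in that coordinate pair equals a rational scalar multiple of some basic move m ∈ M. (Discrete isotopy, allowing refinement of the lattice, produces the same equivalence relation on nonattacking configurations as continuous isotopy.) -/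
open MeasureTheory Pointwise


/-- number of times `j < s` with `j % P = r`. -/
def stepCount (P r s : ℕ) : ℕ := (s + (P - 1 - r)) / P

lemma stepCount_zero (P r : ℕ) (hr : r < P) : stepCount P r 0 = 0 := by
  unfold stepCount
  exact Nat.div_eq_of_lt (by omega)

lemma stepCount_full (P r N : ℕ) (hr : r < P) : stepCount P r (N * P) = N := by
  unfold stepCount
  rw [add_comm, Nat.add_mul_div_right _ _ (by omega), Nat.div_eq_of_lt (by omega), zero_add]

lemma stepCount_succ_ne (P r s : ℕ) (hr : r < P) (h : s % P ≠ r) :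
    stepCount P r (s + 1) = stepCount P r s := by
  unfold stepCount
  have hs := Nat.div_add_mod s P
  have hlt := Nat.mod_lt s (show 0 < P by omega)
  rcases lt_or_gt_of_ne h with h1 | h1
  · have e1 : s + 1 + (P - 1 - r) = (s % P + 1 + (P - 1 - r)) + P * (s / P) := by omega
    have e2 : s + (P - 1 - r) = (s % P + (P - 1 - r)) + P * (s / P) := by omega
    rw [e1, e2, Nat.add_mul_div_left _ _ (by omega), Nat.add_mul_div_left _ _ (by omega),
      Nat.div_eq_of_lt (show s % P + 1 + (P - 1 - r) < P by omega),
      Nat.div_eq_of_lt (show s % P + (P - 1 - r) < P by omega)]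
  · have e1 : s + 1 + (P - 1 - r) = (s % P - r) + P * (s / P + 1) := by
      rw [mul_add]; omega
    have e2 : s + (P - 1 - r) = (s % P - r - 1) + P * (s / P + 1) := by
      rw [mul_add]; omega
    rw [e1, e2, Nat.add_mul_div_left _ _ (by omega), Nat.add_mul_div_left _ _ (by omega),
      Nat.div_eq_of_lt (show s % P - r < P by omega),
      Nat.div_eq_of_lt (show s % P - r - 1 < P by omega)]

lemma stepCount_bound (P r s N : ℕ) (hr : r < P) (hN : 0 < N) :
    |(stepCount P r s : ℝ) / N - (s : ℝ) / (N * P)| ≤ 1 / N := by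
  have h1 : stepCount P r s * P ≤ s + P := by
    unfold stepCount
    have := Nat.div_mul_le_self (s + (P - 1 - r)) P
    omega
  have h2 : s ≤ stepCount P r s * P + P := by
    unfold stepCount
    have := Nat.lt_div_mul_add (a := s + (P - 1 - r)) (b := P) (by omega)
    omega
  have h1' : (stepCount P r s : ℝ) * P ≤ s + P := by exact_mod_cast h1
  have h2' : (s : ℝ) ≤ stepCount P r s * P + P := by exact_mod_cast h2
  have hP : (0 : ℝ) < P := by exact_mod_cast (show 0 < P by omega)
  have hN' : (0 : ℝ) < N := by exact_mod_cast hN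
  have e : (stepCount P r s : ℝ) / N - (s : ℝ) / (N * P)
      = (stepCount P r s * P - s) / (N * P) := by field_simp
  rw [e, abs_div, abs_of_pos (mul_pos hN' hP), div_le_div_iff₀ (mul_pos hN' hP) hN', one_mul]
  have : |(stepCount P r s : ℝ) * P - s| ≤ P := abs_le.2 ⟨by linarith, by linarith⟩
  nlinarith

lemma exists_two_moves (M : Finset (ℤ × ℤ)) (hMcard : 2 ≤ M.card)
    (hMpar : ∀ m ∈ M, ∀ m' ∈ M, m ≠ m' → m.1 * m'.2 - m.2 * m'.1 ≠ 0) :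
    ∃ m ∈ M, ∃ n ∈ M, ∃ d : ℕ, 0 < d ∧ m.1 * n.2 - m.2 * n.1 = d := by
  obtain ⟨m, hm, n, hn, hne⟩ := Finset.one_lt_card.1 hMcard
  have h := hMpar m hm n hn hne
  rcases lt_or_gt_of_ne h with h | h
  · refine ⟨n, hn, m, hm, (n.1 * m.2 - n.2 * m.1).toNat, ?_, ?_⟩
    · have : 0 < n.1 * m.2 - n.2 * m.1 := by linarith
      omega
    · have : 0 < n.1 * m.2 - n.2 * m.1 := by linarith
      omega
  · refine ⟨m, hm, n, hn, (m.1 * n.2 - m.2 * n.1).toNat, ?_, ?_⟩ <;> omega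

/-- if `|M| ≥ 2`, two integral nonattacking configurations on `t·B°` with the
same sign vector are connected by a discrete isotopy on a refined lattice `(1/τ)ℤ²`:
a sequence of single-piece moves along basic move directions, staying nonattacking with the
same sign vector throughout. -/
theorem stmt_10
    (M : Finset (ℤ × ℤ)) (hMcard : 2 ≤ M.card)
    (hMmove : ∀ m ∈ M, m ≠ 0 ∧ Int.gcd m.1 m.2 = 1)
    (hMpar : ∀ m ∈ M, ∀ m' ∈ M, m ≠ m' → m.1 * m'.2 - m.2 * m'.1 ≠ 0)
    (V : Finset (ℝ × ℝ)) (hV : ∀ v ∈ V, ∃ a b : ℚ, v = ((a : ℝ), (b : ℝ)))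
    (B : Set (ℝ × ℝ)) (hB : B = convexHull ℝ (V : Set (ℝ × ℝ)))
    (hBint : (interior B).Nonempty)
    (q : ℕ) (hq : 0 < q)
    (t : ℕ) (ht : 0 < t)
    (z z' : Fin q → ℤ × ℤ)
    (hzB : ∀ i : Fin q, ((((z i).1 : ℝ), ((z i).2 : ℝ)) : ℝ × ℝ) ∈ (t : ℝ) • interior B)
    (hz'B : ∀ i : Fin q, ((((z' i).1 : ℝ), ((z' i).2 : ℝ)) : ℝ × ℝ) ∈ (t : ℝ) • interior B)
    -- z and z' lie on no move hyperplane and have the same sign vector: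
    (hsign : ∀ i j : Fin q, i ≠ j → ∀ m ∈ M,
      (((z j).1 - (z i).1) * m.2 - ((z j).2 - (z i).2) * m.1) *
        (((z' j).1 - (z' i).1) * m.2 - ((z' j).2 - (z' i).2) * m.1) > 0) :
    ∃ τ : ℕ, 0 < τ ∧ ∃ l : ℕ, ∃ w : ℕ → Fin q → ℝ × ℝ,
      (w 0 = fun i => (((z i).1 : ℝ), ((z i).2 : ℝ))) ∧
      (w l = fun i => (((z' i).1 : ℝ), ((z' i).2 : ℝ))) ∧
      -- each configuration has coordinates in (1/τ)ℤ and lies in t·B°: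
      (∀ s ≤ l, ∀ i : Fin q,
        (∃ a b : ℤ, w s i = ((a : ℝ) / (τ : ℝ), (b : ℝ) / (τ : ℝ))) ∧
        w s i ∈ (t : ℝ) • interior B) ∧
      -- each configuration avoids the move hyperplanes and has the same sign vector as z:
      (∀ s ≤ l, ∀ i j : Fin q, i ≠ j → ∀ m ∈ M,
        (((w s j).1 - (w s i).1) * (m.2 : ℝ) - ((w s j).2 - (w s i).2) * (m.1 : ℝ)) *
          ((((z j).1 : ℝ) - ((z i).1 : ℝ)) * (m.2 : ℝ)
            - (((z j).2 : ℝ) - ((z i).2 : ℝ)) * (m.1 : ℝ)) > 0) ∧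
      -- each step moves a single piece along a rational multiple of a basic move:
      (∀ s < l, ∃ i₀ : Fin q,
        (∀ i : Fin q, i ≠ i₀ → w (s + 1) i = w s i) ∧
        ∃ m ∈ M, ∃ c : ℚ,
          w (s + 1) i₀ - w s i₀ = (c : ℝ) • (((m.1 : ℝ), (m.2 : ℝ)) : ℝ × ℝ)) := by
  obtain ⟨m, hm, n, hn, d, hd, hdet⟩ := exists_two_moves M hMcard hMpar
  have hdR : (0 : ℝ) < d := by exact_mod_cast hd
  have hdetR : (m.1 : ℝ) * n.2 - m.2 * n.1 = d := by exact_mod_cast hdet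
  set U : Set (ℝ × ℝ) := (t : ℝ) • interior B with hU
  have htR : (t : ℝ) ≠ 0 := by exact_mod_cast ht.ne'
  have hUo : IsOpen U := isOpen_interior.smul₀ htR
  have hUc : Convex ℝ U := by
    have : Convex ℝ B := hB ▸ convex_convexHull ℝ _
    exact this.interior.smul _
  set Z : Fin q → ℝ × ℝ := fun i => (((z i).1 : ℝ), ((z i).2 : ℝ)) with hZ
  set Z' : Fin q → ℝ × ℝ := fun i => (((z' i).1 : ℝ), ((z' i).2 : ℝ)) with hZ'
  let S : Set (Fin q → ℝ × ℝ) := {w | (∀ i, w i ∈ U) ∧ ∀ i j : Fin q, ∀ _ : i ≠ j, ∀ m ∈ M,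
    (((w j).1 - (w i).1) * (m.2 : ℝ) - ((w j).2 - (w i).2) * (m.1 : ℝ)) *
          ((((z j).1 : ℝ) - ((z i).1 : ℝ)) * (m.2 : ℝ)
            - (((z j).2 : ℝ) - ((z i).2 : ℝ)) * (m.1 : ℝ)) > 0}
  have hSo : IsOpen S := by
    simp only [S, Set.ofPred_and, Set.ofPred_forall]
    apply IsOpen.inter
    · exact isOpen_iInter_of_finite fun i => hUo.preimage (continuous_apply i)
    · refine isOpen_iInter_of_finite fun i => isOpen_iInter_of_finite fun j =>
        isOpen_iInter_of_finite fun _ => isOpen_biInter_finset fun m _ => ?_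
      exact isOpen_lt continuous_const (by fun_prop)
  let p : ℝ → Fin q → ℝ × ℝ := fun θ => (1 - θ) • Z + θ • Z'
  have hpc : Continuous p := by fun_prop
  have hpS : p '' Set.Icc 0 1 ⊆ S := by
    rintro _ ⟨θ, ⟨h0, h1⟩, rfl⟩
    refine ⟨fun i => ?_, fun i j hij m hm => ?_⟩
    · exact hUc (hzB i) (hz'B i) (by linarith) h0 (by ring)
    · have h := hsign i j hij m hm
      have h' : (((z j).1 - (z i).1 : ℝ) * m.2 - ((z j).2 - (z i).2) * m.1) *
        (((z' j).1 - (z' i).1) * m.2 - ((z' j).2 - (z' i).2) * m.1) > 0 := by exact_mod_cast h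
      simp only [p, Pi.add_apply, Pi.smul_apply, Prod.fst_add, Prod.snd_add, Prod.smul_fst,
        Prod.smul_snd, smul_eq_mul, hZ, hZ']
      set A := (((z j).1 - (z i).1 : ℝ) * m.2 - ((z j).2 - (z i).2) * m.1) with hA
      set A' := (((z' j).1 - (z' i).1 : ℝ) * m.2 - ((z' j).2 - (z' i).2) * m.1) with hA'
      have hA0 : A ≠ 0 := by rintro h0; rw [h0] at h'; simp at h'
      have hA2 : 0 < A * A := mul_self_pos.2 hA0
      have e : (((1 - θ) * ((z j).1 : ℝ) + θ * (z' j).1 - ((1 - θ) * (z i).1 + θ * (z' i).1)) * m.2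
        - ((1 - θ) * ((z j).2 : ℝ) + θ * (z' j).2 - ((1 - θ) * (z i).2 + θ * (z' i).2)) * m.1) * A
        = (1 - θ) * (A * A) + θ * (A * A') := by rw [hA, hA']; ring
      rw [e]
      rcases eq_or_lt_of_le h0 with h0 | h0
      · rw [← h0]; linarith
      · have := mul_pos h0 h'
        have := mul_nonneg (sub_nonneg.2 h1) hA2.le
        linarith
  obtain ⟨δ, hδ, hδS⟩ := (isCompact_Icc.image hpc).exists_thickening_subset_open hSo hpS
  -- coefficients
  let a : Fin q → ℤ := fun i => ((z' i).1 - (z i).1) * n.2 - ((z' i).2 - (z i).2) * n.1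
  let b : Fin q → ℤ := fun i => m.1 * ((z' i).2 - (z i).2) - m.2 * ((z' i).1 - (z i).1)
  let mR : ℝ × ℝ := ((m.1 : ℝ), (m.2 : ℝ))
  let nR : ℝ × ℝ := ((n.1 : ℝ), (n.2 : ℝ))
  have hab : ∀ i, Z' i - Z i = ((a i : ℝ) / d) • mR + ((b i : ℝ) / d) • nR := by
    intro i
    apply Prod.ext
    · simp only [hZ, hZ', mR, nR, a, b, Prod.fst_sub, Prod.fst_add, Prod.smul_fst, smul_eq_mul]
      push_cast
      field_simp
      rw [← hdetR]; ring
    · simp only [hZ, hZ', mR, nR, a, b, Prod.snd_sub, Prod.snd_add, Prod.smul_snd, smul_eq_mul]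
      push_cast
      field_simp
      rw [← hdetR]; ring
  let k : Fin q → ℝ := fun i => |(a i : ℝ) / d| * ‖mR‖ + |(b i : ℝ) / d| * ‖nR‖
  have hk0 : ∀ i, 0 ≤ k i := fun i => by positivity
  let K : ℝ := ∑ i, k i
  have hkK : ∀ i, k i ≤ K := fun i =>
    Finset.single_le_sum (fun i _ => hk0 i) (Finset.mem_univ i)
  have hK0 : 0 ≤ K := Finset.sum_nonneg fun i _ => hk0 i
  obtain ⟨N, hN⟩ := exists_nat_gt (K / δ)
  have hNR : (0 : ℝ) < N := lt_of_le_of_lt (by positivity) hN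
  have hN0 : 0 < N := by exact_mod_cast hNR
  have hKN : K / N < δ := by
    rw [div_lt_iff₀ hδ] at hN
    rw [div_lt_iff₀ hNR]; linarith
  let P := 2 * q
  have hPR : (0 : ℝ) < P := by exact_mod_cast (show 0 < P by simp only [P]; omega)
  have hr0 : ∀ i : Fin q, 2 * (i : ℕ) < P := fun i => by have := i.2; simp only [P]; omega
  have hr1 : ∀ i : Fin q, 2 * (i : ℕ) + 1 < P := fun i => by have := i.2; simp only [P]; omega
  let c0 : ℕ → Fin q → ℕ := fun s i => stepCount P (2 * i) s
  let c1 : ℕ → Fin q → ℕ := fun s i => stepCount P (2 * i + 1) s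
  let w : ℕ → Fin q → ℝ × ℝ := fun s i =>
    Z i + (((c0 s i : ℝ) / N * ((a i : ℝ) / d)) • mR + ((c1 s i : ℝ) / N * ((b i : ℝ) / d)) • nR)
  have hwS : ∀ s ≤ N * P, w s ∈ S := by
    intro s hs
    apply hδS
    rw [Metric.mem_thickening_iff]
    let θ : ℝ := (s : ℝ) / (N * P)
    have hθ1 : θ ≤ 1 := by
      rw [div_le_one (by positivity)]; exact_mod_cast hs
    refine ⟨p θ, ⟨θ, ⟨by positivity, hθ1⟩, rfl⟩, ?_⟩
    refine lt_of_le_of_lt ?_ hKN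
    rw [dist_pi_le_iff (by positivity)]
    intro i
    rw [dist_eq_norm]
    have hp : p θ i = Z i + θ • (Z' i - Z i) := by
      simp only [p, Pi.add_apply, Pi.smul_apply]
      module
    have e : w s i - p θ i = (((c0 s i : ℝ) / N - θ) * ((a i : ℝ) / d)) • mR
        + (((c1 s i : ℝ) / N - θ) * ((b i : ℝ) / d)) • nR := by
      rw [hp, hab]
      simp only [w]
      module
    rw [e]
    have b0 : |(c0 s i : ℝ) / N - θ| ≤ 1 / N := stepCount_bound P _ s N (hr0 i) hN0
    have b1 : |(c1 s i : ℝ) / N - θ| ≤ 1 / N := stepCount_bound P _ s N (hr1 i) hN0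
    calc _ ≤ _ := norm_add_le _ _
      _ = |(c0 s i : ℝ) / N - θ| * (|(a i : ℝ) / d| * ‖mR‖)
        + |(c1 s i : ℝ) / N - θ| * (|(b i : ℝ) / d| * ‖nR‖) := by
        rw [norm_smul, norm_smul, Real.norm_eq_abs, Real.norm_eq_abs, abs_mul, abs_mul]; ring
      _ ≤ 1 / N * (|(a i : ℝ) / d| * ‖mR‖) + 1 / N * (|(b i : ℝ) / d| * ‖nR‖) := by gcongr
      _ = k i / N := by simp only [k]; ring
      _ ≤ K / N := by gcongr; exact hkK i
  refine ⟨N * d, Nat.mul_pos hN0 hd, N * P, w, ?_, ?_, ?_, ?_, ?_⟩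
  · funext i
    simp only [w, c0, c1, stepCount_zero P _ (hr0 i), stepCount_zero P _ (hr1 i)]
    simp [hZ]
  · funext i
    have h := hab i
    simp only [w, c0, c1, stepCount_full P _ N (hr0 i), stepCount_full P _ N (hr1 i)]
    rw [div_self hNR.ne', one_mul, one_mul, ← h]
    simp [hZ']
  · intro s hs i
    refine ⟨⟨(z i).1 * (N * d) + c0 s i * a i * m.1 + c1 s i * b i * n.1,
      (z i).2 * (N * d) + c0 s i * a i * m.2 + c1 s i * b i * n.2, ?_⟩, (hwS s hs).1 i⟩
    apply Prod.ext
    · simp only [w, hZ, mR, nR, Prod.fst_add, Prod.smul_fst, smul_eq_mul]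
      push_cast
      field_simp
      try ring
    · simp only [w, hZ, mR, nR, Prod.snd_add, Prod.smul_snd, smul_eq_mul]
      push_cast
      field_simp
      try ring
  · intro s hs i j hij m hm
    exact (hwS s hs).2 i j hij m hm
  · intro s hs
    have hlt : s % P < P := Nat.mod_lt _ (by simp only [P]; omega)
    refine ⟨⟨s % P / 2, by simp only [P] at hlt ⊢; omega⟩, ?_, ?_⟩
    · intro i hi
      have hi' : (i : ℕ) ≠ s % P / 2 := fun h => hi (Fin.ext h)
      simp only [w, c0, c1]
      rw [stepCount_succ_ne P _ s (hr0 i) (by omega), stepCount_succ_ne P _ s (hr1 i) (by omega)]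
    · generalize hi0 : (⟨s % P / 2, _⟩ : Fin q) = i
      have hi' : (i : ℕ) = s % P / 2 := by rw [← hi0]
      rcases Nat.mod_two_eq_zero_or_one (s % P) with h | h
      · refine ⟨m, hm, ((c0 (s + 1) i : ℚ) - c0 s i) / N * ((a i : ℚ) / d), ?_⟩
        have e : c1 (s + 1) i = c1 s i := stepCount_succ_ne P _ s (hr1 i) (by omega)
        simp only [w, e]
        push_cast
        change _ = _ • mR
        module
      · refine ⟨n, hn, ((c1 (s + 1) i : ℚ) - c1 s i) / N * ((b i : ℚ) / d), ?_⟩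
        have e : c0 (s + 1) i = c0 s i := stepCount_succ_ne P _ s (hr0 i) (by omega)
        simp only [w, e]
        push_cast
        change _ = _ • nR
        module
end

section
/- For q = 1, the number of nonattacking configuration types is 1: B° itself is connected. For q = 2, the number of connected components of (B°)² \ ⋃_{m ∈ M} H^m_{12} equals 2·|M|; consequently the number of unlabelled nonattacking configuration types of two pieces equals |M|, the number of basic moves. -/
open MeasureTheory

namespace TwoPieces

/-- the move form -/
def ff (z : (ℝ × ℝ) × (ℝ × ℝ)) (m : ℤ × ℤ) : ℝ :=
  (z.2.1 - z.1.1) * (m.2 : ℝ) - (z.2.2 - z.1.2) * (m.1 : ℝ)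

/-- determinant with diagonal replaced by one -/
def dd (m m' : ℤ × ℤ) : ℝ :=
  if m' = m then 1 else (m.1 : ℝ) * m'.2 - (m.2 : ℝ) * m'.1

/-- the sign region with label (m, s) -/
def RR (M : Finset (ℤ × ℤ)) (z : (ℝ × ℝ) × (ℝ × ℝ)) (m : ℤ × ℤ) (s : ℤ) : Prop :=
  ∀ m' ∈ M, 0 < ff z m' * ((s : ℝ) * dd m m')

lemma ff_cont (m : ℤ × ℤ) : Continuous (fun z => ff z m) := by
  unfold ff; fun_prop

lemma ff_swap (z : (ℝ × ℝ) × (ℝ × ℝ)) (m : ℤ × ℤ) : ff (z.2, z.1) m = - ff z m := by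
  simp only [ff]; ring

lemma RR_swap {M : Finset (ℤ × ℤ)} {z : (ℝ × ℝ) × (ℝ × ℝ)} {m : ℤ × ℤ} {s : ℤ}
    (h : RR M z m s) : RR M (z.2, z.1) m (-s) := by
  intro m' hm'
  have := h m' hm'
  rw [ff_swap]
  push_cast
  linarith

lemma dd_ne {M : Finset (ℤ × ℤ)}
    (hMpar : ∀ m ∈ M, ∀ m' ∈ M, m ≠ m' → m.1 * m'.2 - m.2 * m'.1 ≠ 0)
    {m m' : ℤ × ℤ} (hm : m ∈ M) (hm' : m' ∈ M) : dd m m' ≠ 0 := by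
  unfold dd
  split_ifs with h
  · norm_num
  · have := hMpar m hm m' hm' (Ne.symm h)
    exact_mod_cast this

lemma exists_label {M : Finset (ℤ × ℤ)} (hMne : M.Nonempty)
    (hMpar : ∀ m ∈ M, ∀ m' ∈ M, m ≠ m' → m.1 * m'.2 - m.2 * m'.1 ≠ 0)
    {z : (ℝ × ℝ) × (ℝ × ℝ)} (hz : ∀ m ∈ M, ff z m ≠ 0) :
    ∃ m ∈ M, ∃ s : ℤ, (s = 1 ∨ s = -1) ∧ RR M z m s := by
  obtain ⟨m, hm, hmax⟩ := M.exists_max_image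
    (fun m => ((z.2.1 - z.1.1) * (m.1 : ℝ) + (z.2.2 - z.1.2) * (m.2 : ℝ)) / ff z m) hMne
  have key : ∀ m' ∈ M, 0 < ff z m * ff z m' * dd m m' := by
    intro m' hm'
    by_cases h : m' = m
    · subst h
      have := hz m' hm
      simp only [dd, if_true, mul_one]
      exact mul_self_pos.2 this
    · have h1 := hmax m' hm'
      have hd := dd_ne hMpar hm hm'
      have a0 := hz m hm
      have b0 := hz m' hm'
      have hne : ff z m * ff z m' * dd m m' ≠ 0 := mul_ne_zero (mul_ne_zero a0 b0) hd
      refine lt_of_le_of_ne ?_ hne.symm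
      have hv : 0 < (z.2.1 - z.1.1)^2 + (z.2.2 - z.1.2)^2 := by
        by_contra hc
        have hx : (z.2.1 - z.1.1) = 0 := by nlinarith [sq_nonneg (z.2.1 - z.1.1), sq_nonneg (z.2.2 - z.1.2)]
        have hy : (z.2.2 - z.1.2) = 0 := by nlinarith [sq_nonneg (z.2.1 - z.1.1), sq_nonneg (z.2.2 - z.1.2)]
        apply a0
        simp [ff, hx, hy]
      have h2 : 0 ≤ ((z.2.1 - z.1.1)^2 + (z.2.2 - z.1.2)^2) * (ff z m * ff z m' * dd m m') := by
        have e : ((z.2.1 - z.1.1)^2 + (z.2.2 - z.1.2)^2) * (ff z m * ff z m' * dd m m')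
          = (((z.2.1 - z.1.1) * (m.1 : ℝ) + (z.2.2 - z.1.2) * (m.2 : ℝ)) / ff z m
            - ((z.2.1 - z.1.1) * (m'.1 : ℝ) + (z.2.2 - z.1.2) * (m'.2 : ℝ)) / ff z m')
              * ((ff z m)^2 * (ff z m')^2) := by
          rw [div_sub_div _ _ a0 b0, div_mul_eq_mul_div, eq_div_iff (mul_ne_zero a0 b0)]
          simp only [dd, if_neg h, ff]
          ring
        rw [e]
        apply mul_nonneg
        · linarith
        · positivity
      exact nonneg_of_mul_nonneg_right h2 hv
  rcases lt_or_gt_of_ne (hz m hm) with h | h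
  · refine ⟨m, hm, -1, Or.inr rfl, fun m' hm' => ?_⟩
    have := key m' hm'
    push_cast
    by_contra hc
    push Not at hc
    nlinarith
  · refine ⟨m, hm, 1, Or.inl rfl, fun m' hm' => ?_⟩
    have := key m' hm'
    push_cast
    by_contra hc
    push Not at hc
    nlinarith

open Filter Topology in
lemma exists_point {M : Finset (ℤ × ℤ)}
    (hMmove : ∀ m ∈ M, m ≠ 0 ∧ Int.gcd m.1 m.2 = 1)
    (hMpar : ∀ m ∈ M, ∀ m' ∈ M, m ≠ m' → m.1 * m'.2 - m.2 * m'.1 ≠ 0)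
    {U : Set (ℝ × ℝ)} (hU : IsOpen U) {p : ℝ × ℝ} (hp : p ∈ U)
    {m : ℤ × ℤ} (hm : m ∈ M) {s : ℤ} (hs : s = 1 ∨ s = -1) :
    ∃ z : (ℝ × ℝ) × (ℝ × ℝ), z.1 ∈ U ∧ z.2 ∈ U ∧ RR M z m s := by
  have hs2 : (s : ℝ) * s = 1 := by rcases hs with rfl | rfl <;> norm_num
  -- the perturbed direction
  have h1 : ∀ m' ∈ M, ∀ᶠ ε in 𝓝[>] (0:ℝ),
      0 < (((m.1 : ℝ) + ε * m.2) * m'.2 - ((m.2 : ℝ) - ε * m.1) * m'.1) * dd m m' := by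
    intro m' hm'
    by_cases h : m' = m
    · subst h
      filter_upwards [self_mem_nhdsWithin] with ε hε
      have hε : 0 < ε := hε
      simp only [dd, if_true, mul_one]
      have h0 := (hMmove m' hm).1
      have hpos : 0 < (m'.1 : ℝ)^2 + (m'.2 : ℝ)^2 := by
        by_contra hc
        apply h0
        have hx : (m'.1 : ℝ) = 0 := by nlinarith [sq_nonneg (m'.1 : ℝ), sq_nonneg (m'.2 : ℝ)]
        have hy : (m'.2 : ℝ) = 0 := by nlinarith [sq_nonneg (m'.1 : ℝ), sq_nonneg (m'.2 : ℝ)]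
        exact Prod.ext (by exact_mod_cast hx) (by exact_mod_cast hy)
      have := mul_pos hε hpos
      nlinarith
    · apply Filter.Eventually.filter_mono nhdsWithin_le_nhds
      have hc : Continuous fun ε : ℝ =>
        (((m.1 : ℝ) + ε * m.2) * m'.2 - ((m.2 : ℝ) - ε * m.1) * m'.1) * dd m m' := by fun_prop
      apply hc.continuousAt.eventually (lt_mem_nhds _)
      have hd := dd_ne hMpar hm hm'
      have e : (((m.1 : ℝ) + 0 * m.2) * m'.2 - ((m.2 : ℝ) - 0 * m.1) * m'.1) * dd m m'
        = dd m m' * dd m m' := by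
        simp only [dd, if_neg h]; ring
      beta_reduce; rw [e]
      exact mul_self_pos.2 hd
  obtain ⟨ε, hε⟩ := ((Filter.eventually_all_finset M).2 h1).exists
  have h2 : ∀ᶠ δ in 𝓝[>] (0:ℝ),
      (p.1 + δ * (s * ((m.1 : ℝ) + ε * m.2)), p.2 + δ * (s * ((m.2 : ℝ) - ε * m.1))) ∈ U := by
    apply Filter.Eventually.filter_mono nhdsWithin_le_nhds
    have hc : Continuous fun δ : ℝ =>
      (p.1 + δ * (s * ((m.1 : ℝ) + ε * m.2)), p.2 + δ * (s * ((m.2 : ℝ) - ε * m.1))) := by fun_prop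
    apply hc.continuousAt.eventually (hU.mem_nhds _)
    simpa using hp
  obtain ⟨δ, hδU, hδ⟩ := (h2.and self_mem_nhdsWithin).exists
  have hδ : 0 < δ := hδ
  refine ⟨(p, _), hp, hδU, fun m' hm' => ?_⟩
  have := mul_pos hδ (hε m' hm')
  have e : ff (p, (p.1 + δ * (s * ((m.1 : ℝ) + ε * m.2)), p.2 + δ * (s * ((m.2 : ℝ) - ε * m.1)))) m'
      * ((s : ℝ) * dd m m')
      = (δ * ((((m.1 : ℝ) + ε * m.2) * m'.2 - ((m.2 : ℝ) - ε * m.1) * m'.1) * dd m m')) * (s * s) := by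
    simp only [ff]; ring
  rw [e, hs2, mul_one]
  exact this

lemma label_unique {M : Finset (ℤ × ℤ)} {z w : (ℝ × ℝ) × (ℝ × ℝ)}
    {m m' : ℤ × ℤ} {s s' : ℤ} (hm : m ∈ M) (hm' : m' ∈ M)
    (hs : s = 1 ∨ s = -1) (hs' : s' = 1 ∨ s' = -1)
    (hz : RR M z m s) (hw : RR M w m' s')
    (h : ∀ k ∈ M, 0 < ff z k * ff w k) : m = m' ∧ s = s' := by
  by_cases e : m = m'
  · refine ⟨e, ?_⟩
    subst e
    have a := hz m hm
    have b := hw m hm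
    have c := h m hm
    simp only [dd, if_true, mul_one] at a b
    rcases hs with rfl | rfl <;> rcases hs' with rfl | rfl <;> first | rfl | (exfalso; push_cast at a b; nlinarith)
  · exfalso
    have a := mul_pos (hz m hm) (hz m' hm')
    have b := mul_pos (hw m hm) (hw m' hm')
    have c := mul_pos (h m hm) (h m' hm')
    have d := mul_pos c (mul_pos a b)
    simp only [dd, if_true, if_neg e, if_neg (Ne.symm e)] at d
    have : ff z m * ff w m * (ff z m' * ff w m') *
      (ff z m * (↑s * 1) * (ff z m' * (↑s * (↑m.1 * ↑m'.2 - ↑m.2 * ↑m'.1))) *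
        (ff w m * (↑s' * (↑m'.1 * ↑m.2 - ↑m'.2 * ↑m.1)) * (ff w m' * (↑s' * 1))))
      = - ((ff z m * ff w m * (ff z m' * ff w m')) * s * s' * (↑m.1 * ↑m'.2 - ↑m.2 * ↑m'.1))^2 := by
      ring
    rw [this] at d
    nlinarith [sq_nonneg ((ff z m * ff w m * (ff z m' * ff w m')) * s * s' * (↑m.1 * ↑m'.2 - ↑m.2 * ↑m'.1))]

/-- the open configuration space -/
def Om (M : Finset (ℤ × ℤ)) (U : Set (ℝ × ℝ)) : Set ((ℝ × ℝ) × (ℝ × ℝ)) :=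
  {z | z.1 ∈ U ∧ z.2 ∈ U ∧ ∀ m ∈ M, ff z m ≠ 0}

lemma mem_Om {M : Finset (ℤ × ℤ)} {U : Set (ℝ × ℝ)} {z : (ℝ × ℝ) × (ℝ × ℝ)} {m : ℤ × ℤ} {s : ℤ}
    (h1 : z.1 ∈ U) (h2 : z.2 ∈ U) (h : RR M z m s) : z ∈ Om M U := by
  refine ⟨h1, h2, fun k hk h0 => ?_⟩
  have := h k hk
  simp [h0] at this

lemma Om_swap {M : Finset (ℤ × ℤ)} {U : Set (ℝ × ℝ)} {z : (ℝ × ℝ) × (ℝ × ℝ)}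
    (h : z ∈ Om M U) : (z.2, z.1) ∈ Om M U := by
  refine ⟨h.2.1, h.1, fun k hk => ?_⟩
  rw [ff_swap]
  exact neg_ne_zero.2 (h.2.2 k hk)

lemma comp_eq {M : Finset (ℤ × ℤ)} {U : Set (ℝ × ℝ)} (hU : Convex ℝ U)
    {z w : (ℝ × ℝ) × (ℝ × ℝ)} (hz : z ∈ Om M U) (hw : w ∈ Om M U)
    {m : ℤ × ℤ} {s : ℤ} (h1 : RR M z m s) (h2 : RR M w m s) :
    connectedComponentIn (Om M U) z = connectedComponentIn (Om M U) w := by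
  have hT : Convex ℝ {z : (ℝ × ℝ) × (ℝ × ℝ) | z.1 ∈ U ∧ z.2 ∈ U ∧ RR M z m s} := by
    intro x hx y hy a b ha hb hab
    refine ⟨hU hx.1 hy.1 ha hb hab, hU hx.2.1 hy.2.1 ha hb hab, fun k hk => ?_⟩
    have p := hx.2.2 k hk
    have q := hy.2.2 k hk
    have e : ff (a • x + b • y) k = a * ff x k + b * ff y k := by
      simp only [ff, Prod.fst_add, Prod.snd_add, Prod.smul_fst, Prod.smul_snd, smul_eq_mul]; ring
    rw [e, add_mul, mul_assoc, mul_assoc]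
    rcases ha.eq_or_lt with rfl | ha
    · have : b = 1 := by linarith
      subst this; simpa using q
    · have := mul_pos ha p
      have := mul_nonneg hb q.le
      linarith
  apply connectedComponentIn_eq
  refine hT.isPreconnected.subset_connectedComponentIn ⟨hz.1, hz.2.1, h1⟩ ?_ ⟨hw.1, hw.2.1, h2⟩
  exact fun x hx => mem_Om hx.1 hx.2.1 hx.2.2

lemma comp_sign {M : Finset (ℤ × ℤ)} {U : Set (ℝ × ℝ)}
    {z w : (ℝ × ℝ) × (ℝ × ℝ)} (hz : z ∈ Om M U) (hw : w ∈ Om M U)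
    (h : connectedComponentIn (Om M U) z = connectedComponentIn (Om M U) w) :
    ∀ k ∈ M, 0 < ff z k * ff w k := by
  intro k hk
  have hz' := mem_connectedComponentIn hz
  have hw' := mem_connectedComponentIn hw
  rw [← h] at hw'
  have hc := (isPreconnected_connectedComponentIn (F := Om M U) (x := z)).image
    (fun z => ff z k) (ff_cont k).continuousOn
  have h0 : (0:ℝ) ∉ (fun z => ff z k) '' connectedComponentIn (Om M U) z := by
    rintro ⟨x, hx, hx0⟩
    exact (connectedComponentIn_subset _ _ hx).2.2 k hk hx0
  have ho := hc.ordConnected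
  have iz := Set.mem_image_of_mem (fun z => ff z k) hz'
  have iw := Set.mem_image_of_mem (fun z => ff z k) hw'
  rcases lt_or_gt_of_ne (hz.2.2 k hk) with a | a <;> rcases lt_or_gt_of_ne (hw.2.2 k hk) with b | b
  · exact mul_pos_of_neg_of_neg a b
  · exact absurd (ho.out iz iw ⟨a.le, b.le⟩) h0
  · exact absurd (ho.out iw iz ⟨b.le, a.le⟩) h0
  · exact mul_pos a b

end TwoPieces


/-- for one piece the number of nonattacking configuration types is `1`
(`B°` is connected); for two pieces the complement of the move hyperplanes in `(B°)²` has
exactly `2|M|` connected components, hence `|M|` unlabelled types. -/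
theorem stmt_12
    (M : Finset (ℤ × ℤ)) (hMne : M.Nonempty)
    (hMmove : ∀ m ∈ M, m ≠ 0 ∧ Int.gcd m.1 m.2 = 1)
    (hMpar : ∀ m ∈ M, ∀ m' ∈ M, m ≠ m' → m.1 * m'.2 - m.2 * m'.1 ≠ 0)
    (V : Finset (ℝ × ℝ)) (hV : ∀ v ∈ V, ∃ a b : ℚ, v = ((a : ℝ), (b : ℝ)))
    (B : Set (ℝ × ℝ)) (hB : B = convexHull ℝ (V : Set (ℝ × ℝ)))
    (hBint : (interior B).Nonempty)
    (Ω : Set ((ℝ × ℝ) × (ℝ × ℝ)))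
    (hΩ : Ω = {z : (ℝ × ℝ) × (ℝ × ℝ) | z.1 ∈ interior B ∧ z.2 ∈ interior B ∧
      ∀ m ∈ M, (z.2.1 - z.1.1) * (m.2 : ℝ) - (z.2.2 - z.1.2) * (m.1 : ℝ) ≠ 0}) :
    -- q = 1: the board interior is connected:
    IsConnected (interior B) ∧
    -- q = 2: there are 2|M| components:
    Set.ncard {C : Set ((ℝ × ℝ) × (ℝ × ℝ)) | ∃ z ∈ Ω, C = connectedComponentIn Ω z}
      = 2 * M.card ∧
    -- and |M| orbits under the coordinate swap, i.e. |M| unlabelled types: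
    Set.ncard {O : Set (Set ((ℝ × ℝ) × (ℝ × ℝ))) | ∃ z ∈ Ω,
        O = {C : Set ((ℝ × ℝ) × (ℝ × ℝ)) | C = connectedComponentIn Ω z ∨
          C = connectedComponentIn Ω (z.2, z.1)}}
      = M.card := by
  classical
  have hconv : Convex ℝ (interior B) := by
    rw [hB]; exact (convex_convexHull ℝ _).interior
  have hΩ' : Ω = TwoPieces.Om M (interior B) := hΩ
  clear hΩ
  subst hΩ'
  set U := interior B with hUdef
  have hU : IsOpen U := isOpen_interior
  refine ⟨hconv.isConnected hBint, ?_⟩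
  obtain ⟨p, hp⟩ := hBint
  have hex : ∀ l : (ℤ × ℤ) × ℤ, ∃ z : (ℝ × ℝ) × (ℝ × ℝ),
      l.1 ∈ M → (l.2 = 1 ∨ l.2 = -1) → z ∈ TwoPieces.Om M U ∧ TwoPieces.RR M z l.1 l.2 := by
    intro l
    by_cases h : l.1 ∈ M ∧ (l.2 = 1 ∨ l.2 = -1)
    · obtain ⟨z, h1, h2, h3⟩ := TwoPieces.exists_point hMmove hMpar hU hp h.1 h.2
      exact ⟨z, fun _ _ => ⟨TwoPieces.mem_Om h1 h2 h3, h3⟩⟩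
    · exact ⟨(p, p), fun a b => absurd ⟨a, b⟩ h⟩
  choose r hr using hex
  constructor
  · have e : {C : Set ((ℝ × ℝ) × (ℝ × ℝ)) | ∃ z ∈ TwoPieces.Om M U,
        C = connectedComponentIn (TwoPieces.Om M U) z}
        = (fun l => connectedComponentIn (TwoPieces.Om M U) (r l)) ''
          ((M ×ˢ ({1, -1} : Finset ℤ) : Finset ((ℤ × ℤ) × ℤ)) : Set ((ℤ × ℤ) × ℤ)) := by
      ext C
      constructor
      · rintro ⟨z, hz, rfl⟩
        obtain ⟨m, hm, s, hs, hR⟩ := TwoPieces.exists_label hMne hMpar hz.2.2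
        refine ⟨(m, s), by simp [hm, hs], ?_⟩
        have := hr (m, s) hm hs
        exact TwoPieces.comp_eq hconv this.1 hz this.2 hR
      · rintro ⟨l, hl, rfl⟩
        simp only [Finset.coe_product, Set.mem_prod, Finset.mem_coe, Finset.mem_insert,
          Finset.mem_singleton] at hl
        exact ⟨r l, (hr l hl.1 hl.2).1, rfl⟩
    rw [e, Set.ncard_image_of_injOn, Set.ncard_coe_finset, Finset.card_product, mul_comm]
    · rfl
    · intro l hl l' hl' heq
      simp only [Finset.coe_product, Set.mem_prod, Finset.mem_coe, Finset.mem_insert,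
          Finset.mem_singleton] at hl hl'
      have h1 := hr l hl.1 hl.2
      have h2 := hr l' hl'.1 hl'.2
      have := TwoPieces.label_unique hl.1 hl'.1 hl.2 hl'.2 h1.2 h2.2
        (TwoPieces.comp_sign h1.1 h2.1 heq)
      exact Prod.ext this.1 this.2
  · have e : {O : Set (Set ((ℝ × ℝ) × (ℝ × ℝ))) | ∃ z ∈ TwoPieces.Om M U,
        O = {C : Set ((ℝ × ℝ) × (ℝ × ℝ)) | C = connectedComponentIn (TwoPieces.Om M U) z ∨
          C = connectedComponentIn (TwoPieces.Om M U) (z.2, z.1)}}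
        = (fun m => {C : Set ((ℝ × ℝ) × (ℝ × ℝ)) |
            C = connectedComponentIn (TwoPieces.Om M U) (r (m, 1)) ∨
            C = connectedComponentIn (TwoPieces.Om M U) ((r (m, 1)).2, (r (m, 1)).1)}) ''
          (M : Set (ℤ × ℤ)) := by
      ext O
      constructor
      · rintro ⟨z, hz, rfl⟩
        obtain ⟨m, hm, s, hs, hR⟩ := TwoPieces.exists_label hMne hMpar hz.2.2
        refine ⟨m, hm, ?_⟩
        have h1 := hr (m, 1) hm (Or.inl rfl)
        have h1s := TwoPieces.RR_swap h1.2
        have h1o := TwoPieces.Om_swap h1.1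
        have hRs := TwoPieces.RR_swap hR
        have hzo := TwoPieces.Om_swap hz
        rcases hs with rfl | rfl
        · have a := TwoPieces.comp_eq hconv h1.1 hz h1.2 hR
          have b := TwoPieces.comp_eq hconv h1o hzo h1s hRs
          simp only [a, b]
        · have a := TwoPieces.comp_eq hconv h1.1 hzo h1.2 hRs
          have b := TwoPieces.comp_eq hconv h1o hz h1s hR
          simp only [a, b]
          ext C
          exact or_comm
      · rintro ⟨m, hm, rfl⟩
        exact ⟨r (m, 1), (hr (m, 1) hm (Or.inl rfl)).1, rfl⟩
    rw [e, Set.ncard_image_of_injOn, Set.ncard_coe_finset]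
    intro m hm m' hm' heq
    have h1 := hr (m, 1) hm (Or.inl rfl)
    have h2 := hr (m', 1) hm' (Or.inl rfl)
    have hmem : connectedComponentIn (TwoPieces.Om M U) (r (m, 1)) ∈
        {C : Set ((ℝ × ℝ) × (ℝ × ℝ)) |
            C = connectedComponentIn (TwoPieces.Om M U) (r (m', 1)) ∨
            C = connectedComponentIn (TwoPieces.Om M U) ((r (m', 1)).2, (r (m', 1)).1)} := by
      simp only at heq
      rw [← heq]
      exact Or.inl rfl
    rcases hmem with h | h
    · exact (TwoPieces.label_unique hm hm' (Or.inl rfl) (Or.inl rfl) h1.2 h2.2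
        (TwoPieces.comp_sign h1.1 h2.1 h)).1
    · exact (TwoPieces.label_unique hm hm' (Or.inl rfl) (Or.inr rfl) h1.2
        (TwoPieces.RR_swap h2.2)
        (TwoPieces.comp_sign h1.1 (TwoPieces.Om_swap h2.1) h)).1
end

section
/- Fix a positive integer q. If the piece P has exactly one basic move (|M| = 1), then the number of connected components of (B°)^q \ ⋃A_P^q is q!, so there is exactly 1 unlabelled nonattacking configuration type of q pieces. If P has exactly two basic moves (|M| = 2), then the number of connected components of (B°)^q \ ⋃A_P^q is (q!)², so there are exactly q! unlabelled nonattacking configuration types of q pieces. In particular the rook and the bishop each have q! unlabelled configuration types. -/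
open MeasureTheory

namespace NAQ

variable {ι : Type} {q : ℕ}

/-- The region of configurations whose `f m`-orders are given by the permutations `s m`. -/
def region (K : Set (ℝ × ℝ)) (f : ι → (ℝ × ℝ →L[ℝ] ℝ)) (s : ι → Equiv.Perm (Fin q)) :
    Set (Fin q → ℝ × ℝ) :=
  {z | (∀ i, z i ∈ K) ∧ ∀ m, ∀ i j : Fin q, i < j → f m (z (s m i)) < f m (z (s m j))}

/-- The nonattacking configurations. -/
def om (q : ℕ) (K : Set (ℝ × ℝ)) (f : ι → (ℝ × ℝ →L[ℝ] ℝ)) : Set (Fin q → ℝ × ℝ) :=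
  {z | (∀ i, z i ∈ K) ∧ ∀ i j : Fin q, i ≠ j → ∀ m, f m (z i) ≠ f m (z j)}

variable {K : Set (ℝ × ℝ)} {f : ι → (ℝ × ℝ →L[ℝ] ℝ)}

lemma region_sub (s : ι → Equiv.Perm (Fin q)) : region K f s ⊆ om q K f := by
  rintro z ⟨h1, h2⟩
  refine ⟨h1, fun i j hij m h => ?_⟩
  have hs : StrictMono (fun i => f m (z (s m i))) := fun a b hab => h2 m a b hab
  have := hs.injective (a₁ := (s m).symm i) (a₂ := (s m).symm j) (by simpa using h)
  exact hij (by simpa using this)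

lemma om_sub {z : Fin q → ℝ × ℝ} (hz : z ∈ om q K f) : ∃ s, z ∈ region K f s := by
  refine ⟨fun m => Tuple.sort (fun i => f m (z i)), hz.1, fun m => ?_⟩
  have h1 := Tuple.monotone_sort (fun i => f m (z i))
  have h2 : Function.Injective ((fun i => f m (z i)) ∘ Tuple.sort (fun i => f m (z i))) := by
    refine Function.Injective.comp ?_ (Equiv.injective _)
    intro i j h
    by_contra hij
    exact hz.2 i j hij m h
  intro i j hij
  exact (h1.strictMono_of_injective h2) hij

lemma region_unique {s t : ι → Equiv.Perm (Fin q)} {z : Fin q → ℝ × ℝ}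
    (hs : z ∈ region K f s) (ht : z ∈ region K f t) : s = t := by
  funext m
  have h1 : StrictMono ((fun i => f m (z i)) ∘ s m) := fun a b hab => hs.2 m a b hab
  have h2 : StrictMono ((fun i => f m (z i)) ∘ t m) := fun a b hab => ht.2 m a b hab
  have h := Tuple.unique_monotone h1.monotone h2.monotone
  ext i
  have hi := congrFun h i
  simp only [Function.comp] at hi
  by_contra hne
  exact (region_sub s hs).2 (s m i) (t m i) (fun h => hne (by rw [h])) m hi

lemma region_convex (hK : Convex ℝ K) (s : ι → Equiv.Perm (Fin q)) :
    Convex ℝ (region K f s) := by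
  intro x hx y hy a b ha hb hab
  refine ⟨fun i => hK (hx.1 i) (hy.1 i) ha hb hab, fun m i j hij => ?_⟩
  have h1 := hx.2 m i j hij
  have h2 := hy.2 m i j hij
  simp only [Pi.add_apply, Pi.smul_apply, map_add, map_smul, smul_eq_mul]
  rcases ha.eq_or_lt with h | h
  · subst h
    have : b = 1 := by linarith
    subst this
    linarith
  · nlinarith [mul_lt_mul_of_pos_left h1 h, mul_le_mul_of_nonneg_left h2.le hb]

lemma region_open [Finite ι] (hK : IsOpen K) (s : ι → Equiv.Perm (Fin q)) :
    IsOpen (region K f s) := by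
  have : region K f s = (⋂ i, {z : Fin q → ℝ × ℝ | z i ∈ K}) ∩
      ⋂ m, ⋂ i, ⋂ j, ⋂ (_ : i < j), {z | f m (z (s m i)) < f m (z (s m j))} := by
    ext z; simp [region]
  rw [this]
  refine IsOpen.inter (isOpen_iInter_of_finite fun i => hK.preimage (continuous_apply i)) ?_
  refine isOpen_iInter_of_finite fun m => isOpen_iInter_of_finite fun i =>
    isOpen_iInter_of_finite fun j => isOpen_iInter_of_finite fun _ => ?_
  exact isOpen_lt (by fun_prop) (by fun_prop)

lemma comp_eq [Finite ι] (hK : IsOpen K) (hKc : Convex ℝ K) {s : ι → Equiv.Perm (Fin q)}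
    {z : Fin q → ℝ × ℝ} (hz : z ∈ region K f s) :
    connectedComponentIn (om q K f) z = region K f s := by
  apply Set.Subset.antisymm
  · have hp : IsPreconnected (connectedComponentIn (om q K f) z) :=
      isPreconnected_connectedComponentIn
    refine hp.subset_left_of_subset_union (region_open hK s)
      (v := ⋃ t : {t : ι → Equiv.Perm (Fin q) // t ≠ s}, region K f t.1)
      (isOpen_iUnion fun t => region_open hK t.1) ?_ ?_ ?_
    · rw [Set.disjoint_left]
      intro w hw hw'
      obtain ⟨t, ht⟩ := Set.mem_iUnion.1 hw'
      exact t.2 (region_unique ht hw)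
    · intro w hw
      obtain ⟨t, ht⟩ := om_sub (connectedComponentIn_subset _ _ hw)
      by_cases h : t = s
      · left; rwa [← h]
      · right; exact Set.mem_iUnion.2 ⟨⟨t, h⟩, ht⟩
    · exact ⟨z, mem_connectedComponentIn (region_sub s hz), hz⟩
  · exact (region_convex hKc s).isPreconnected.subset_connectedComponentIn hz (region_sub s)

lemma region_nonempty [Fintype ι] (hK : IsOpen K) (hne : K.Nonempty)
    (u : ι → ℝ × ℝ) (hu : ∀ m, 0 < f m (u m)) (hu' : ∀ m m', m ≠ m' → f m (u m') = 0)
    (s : ι → Equiv.Perm (Fin q)) : (region K f s).Nonempty := by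
  obtain ⟨c, hc⟩ := hne
  let w : Fin q → ℝ × ℝ := fun i => ∑ m, (((s m).symm i : ℕ) : ℝ) • u m
  have hev : ∀ᶠ e : ℝ in nhds 0, ∀ i, c + e • w i ∈ K := by
    rw [Filter.eventually_all]
    intro i
    have hcont : Continuous (fun e : ℝ => c + e • w i) := by fun_prop
    exact hcont.continuousAt.eventually_mem (hK.mem_nhds (by simpa using hc))
  have hev2 : ∀ᶠ e : ℝ in nhdsWithin 0 (Set.Ioi 0), ∀ i, c + e • w i ∈ K :=
    hev.filter_mono nhdsWithin_le_nhds
  obtain ⟨e, he, hpos⟩ := (hev2.and self_mem_nhdsWithin).exists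
  have hpos : 0 < e := hpos
  refine ⟨fun i => c + e • w i, he, fun m i j hij => ?_⟩
  have key : ∀ k, f m (w k) = (((s m).symm k : ℕ) : ℝ) * f m (u m) := by
    intro k
    simp only [w, map_sum, map_smul, smul_eq_mul]
    rw [Finset.sum_eq_single m]
    · intro m' _ h
      rw [hu' m m' h.symm, mul_zero]
    · simp
  simp only [map_add, map_smul, smul_eq_mul, key, Equiv.symm_apply_apply]
  have : ((i : ℕ) : ℝ) < ((j : ℕ) : ℝ) := by exact_mod_cast hij
  have := mul_lt_mul_of_pos_left (mul_lt_mul_of_pos_right this (hu m)) hpos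
  linarith

lemma region_perm {s : ι → Equiv.Perm (Fin q)} {z : Fin q → ℝ × ℝ} (hz : z ∈ region K f s)
    (σ : Equiv.Perm (Fin q)) : (fun i => z (σ i)) ∈ region K f (fun m => σ⁻¹ * s m) := by
  refine ⟨fun i => hz.1 _, fun m i j hij => ?_⟩
  simpa using hz.2 m i j hij

lemma count_comp [Fintype ι] (hK : IsOpen K) (hKc : Convex ℝ K)
    (hn : ∀ s : ι → Equiv.Perm (Fin q), (region K f s).Nonempty) :
    Set.ncard {C : Set (Fin q → ℝ × ℝ) | ∃ z ∈ om q K f, C = connectedComponentIn (om q K f) z}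
      = (Nat.factorial q) ^ Fintype.card ι := by
  classical
  have h : {C : Set (Fin q → ℝ × ℝ) | ∃ z ∈ om q K f, C = connectedComponentIn (om q K f) z}
      = Set.range (fun s : ι → Equiv.Perm (Fin q) => region K f s) := by
    ext C
    constructor
    · rintro ⟨z, hz, rfl⟩
      obtain ⟨s, hs⟩ := om_sub hz
      exact ⟨s, (comp_eq hK hKc hs).symm⟩
    · rintro ⟨s, rfl⟩
      obtain ⟨z, hz⟩ := hn s
      exact ⟨z, region_sub s hz, (comp_eq hK hKc hz).symm⟩
  have hinj : Function.Injective (fun s : ι → Equiv.Perm (Fin q) => region K f s) := by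
    intro s t hst
    obtain ⟨z, hz⟩ := hn s
    have hst : region K f s = region K f t := hst
    exact region_unique hz (hst ▸ hz)
  rw [h, ← Set.image_univ, Set.ncard_image_of_injective _ hinj, Set.ncard_univ,
    Nat.card_eq_fintype_card, Fintype.card_fun, Fintype.card_perm, Fintype.card_fin]

lemma count_orb [Fintype ι] (m0 : ι) (hK : IsOpen K) (hKc : Convex ℝ K)
    (hn : ∀ s : ι → Equiv.Perm (Fin q), (region K f s).Nonempty) :
    Set.ncard {O : Set (Set (Fin q → ℝ × ℝ)) | ∃ z ∈ om q K f,
          O = {C : Set (Fin q → ℝ × ℝ) | ∃ σ : Equiv.Perm (Fin q),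
            C = connectedComponentIn (om q K f) (fun i => z (σ i))}}
      = (Nat.factorial q) ^ (Fintype.card ι - 1) := by
  classical
  let orb : (ι → Equiv.Perm (Fin q)) → Set (Set (Fin q → ℝ × ℝ)) := fun s =>
    {C | ∃ σ : Equiv.Perm (Fin q), C = region K f (fun m => σ * s m)}
  have horb : ∀ s z, z ∈ region K f s → {C : Set (Fin q → ℝ × ℝ) | ∃ σ : Equiv.Perm (Fin q),
            C = connectedComponentIn (om q K f) (fun i => z (σ i))} = orb s := by
    intro s z hz
    ext C
    constructor
    · rintro ⟨σ, rfl⟩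
      exact ⟨σ⁻¹, comp_eq hK hKc (region_perm hz σ)⟩
    · rintro ⟨σ, rfl⟩
      refine ⟨σ⁻¹, ?_⟩
      have := comp_eq hK hKc (region_perm hz σ⁻¹)
      rw [inv_inv] at this
      exact this.symm
  have hinj0 : Function.Injective (fun s : ι → Equiv.Perm (Fin q) => region K f s) := by
    intro s t hst
    obtain ⟨z, hz⟩ := hn s
    have hst : region K f s = region K f t := hst
    exact region_unique hz (hst ▸ hz)
  let ext : ({m : ι // m ≠ m0} → Equiv.Perm (Fin q)) → (ι → Equiv.Perm (Fin q)) := fun t m =>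
    if h : m = m0 then 1 else t ⟨m, h⟩
  have h : {O : Set (Set (Fin q → ℝ × ℝ)) | ∃ z ∈ om q K f,
          O = {C : Set (Fin q → ℝ × ℝ) | ∃ σ : Equiv.Perm (Fin q),
            C = connectedComponentIn (om q K f) (fun i => z (σ i))}}
      = Set.range (fun t => orb (ext t)) := by
    ext O
    constructor
    · rintro ⟨z, hz, rfl⟩
      obtain ⟨s, hs⟩ := om_sub hz
      refine ⟨fun m => (s m0)⁻¹ * s m, ?_⟩
      rw [horb s z hs]
      have he : ∀ m, ext (fun m => (s m0)⁻¹ * s m) m = (s m0)⁻¹ * s m := by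
        intro m
        by_cases h : m = m0
        · subst h; simp [ext]
        · simp [ext, h]
      have he : ext (fun m => (s m0)⁻¹ * s m) = fun m => (s m0)⁻¹ * s m := funext he
      show orb (ext (fun m => (s m0)⁻¹ * s m)) = _
      rw [he]
      apply Set.ext
      intro C
      constructor
      · rintro ⟨σ, rfl⟩
        exact ⟨σ * (s m0)⁻¹, by simp only [mul_assoc]⟩
      · rintro ⟨σ, rfl⟩
        exact ⟨σ * s m0, by simp only [mul_assoc, mul_inv_cancel_left]⟩
    · rintro ⟨t, rfl⟩
      obtain ⟨z, hz⟩ := hn (ext t)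
      exact ⟨z, region_sub _ hz, (horb _ z hz).symm⟩
  have hinj : Function.Injective (fun t => orb (ext t)) := by
    intro t t' htt
    have htt : orb (ext t) = orb (ext t') := htt
    have hm : region K f (ext t) ∈ orb (ext t) := ⟨1, by simp⟩
    rw [htt] at hm
    obtain ⟨σ, hσ⟩ := hm
    have hσ' : ext t = fun m => σ * ext t' m := hinj0 hσ
    have h0 := congrFun hσ' m0
    have hσ1 : σ = 1 := by simpa [ext] using h0.symm
    subst hσ1
    funext m
    have := congrFun hσ' m.1
    simpa [ext, m.2] using this
  rw [h, ← Set.image_univ, Set.ncard_image_of_injective _ hinj, Set.ncard_univ,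
    Nat.card_eq_fintype_card, Fintype.card_fun, Fintype.card_perm, Fintype.card_fin]
  congr 1
  rw [Fintype.card_subtype_compl, Fintype.card_subtype_eq]

/-- The functional attached to a move. -/
noncomputable def fn (m : ℤ × ℤ) : ℝ × ℝ →L[ℝ] ℝ :=
  (m.2 : ℝ) • ContinuousLinearMap.fst ℝ ℝ ℝ - (m.1 : ℝ) • ContinuousLinearMap.snd ℝ ℝ ℝ

lemma fn_apply (m : ℤ × ℤ) (z : ℝ × ℝ) : fn m z = z.1 * m.2 - z.2 * m.1 := by
  simp [fn]; ring

lemma exists_dual (M : Finset (ℤ × ℤ)) (hMmove : ∀ m ∈ M, m ≠ 0 ∧ Int.gcd m.1 m.2 = 1)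
    (hMpar : ∀ m ∈ M, ∀ m' ∈ M, m ≠ m' → m.1 * m'.2 - m.2 * m'.1 ≠ 0)
    (hc : M.card = 1 ∨ M.card = 2) :
    ∃ u : M → ℝ × ℝ, (∀ m : M, 0 < fn m.1 (u m)) ∧
      ∀ m m' : M, m ≠ m' → fn m.1 (u m') = 0 := by
  suffices H : ∀ m : M, ∃ u : ℝ × ℝ, 0 < fn m.1 u ∧ ∀ m' : M, m' ≠ m → fn m'.1 u = 0 by
    choose u hu hu' using H
    exact ⟨u, hu, fun m m' h => hu' m' m h⟩
  rintro ⟨m, hm⟩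
  rcases hc with hc | hc
  · obtain ⟨a, rfl⟩ := Finset.card_eq_one.1 hc
    refine ⟨((m.2 : ℝ), -(m.1 : ℝ)), ?_, ?_⟩
    · rw [fn_apply]
      have h0 := (hMmove m hm).1
      have : m.1 ≠ 0 ∨ m.2 ≠ 0 := by
        by_contra! h
        exact h0 (Prod.ext h.1 h.2)
      rcases this with h | h
      · have : (m.1 : ℝ) ≠ 0 := by exact_mod_cast h
        have := mul_self_pos.2 this
        simp only
        nlinarith [mul_self_nonneg (m.2 : ℝ)]
      · have : (m.2 : ℝ) ≠ 0 := by exact_mod_cast h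
        have := mul_self_pos.2 this
        simp only
        nlinarith [mul_self_nonneg (m.1 : ℝ)]
    · rintro ⟨m', hm'⟩ h
      rw [Finset.mem_singleton] at hm hm'
      exact absurd (Subtype.ext (hm'.trans hm.symm)) h
  · have he : ∃ b ∈ M, b ≠ m ∧ ∀ c ∈ M, c ≠ m → c = b := by
      obtain ⟨a, b, hab, rfl⟩ := Finset.card_eq_two.1 hc
      simp only [Finset.mem_insert, Finset.mem_singleton] at hm ⊢
      rcases hm with rfl | rfl
      · exact ⟨b, by simp, hab.symm, by tauto⟩
      · exact ⟨a, by simp, hab, by tauto⟩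
    obtain ⟨b, hb, hbm, hall⟩ := he
    have hd : ((b.1 : ℝ) * m.2 - b.2 * m.1) ≠ 0 := by exact_mod_cast hMpar b hb m hm hbm
    refine ⟨((b.1 : ℝ) * m.2 - b.2 * m.1) • ((b.1 : ℝ), (b.2 : ℝ)), ?_, ?_⟩
    · rw [map_smul, fn_apply, smul_eq_mul]
      exact mul_self_pos.2 hd
    · rintro ⟨m', hm'⟩ h
      have := hall m' hm' (fun h' => h (Subtype.ext h'))
      subst this
      rw [map_smul, fn_apply, smul_eq_mul]
      simp only
      ring

end NAQ


/-- a piece with exactly one basic move has `q!` components of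
`(B°)^q \ ⋃A_P^q` and `1` unlabelled configuration type; a piece with exactly two basic
moves has `(q!)²` components and `q!` unlabelled types. -/
theorem stmt_13
    (M : Finset (ℤ × ℤ)) (hMne : M.Nonempty)
    (hMmove : ∀ m ∈ M, m ≠ 0 ∧ Int.gcd m.1 m.2 = 1)
    (hMpar : ∀ m ∈ M, ∀ m' ∈ M, m ≠ m' → m.1 * m'.2 - m.2 * m'.1 ≠ 0)
    (V : Finset (ℝ × ℝ)) (hV : ∀ v ∈ V, ∃ a b : ℚ, v = ((a : ℝ), (b : ℝ)))
    (B : Set (ℝ × ℝ)) (hB : B = convexHull ℝ (V : Set (ℝ × ℝ)))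
    (hBint : (interior B).Nonempty)
    (q : ℕ) (hq : 0 < q)
    (Ω : Set (Fin q → ℝ × ℝ))
    (hΩ : Ω = {z : Fin q → ℝ × ℝ | (∀ i : Fin q, z i ∈ interior B) ∧
      ∀ i j : Fin q, i ≠ j → ∀ m ∈ M,
        ((z j).1 - (z i).1) * (m.2 : ℝ) - ((z j).2 - (z i).2) * (m.1 : ℝ) ≠ 0}) :
    (M.card = 1 →
      Set.ncard {C : Set (Fin q → ℝ × ℝ) | ∃ z ∈ Ω, C = connectedComponentIn Ω z}
        = Nat.factorial q ∧
      Set.ncard {O : Set (Set (Fin q → ℝ × ℝ)) | ∃ z ∈ Ω,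
          O = {C : Set (Fin q → ℝ × ℝ) | ∃ σ : Equiv.Perm (Fin q),
            C = connectedComponentIn Ω (fun i => z (σ i))}}
        = 1) ∧
    (M.card = 2 →
      Set.ncard {C : Set (Fin q → ℝ × ℝ) | ∃ z ∈ Ω, C = connectedComponentIn Ω z}
        = Nat.factorial q * Nat.factorial q ∧
      Set.ncard {O : Set (Set (Fin q → ℝ × ℝ)) | ∃ z ∈ Ω,
          O = {C : Set (Fin q → ℝ × ℝ) | ∃ σ : Equiv.Perm (Fin q),
            C = connectedComponentIn Ω (fun i => z (σ i))}}
        = Nat.factorial q) := by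
  have hom : Ω = NAQ.om (ι := M) q (interior B) (fun m => NAQ.fn m.1) := by
    rw [hΩ]
    ext z
    simp only [NAQ.om, Set.mem_setOf_eq, NAQ.fn_apply, Subtype.forall]
    refine and_congr_right fun _ => ?_
    refine forall_congr' fun i => forall_congr' fun j => forall_congr' fun _ =>
      forall_congr' fun m => forall_congr' fun _ => not_congr ?_
    constructor <;> intro h <;> linarith
  have hK : IsOpen (interior B) := isOpen_interior
  have hKc : Convex ℝ (interior B) := by
    rw [hB]; exact (convex_convexHull ℝ _).interior
  obtain ⟨m0, hm0⟩ := hMne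
  have hn : (M.card = 1 ∨ M.card = 2) → ∀ s : M → Equiv.Perm (Fin q),
      (NAQ.region (interior B) (fun m : M => NAQ.fn m.1) s).Nonempty := by
    intro hc
    obtain ⟨u, hu, hu'⟩ := NAQ.exists_dual M hMmove hMpar hc
    exact NAQ.region_nonempty hK hBint u hu hu'
  rw [hom]
  refine ⟨fun hc => ⟨?_, ?_⟩, fun hc => ⟨?_, ?_⟩⟩
  · rw [NAQ.count_comp hK hKc (hn (Or.inl hc)), Fintype.card_coe, hc, pow_one]
  · rw [NAQ.count_orb ⟨m0, hm0⟩ hK hKc (hn (Or.inl hc)), Fintype.card_coe, hc]; simp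
  · rw [NAQ.count_comp hK hKc (hn (Or.inr hc)), Fintype.card_coe, hc, pow_two]
  · rw [NAQ.count_orb ⟨m0, hm0⟩ hK hKc (hn (Or.inr hc)), Fintype.card_coe, hc]; simp
end

section
/- For every integer n ≥ 0, the number of 2-element subsets {(x_1,y_1), (x_2,y_2)} of {1, …, n}² satisfying x_1 ≠ x_2, y_1 ≠ y_2, x_1 + y_1 ≠ x_2 + y_2, and x_1 − y_1 ≠ x_2 − y_2 equals n⁴/2 − 5n³/3 + 3n²/2 − n/3, i.e. (3n⁴ − 10n³ + 9n² − 2n)/6. -/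
/-- Ordered pairs of rows whose difference is not `0`, `n - j` or `j - n`. -/
noncomputable def queenRows (n j : ℕ) : Finset (ℤ × ℤ) :=
  (Finset.Icc (1 : ℤ) n ×ˢ Finset.Icc (1 : ℤ) n).filter
    (fun p => p.1 ≠ p.2 ∧ p.2 - p.1 ≠ (n : ℤ) - j ∧ p.1 - p.2 ≠ (n : ℤ) - j)

lemma queenRows_card (n j : ℕ) (hj : j < n) :
    (queenRows n j).card + (n + 2 * j) = n * n := by
  classical
  let A : Finset (ℤ × ℤ) := (Finset.Icc (1 : ℤ) n).image (fun y => (y, y))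
  let B : Finset (ℤ × ℤ) := (Finset.Icc (1 : ℤ) j).image (fun y => (y, y + ((n : ℤ) - j)))
  let C : Finset (ℤ × ℤ) := (Finset.Icc (1 : ℤ) j).image (fun y => (y + ((n : ℤ) - j), y))
  have hA : A.card = n := by
    rw [Finset.card_image_of_injective]
    · simp
    · intro a b h; simpa using h
  have hB : B.card = j := by
    rw [Finset.card_image_of_injective]
    · simp
    · intro a b h; simpa using h
  have hC : C.card = j := by
    rw [Finset.card_image_of_injective]
    · simp
    · intro a b h; simpa using h
  have memA : ∀ a b : ℤ, (a, b) ∈ A ↔ (1 ≤ a ∧ a ≤ n ∧ a = b) := by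
    intro a b
    simp only [A, Finset.mem_image, Finset.mem_Icc, Prod.mk.injEq]
    constructor
    · rintro ⟨y, h, h1, h2⟩; omega
    · intro h; exact ⟨a, by omega, by omega, by omega⟩
  have memB : ∀ a b : ℤ, (a, b) ∈ B ↔ (1 ≤ a ∧ a ≤ j ∧ b = a + (n - j)) := by
    intro a b
    simp only [B, Finset.mem_image, Finset.mem_Icc, Prod.mk.injEq]
    constructor
    · rintro ⟨y, h, h1, h2⟩; omega
    · intro h; exact ⟨a, by omega, by omega, by omega⟩
  have memC : ∀ a b : ℤ, (a, b) ∈ C ↔ (1 ≤ b ∧ b ≤ j ∧ a = b + (n - j)) := by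
    intro a b
    simp only [C, Finset.mem_image, Finset.mem_Icc, Prod.mk.injEq]
    constructor
    · rintro ⟨y, h, h1, h2⟩; omega
    · intro h; exact ⟨b, by omega, by omega, by omega⟩
  have dAB : Disjoint A B := by
    rw [Finset.disjoint_left]; rintro ⟨a, b⟩ h; rw [memA] at h; rw [memB]; omega
  have dABC : Disjoint (A ∪ B) C := by
    rw [Finset.disjoint_left]; rintro ⟨a, b⟩ h
    rw [Finset.mem_union, memA, memB] at h; rw [memC]; omega
  have dD : Disjoint (queenRows n j) (A ∪ B ∪ C) := by
    rw [Finset.disjoint_left]; rintro ⟨a, b⟩ h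
    simp only [queenRows, Finset.mem_filter, Finset.mem_product, Finset.mem_Icc] at h
    rw [Finset.mem_union, Finset.mem_union, memA, memB, memC]; omega
  have hU : queenRows n j ∪ (A ∪ B ∪ C) = Finset.Icc (1 : ℤ) n ×ˢ Finset.Icc (1 : ℤ) n := by
    ext ⟨a, b⟩
    rw [Finset.mem_union, Finset.mem_union, Finset.mem_union, memA, memB, memC]
    simp only [queenRows, Finset.mem_filter, Finset.mem_product, Finset.mem_Icc]
    omega
  have h := congrArg Finset.card hU
  rw [Finset.card_union_of_disjoint dD, Finset.card_union_of_disjoint dABC,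
    Finset.card_union_of_disjoint dAB, hA, hB, hC, Finset.card_product] at h
  simp at h
  omega

/-- Data: `j = n - (column difference)`, the left column, and the two rows. -/
noncomputable def queenData (n : ℕ) : Finset (Σ _ : ℕ, ℤ × (ℤ × ℤ)) :=
  (Finset.range n).sigma (fun j => Finset.Icc (1 : ℤ) j ×ˢ queenRows n j)

/-- The placement attached to the data. -/
noncomputable def queenPlace (n : ℕ) (t : Σ _ : ℕ, ℤ × (ℤ × ℤ)) : Finset (ℤ × ℤ) :=
  {(t.2.1, t.2.2.1), (t.2.1 + ((n : ℤ) - t.1), t.2.2.2)}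

lemma mem_queenData (n j : ℕ) (x a b : ℤ) :
    (⟨j, x, a, b⟩ : Σ _ : ℕ, ℤ × (ℤ × ℤ)) ∈ queenData n ↔
      j < n ∧ (1 ≤ x ∧ x ≤ j) ∧ ((1 ≤ a ∧ a ≤ n) ∧ (1 ≤ b ∧ b ≤ n)) ∧
        a ≠ b ∧ b - a ≠ (n : ℤ) - j ∧ a - b ≠ (n : ℤ) - j := by
  simp only [queenData, queenRows, Finset.mem_sigma, Finset.mem_range, Finset.mem_product,
    Finset.mem_filter, Finset.mem_Icc]

lemma queenPlace_injOn (n : ℕ) : Set.InjOn (queenPlace n) (queenData n : Set _) := by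
  rintro ⟨j, x, a, b⟩ h ⟨j₂, x₂, a₂, b₂⟩ h₂ e
  rw [Finset.mem_coe, mem_queenData] at h h₂
  simp only [queenPlace] at e
  have e1 := (Finset.ext_iff.mp e (x, a)).mp (by simp)
  have e2 := (Finset.ext_iff.mp e (x + ((n : ℤ) - j), b)).mp (by simp)
  have e3 := (Finset.ext_iff.mp e (x₂, a₂)).mpr (by simp)
  simp only [Finset.mem_insert, Finset.mem_singleton, Prod.mk.injEq] at e1 e2 e3
  obtain ⟨rfl, rfl, rfl, rfl⟩ : j = j₂ ∧ x = x₂ ∧ a = a₂ ∧ b = b₂ := by omega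
  rfl

lemma sum_aux (n : ℕ) (c : ℚ) :
    ∑ j ∈ Finset.range n, (j : ℚ) * (c - 2 * j)
      = c * (n * (n - 1) / 2) - n * (n - 1) * (2 * n - 1) / 3 := by
  induction n with
  | zero => simp
  | succ k ih => rw [Finset.sum_range_succ, ih]; push_cast; ring

lemma queenData_card (n : ℕ) : ((queenData n).card : ℚ) =
    (3 * (n : ℚ) ^ 4 - 10 * (n : ℚ) ^ 3 + 9 * (n : ℚ) ^ 2 - 2 * (n : ℚ)) / 6 := by
  have h : ((queenData n).card : ℚ) =
      ∑ j ∈ Finset.range n, (j : ℚ) * (((n : ℚ) * n - n) - 2 * j) := by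
    rw [queenData, Finset.card_sigma, Nat.cast_sum]
    refine Finset.sum_congr rfl fun j hj => ?_
    have h1 := queenRows_card n j (Finset.mem_range.mp hj)
    have h2 : ((queenRows n j).card : ℚ) + (n + 2 * j) = n * n := by exact_mod_cast h1
    rw [Finset.card_product, Nat.cast_mul, Int.card_Icc]
    have h3 : ((queenRows n j).card : ℚ) = ((n : ℚ) * n - n) - 2 * j := by linarith
    rw [h3]
    simp
  rw [h, sum_aux]
  ring

/-- the number of nonattacking placements of two queens on the `n × n`
board is `(3n⁴ − 10n³ + 9n² − 2n)/6`. -/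
theorem stmt_14 (n : ℕ) :
    (Set.ncard {S : Finset (ℤ × ℤ) |
      S.card = 2 ∧
      (∀ z ∈ S, 1 ≤ z.1 ∧ z.1 ≤ (n : ℤ) ∧ 1 ≤ z.2 ∧ z.2 ≤ (n : ℤ)) ∧
      (∀ z ∈ S, ∀ w ∈ S, z ≠ w →
        z.1 ≠ w.1 ∧ z.2 ≠ w.2 ∧ z.1 + z.2 ≠ w.1 + w.2 ∧ z.1 - z.2 ≠ w.1 - w.2)} : ℚ)
      = (3 * (n : ℚ) ^ 4 - 10 * (n : ℚ) ^ 3 + 9 * (n : ℚ) ^ 2 - 2 * (n : ℚ)) / 6 := by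
  rw [← queenData_card, ← Set.ncard_coe_finset (queenData n),
    ← Set.InjOn.ncard_image (queenPlace_injOn n)]
  congr 2
  ext S
  simp only [Set.mem_ofPred_eq, Set.mem_image, Finset.mem_coe]
  constructor
  · rintro ⟨hc, hb, hn⟩
    -- the left queen comes first
    have key : ∃ z w : ℤ × ℤ, z.1 < w.1 ∧ S = {z, w} := by
      obtain ⟨z, w, hzw, rfl⟩ := Finset.card_eq_two.mp hc
      have := (hn z (by simp) w (by simp) hzw).1
      rcases lt_or_gt_of_ne this with h | h
      · exact ⟨z, w, h, rfl⟩
      · exact ⟨w, z, h, Finset.pair_comm _ _⟩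
    obtain ⟨⟨x, a⟩, ⟨y, b⟩, hlt, rfl⟩ := key
    have h1 := hb (x, a) (by simp)
    have h2 := hb (y, b) (by simp)
    have h3 := hn (x, a) (by simp) (y, b) (by simp)
      (by intro h; rw [h] at hlt; exact lt_irrefl _ hlt)
    simp only at hlt h1 h2 h3
    obtain ⟨j, hj⟩ : ∃ j : ℕ, (j : ℤ) = n - (y - x) := ⟨(n - (y - x)).toNat, by omega⟩
    refine ⟨⟨j, x, a, b⟩, ?_, ?_⟩
    · rw [mem_queenData]; omega
    · have : x + ((n : ℤ) - j) = y := by omega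
      simp only [queenPlace, this]
  · rintro ⟨⟨j, x, a, b⟩, h, rfl⟩
    rw [mem_queenData] at h
    simp only [queenPlace]
    refine ⟨Finset.card_pair ?_, ?_, ?_⟩
    · rw [Ne, Prod.mk.injEq]; omega
    · intro z hz
      simp only [Finset.mem_insert, Finset.mem_singleton] at hz
      rcases hz with rfl | rfl <;> simp only <;> omega
    · intro z hz w hw hne
      simp only [Finset.mem_insert, Finset.mem_singleton] at hz hw
      rcases hz with rfl | rfl <;> rcases hw with rfl | rfl
      · exact absurd rfl hne
      · simp only; omega
      · simp only; omega
      · exact absurd rfl hne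
end

section
/- For every integer n ≥ 0, the number of 2-element subsets {(x_1,y_1), (x_2,y_2)} of {1, …, n}² such that, writing (a,b) = (x_2 − x_1, y_2 − y_1), none of b = 2a, b = −2a, a = 2b, a = −2b holds, equals n⁴/2 − 5n³/6 + 3n²/2 − 11n/12 + (−1)ⁿ·n/4. -/
/-- the attacking pair with direction code `i`, step `k`, corner `(x, y)` -/
def nrPair (i : Fin 4) (k x y : ℤ) : Finset (ℤ × ℤ) :=
  match i with
  | 0 => {(x, y), (x + k, y + 2 * k)}
  | 1 => {(x, y + 2 * k), (x + k, y)}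
  | 2 => {(y, x), (y + 2 * k, x + k)}
  | 3 => {(y + 2 * k, x), (y, x + k)}

/-- the nonattacking condition -/
def nrGood (S : Finset (ℤ × ℤ)) : Prop :=
  ∀ z ∈ S, ∀ w ∈ S, z ≠ w →
        w.2 - z.2 ≠ 2 * (w.1 - z.1) ∧ w.2 - z.2 ≠ -(2 * (w.1 - z.1)) ∧
        w.1 - z.1 ≠ 2 * (w.2 - z.2) ∧ w.1 - z.1 ≠ -(2 * (w.2 - z.2))

lemma nrPair_eq_iff (a b c d : ℤ × ℤ) :
    ({a, b} : Finset (ℤ × ℤ)) = {c, d} ↔ (a = c ∧ b = d) ∨ (a = d ∧ b = c) := by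
  rw [← Finset.coe_inj]
  push_cast
  exact Set.pair_eq_pair_iff

lemma nrPair_inj {i i' : Fin 4} {k x y k' x' y' : ℤ} (hk : 0 < k) (hk' : 0 < k')
    (h : nrPair i k x y = nrPair i' k' x' y') : i = i' ∧ k = k' ∧ x = x' ∧ y = y' := by
  fin_cases i <;> fin_cases i' <;>
    simp only [nrPair, nrPair_eq_iff, Prod.mk.injEq] at h <;>
    first
      | (exfalso; omega)
      | (refine ⟨rfl, ?_, ?_, ?_⟩ <;> omega)

/-- index set of attacking pairs for `n = 2 m + e` -/
noncomputable def nrD (m e : ℕ) : Finset (Fin 4 × (Σ _ : ℕ, ℤ × ℤ)) :=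
  Finset.univ ×ˢ (Finset.range m).sigma
    (fun j => Finset.Icc 1 ((m + e + j : ℕ) : ℤ) ×ˢ Finset.Icc 1 ((2 * j + e : ℕ) : ℤ))

lemma nrD_card (m e : ℕ) :
    (nrD m e).card = 4 * ∑ j ∈ Finset.range m, (m + e + j) * (2 * j + e) := by
  simp only [nrD, Finset.card_product, Finset.card_sigma, Int.card_Icc, Finset.card_univ,
    Fintype.card_fin]
  congr 1
  apply Finset.sum_congr rfl
  intro j _
  congr 1 <;> omega

lemma nr_sum (c e m : ℕ) : (∑ j ∈ Finset.range m, ((c : ℚ) + e + j) * (2 * j + e))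
    = (c + e) * (m * (m - 1) + e * m) + m * (m - 1) * (2 * m - 1) / 3 + e * m * (m - 1) / 2 := by
  induction m with
  | zero => simp
  | succ m ih => rw [Finset.sum_range_succ, ih]; push_cast; ring

noncomputable def nrBoard (n : ℕ) : Finset (ℤ × ℤ) := Finset.Icc 1 (n : ℤ) ×ˢ Finset.Icc 1 (n : ℤ)

open Classical in
lemma nr_bad (m e : ℕ) (he : e < 2) :
    (((nrBoard (2 * m + e)).powersetCard 2).filter (fun S => ¬ nrGood S)).card
      = (nrD m e).card := by
  symm
  apply Finset.card_bij (fun p _ => nrPair p.1 ((m : ℤ) - p.2.1) p.2.2.1 p.2.2.2)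
  · rintro ⟨i, j, x, y⟩ h
    simp only [nrD, Finset.mem_product, Finset.mem_univ, Finset.mem_sigma, Finset.mem_range,
      Finset.mem_Icc, true_and] at h
    obtain ⟨hj, ⟨hx1, hx2⟩, hy1, hy2⟩ := h
    push_cast at hx2 hy2
    obtain ⟨k, hk⟩ : ∃ k : ℤ, k = (m : ℤ) - j := ⟨_, rfl⟩
    rw [Finset.mem_filter, Finset.mem_powersetCard]
    simp only [← hk]
    refine ⟨⟨?_, ?_⟩, ?_⟩
    · intro z hz
      simp only [nrBoard, Finset.mem_product, Finset.mem_Icc]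
      push_cast
      fin_cases i <;> simp only [nrPair, Finset.mem_insert, Finset.mem_singleton] at hz <;>
        rcases hz with rfl | rfl <;> refine ⟨⟨?_, ?_⟩, ?_, ?_⟩ <;> dsimp only <;> omega
    · fin_cases i <;> simp only [nrPair] <;> apply Finset.card_pair <;>
        simp only [ne_eq, Prod.mk.injEq] <;> omega
    · intro hg
      fin_cases i <;> simp only [nrGood, nrPair] at hg <;>
        have := hg _ (Finset.mem_insert_self _ _) _
          (Finset.mem_insert_of_mem (Finset.mem_singleton_self _))
          (by simp only [ne_eq, Prod.mk.injEq]; omega) <;>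
        dsimp only at this <;> omega
  · rintro ⟨i, j, x, y⟩ h ⟨i', j', x', y'⟩ h' heq
    simp only [nrD, Finset.mem_product, Finset.mem_univ, Finset.mem_sigma, Finset.mem_range,
      Finset.mem_Icc, true_and] at h h'
    dsimp only at heq h h'
    obtain ⟨rfl, h2, rfl, rfl⟩ := nrPair_inj (by omega) (by omega) heq
    obtain rfl : j = j' := by omega
    rfl
  · intro S hS
    rw [Finset.mem_filter, Finset.mem_powersetCard] at hS
    obtain ⟨⟨hsub, hc⟩, hbad⟩ := hS
    simp only [nrGood, not_forall] at hbad
    obtain ⟨⟨a, b⟩, hz, ⟨c, d⟩, hw, hne, hatt⟩ := hbad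
    have hSe : S = {(a, b), (c, d)} := by
      symm
      apply Finset.eq_of_subset_of_card_le
      · intro t ht
        simp only [Finset.mem_insert, Finset.mem_singleton] at ht
        rcases ht with rfl | rfl <;> assumption
      · rw [hc, Finset.card_pair hne]
    have h1 := hsub hz
    have h2 := hsub hw
    simp only [nrBoard, Finset.mem_product, Finset.mem_Icc] at h1 h2
    push_cast at h1 h2
    simp only [ne_eq, Prod.mk.injEq] at hne
    dsimp only at hatt
    have key : ∃ (i : Fin 4) (k x y : ℤ), 0 < k ∧ 1 ≤ x ∧ x + k ≤ 2 * m + e ∧ 1 ≤ y ∧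
        y + 2 * k ≤ 2 * m + e ∧ nrPair i k x y = S := by
      have hcase : (d - b = 2 * (c - a)) ∨ (d - b = -(2 * (c - a))) ∨
          (c - a = 2 * (d - b)) ∨ (c - a = -(2 * (d - b))) := by omega
      rw [hSe]
      rcases hcase with h | h | h | h
      · rcases lt_or_ge a c with hl | hl
        · refine ⟨0, c - a, a, b, ?_, ?_, ?_, ?_, ?_, ?_⟩
          on_goal 6 => simp only [nrPair, nrPair_eq_iff, Prod.mk.injEq, true_and, and_true]
          all_goals omega
        · refine ⟨0, a - c, c, d, ?_, ?_, ?_, ?_, ?_, ?_⟩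
          on_goal 6 => simp only [nrPair, nrPair_eq_iff, Prod.mk.injEq, true_and, and_true]
          all_goals omega
      · rcases lt_or_ge a c with hl | hl
        · refine ⟨1, c - a, a, d, ?_, ?_, ?_, ?_, ?_, ?_⟩
          on_goal 6 => simp only [nrPair, nrPair_eq_iff, Prod.mk.injEq, true_and, and_true]
          all_goals omega
        · refine ⟨1, a - c, c, b, ?_, ?_, ?_, ?_, ?_, ?_⟩
          on_goal 6 => simp only [nrPair, nrPair_eq_iff, Prod.mk.injEq, true_and, and_true]
          all_goals omega
      · rcases lt_or_ge b d with hl | hl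
        · refine ⟨2, d - b, b, a, ?_, ?_, ?_, ?_, ?_, ?_⟩
          on_goal 6 => simp only [nrPair, nrPair_eq_iff, Prod.mk.injEq, true_and, and_true]
          all_goals omega
        · refine ⟨2, b - d, d, c, ?_, ?_, ?_, ?_, ?_, ?_⟩
          on_goal 6 => simp only [nrPair, nrPair_eq_iff, Prod.mk.injEq, true_and, and_true]
          all_goals omega
      · rcases lt_or_ge b d with hl | hl
        · refine ⟨3, d - b, b, c, ?_, ?_, ?_, ?_, ?_, ?_⟩
          on_goal 6 => simp only [nrPair, nrPair_eq_iff, Prod.mk.injEq, true_and, and_true]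
          all_goals omega
        · refine ⟨3, b - d, d, a, ?_, ?_, ?_, ?_, ?_, ?_⟩
          on_goal 6 => simp only [nrPair, nrPair_eq_iff, Prod.mk.injEq, true_and, and_true]
          all_goals omega
    obtain ⟨i, k, x, y, hk, hx1, hx2, hy1, hy2, hp⟩ := key
    obtain ⟨j, hj⟩ : ∃ j : ℕ, (j : ℤ) = m - k := ⟨((m : ℤ) - k).toNat, by omega⟩
    refine ⟨⟨i, j, x, y⟩, ?_, ?_⟩
    · simp only [nrD, Finset.mem_product, Finset.mem_univ, Finset.mem_sigma, Finset.mem_range,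
        Finset.mem_Icc, true_and]
      push_cast
      omega
    · rw [← hp]
      dsimp only
      congr 1
      omega

open Classical in
lemma nr_count (m e : ℕ) (he : e < 2) :
    ((((nrBoard (2 * m + e)).powersetCard 2).filter (fun S => nrGood S)).card : ℚ)
      = ((2 * m + e : ℚ) ^ 2) * ((2 * m + e : ℚ) ^ 2 - 1) / 2
        - 4 * ((m + e) * (m * (m - 1) + e * m) + m * (m - 1) * (2 * m - 1) / 3
          + e * m * (m - 1) / 2) := by
  have h := Finset.card_filter_add_card_filter_not
    (s := (nrBoard (2 * m + e)).powersetCard 2) (fun S => nrGood S)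
  rw [nr_bad m e he, nrD_card, Finset.card_powersetCard, show (nrBoard (2 * m + e)).card = _ from Finset.card_product _ _] at h
  have hI : (Finset.Icc 1 ((2 * m + e : ℕ) : ℤ)).card = 2 * m + e := by
    rw [Int.card_Icc]; omega
  rw [hI] at h
  have h' := congrArg (Nat.cast : ℕ → ℚ) h
  rw [Nat.cast_add, Nat.cast_choose_two] at h'
  push_cast at h'
  rw [nr_sum] at h'
  linear_combination h'

/-- the number of nonattacking placements of two nightriders on the `n × n`
board is `n⁴/2 − 5n³/6 + 3n²/2 − 11n/12 + (−1)ⁿ·n/4`. -/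
theorem stmt_15 (n : ℕ) :
    (Set.ncard {S : Finset (ℤ × ℤ) |
      S.card = 2 ∧
      (∀ z ∈ S, 1 ≤ z.1 ∧ z.1 ≤ (n : ℤ) ∧ 1 ≤ z.2 ∧ z.2 ≤ (n : ℤ)) ∧
      (∀ z ∈ S, ∀ w ∈ S, z ≠ w →
        w.2 - z.2 ≠ 2 * (w.1 - z.1) ∧ w.2 - z.2 ≠ -(2 * (w.1 - z.1)) ∧
        w.1 - z.1 ≠ 2 * (w.2 - z.2) ∧ w.1 - z.1 ≠ -(2 * (w.2 - z.2)))} : ℚ)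
      = (n : ℚ) ^ 4 / 2 - 5 * (n : ℚ) ^ 3 / 6 + 3 * (n : ℚ) ^ 2 / 2 - 11 * (n : ℚ) / 12
        + (-1 : ℚ) ^ n * (n : ℚ) / 4 := by
  classical
  have hset : {S : Finset (ℤ × ℤ) |
      S.card = 2 ∧
      (∀ z ∈ S, 1 ≤ z.1 ∧ z.1 ≤ (n : ℤ) ∧ 1 ≤ z.2 ∧ z.2 ≤ (n : ℤ)) ∧
      (∀ z ∈ S, ∀ w ∈ S, z ≠ w →
        w.2 - z.2 ≠ 2 * (w.1 - z.1) ∧ w.2 - z.2 ≠ -(2 * (w.1 - z.1)) ∧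
        w.1 - z.1 ≠ 2 * (w.2 - z.2) ∧ w.1 - z.1 ≠ -(2 * (w.2 - z.2)))}
      = ((((nrBoard n).powersetCard 2).filter (fun S => nrGood S) :
          Finset (Finset (ℤ × ℤ))) : Set (Finset (ℤ × ℤ))) := by
    ext S
    rw [Set.mem_ofPred_eq, Finset.mem_coe, Finset.mem_filter, Finset.mem_powersetCard]
    constructor
    · rintro ⟨h1, h2, h3⟩
      refine ⟨⟨fun z hz => ?_, h1⟩, h3⟩
      have := h2 z hz
      simp only [nrBoard, Finset.mem_product, Finset.mem_Icc]
      tauto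
    · rintro ⟨⟨h2, h1⟩, h3⟩
      refine ⟨h1, fun z hz => ?_, h3⟩
      have := h2 hz
      simp only [nrBoard, Finset.mem_product, Finset.mem_Icc] at this
      tauto
  rw [hset, Set.ncard_coe_finset]
  obtain ⟨m, rfl | rfl⟩ : ∃ m, n = 2 * m + 0 ∨ n = 2 * m + 1 := ⟨n / 2, by omega⟩
  · rw [nr_count m 0 (by norm_num)]
    simp only [pow_add, pow_mul]
    push_cast
    norm_num
    ring
  · rw [nr_count m 1 (by norm_num)]
    simp only [pow_add, pow_mul]
    push_cast
    norm_num
    ring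
end
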